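/- Let β≥2 be an integer with ⌊(β−3)/3⌋ ≥ 1, let H be a β-buildable graph, and let c > 1/⌊(β−3)/3⌋. Then there exists ε>0 such that every ε-sparse, (ε|G|^{1-c}, ε|G|^{1-c})-coherent graph G with |G|>1 contains H. -/

import Mathlib

noncomputable section

namespace PurePairs

open SimpleGraph

variable {V W : Type*}

/-- A pure pair in `G`: a pair of disjoint vertex sets that are complete
or anticomplete to each other. -/
def PurePair (G : SimpleGraph V) (A B : Set V) : Prop :=
  Disjoint A B ∧
    ((∀ a ∈ A, ∀ b ∈ B, G.Adj a b) ∨ (∀ a ∈ A, ∀ b ∈ B, ¬ G.Adj a b))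

/-- `G` contains `H`: some induced subgraph of `G` is isomorphic to `H`. -/
def Contains (G : SimpleGraph V) (H : SimpleGraph W) : Prop :=
  Nonempty (H ↪g G)

/-- The congestion of a graph `H`: the maximum (here: supremum, together with `0`)
of `1 - (|J|-1)/|E(J)|` over all subgraphs `J` of `H` with at least one edge.
If `H` has no edges this is `0`. -/
def congestion (H : SimpleGraph V) : ℝ :=
  sSup ({0} ∪ {x : ℝ | ∃ J : H.Subgraph, J.edgeSet.Nonempty ∧
    x = 1 - ((J.verts.ncard : ℝ) - 1) / (J.edgeSet.ncard : ℝ)})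

/-- `A` is anticomplete to `B`: no edges between them. -/
def Anticomplete (G : SimpleGraph V) (A B : Set V) : Prop :=
  ∀ a ∈ A, ∀ b ∈ B, ¬ G.Adj a b

/-- `A` covers `B`: every vertex of `B` has a neighbour in `A`. -/
def Covers (G : SimpleGraph V) (A B : Set V) : Prop :=
  ∀ b ∈ B, ∃ a ∈ A, G.Adj a b

/-- `G` is `ε`-sparse: every vertex has degree less than `ε|G|`. -/
def EpsSparse (G : SimpleGraph V) [Fintype V] (ε : ℝ) : Prop :=
  ∀ v : V, ((G.neighborSet v).ncard : ℝ) < ε * (Fintype.card V : ℝ)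

/-- `G` is `(γ,δ)`-coherent: there is no pair of disjoint anticomplete sets `A`, `B`
with `|A| ≥ γ` and `|B| ≥ δ`. -/
def Coherent (G : SimpleGraph V) (γ δ : ℝ) : Prop :=
  ¬ ∃ A B : Set V, Disjoint A B ∧ Anticomplete G A B ∧
      γ ≤ (A.ncard : ℝ) ∧ δ ≤ (B.ncard : ℝ)

/-- `N(X)`: the set of vertices with a neighbour in `X`. -/
def nbhd (G : SimpleGraph V) (X : Set V) : Set V :=
  {v | ∃ x ∈ X, G.Adj x v}

/-- A blockade: a family of nonempty pairwise disjoint vertex sets indexed by a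
finite set of integers. -/
def IsBlockade (I : Finset ℤ) (A : ℤ → Set V) : Prop :=
  (∀ i ∈ I, (A i).Nonempty) ∧
    ∀ i ∈ I, ∀ j ∈ I, i ≠ j → Disjoint (A i) (A j)

/-- The blockade `(A i : i ∈ I)` is `(γ,δ)`-divergent. -/
def Divergent (G : SimpleGraph V) (I : Finset ℤ) (A : ℤ → Set V) (γ δ : ℝ) : Prop :=
  ∃ i ∈ I, ∃ j ∈ I, i ≠ j ∧ ∃ X ⊆ A i, ∃ Y ⊆ A j,
    γ * ((A i).ncard : ℝ) ≤ (X.ncard : ℝ) ∧ δ * ((A j).ncard : ℝ) ≤ (Y.ncard : ℝ) ∧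
    Anticomplete G X Y

/-- The blockade `(A i : i ∈ I)` is `τ`-expanding. -/
def Expanding (G : SimpleGraph V) (I : Finset ℤ) (A : ℤ → Set V) (τ : ℝ) : Prop :=
  ∀ i ∈ I, ∀ j ∈ I, i ≠ j → ∀ X ⊆ A i,
    min (τ * (X.ncard : ℝ) / ((A i).ncard : ℝ)) (1/4)
      ≤ (((nbhd G X) ∩ A j).ncard : ℝ) / ((A j).ncard : ℝ)

/-- The linkage of the blockade `(A i : i ∈ I)` is at most `lam`. -/
def LinkageLE (G : SimpleGraph V) (I : Finset ℤ) (A : ℤ → Set V) (lam : ℝ) : Prop :=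
  ∀ i ∈ I, ∀ j ∈ I, i ≠ j → ∀ v ∈ A i,
    ((G.neighborSet v ∩ A j).ncard : ℝ) ≤ lam * ((A j).ncard : ℝ)

/-- The shrinkage of the blockade `(A i : i ∈ I)` is at most `σ`, i.e. its width is at
least `|G|^{1-σ}`. -/
def ShrinkageLE [Fintype V] (I : Finset ℤ) (A : ℤ → Set V) (σ : ℝ) : Prop :=
  ∀ i ∈ I, (Fintype.card V : ℝ) ^ (1 - σ) ≤ ((A i).ncard : ℝ)

/-- `(L 0, …, L k)` is a levelling in `G`. -/
def IsLevelling (G : SimpleGraph V) (L : ℕ → Set V) (k : ℕ) : Prop :=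
  1 ≤ k ∧ (L 0).ncard = 1 ∧
  (∀ i ≤ k, ∀ j ≤ k, i ≠ j → Disjoint (L i) (L j)) ∧
  (∀ i, 1 ≤ i → i ≤ k → Covers G (L (i-1)) (L i)) ∧
  (∀ i, 2 ≤ i → i ≤ k → ∀ h, h + 2 ≤ i → Anticomplete G (L h) (L i))

/-- The levelling `(L 0, …, L k)` reaches `C`, i.e. `(L 0, …, L k, C)` is a levelling. -/
def Reaches (G : SimpleGraph V) (L : ℕ → Set V) (k : ℕ) (C : Set V) : Prop :=
  IsLevelling G (fun i => if i = k + 1 then C else L i) (k + 1)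

/-- The levelling `(L 0, …, L k)` is `(B i : i ∈ I)`-rainbow. -/
def RainbowLevelling (I : Finset ℤ) (B : ℤ → Set V) (L : ℕ → Set V) (k : ℕ) : Prop :=
  ∃ q : ℕ → ℤ, (∀ i ≤ k, q i ∈ I ∧ L i ⊆ B (q i)) ∧
    ∀ i ≤ k, ∀ j ≤ k, q i = q j → i = j

/-- The levelling `(L 0, …, L k)` grades the blockade `(C j : j ∈ J)` (in some order). -/
def Grades (G : SimpleGraph V) (L : ℕ → Set V) (k : ℕ) (J : Finset ℤ) (C : ℤ → Set V) :
    Prop :=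
  Reaches G L k (⋃ j ∈ J, C j) ∧
  ∃ e : ℕ → ℤ, (∀ g < J.card, e g ∈ J) ∧
    (∀ g < J.card, ∀ h < J.card, e g = e h → g = h) ∧
    ∀ g < J.card, ∃ Y ⊆ L k,
      (∀ h, g ≤ h → h < J.card → Covers G Y (C (e h))) ∧
      (∀ h, h < g → Anticomplete G Y (C (e h)))

/-- The levelling `(L 0, …, L k)` grades the blockade `(C j : j ∈ J)` forwards. -/
def GradesFwd (G : SimpleGraph V) (L : ℕ → Set V) (k : ℕ) (J : Finset ℤ) (C : ℤ → Set V) :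
    Prop :=
  Reaches G L k (⋃ j ∈ J, C j) ∧
  ∀ j ∈ J, ∃ Y ⊆ L k,
    (∀ i ∈ J, j ≤ i → Covers G Y (C i)) ∧
    (∀ i ∈ J, i < j → Anticomplete G Y (C i))

/-- The levelling `(L 0, …, L k)` grades the blockade `(C j : j ∈ J)` backwards. -/
def GradesBwd (G : SimpleGraph V) (L : ℕ → Set V) (k : ℕ) (J : Finset ℤ) (C : ℤ → Set V) :
    Prop :=
  Reaches G L k (⋃ j ∈ J, C j) ∧
  ∀ j ∈ J, ∃ Y ⊆ L k,
    (∀ i ∈ J, i ≤ j → Covers G Y (C i)) ∧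
    (∀ i ∈ J, j < i → Anticomplete G Y (C i))

/-- Two levellings are parallel. -/
def Parallel (G : SimpleGraph V) (L : ℕ → Set V) (k : ℕ) (M : ℕ → Set V) (m : ℕ) : Prop :=
  L 0 = M 0 ∧
  Disjoint (⋃ j ∈ Finset.Icc 1 m, M j) (⋃ i ∈ Finset.Icc 1 k, L i) ∧
  Anticomplete G (⋃ j ∈ Finset.Icc 1 m, M j) (⋃ i ∈ Finset.Icc 1 k, L i)

/-- `(L, M, C)` is a bi-levelling, where `L` has height `k` and `M` has height `m`:
`C` is a blockade, `L, M` are parallel levellings both reaching the union of the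
blocks of `C`, and `L` grades `C` forwards. Its height is `k + m` and its length is
the length of `C`. -/
def IsBiLevelling (G : SimpleGraph V) (L : ℕ → Set V) (k : ℕ) (M : ℕ → Set V) (m : ℕ)
    (J : Finset ℤ) (C : ℤ → Set V) : Prop :=
  IsBlockade J C ∧ IsLevelling G L k ∧ IsLevelling G M m ∧ Parallel G L k M m ∧
    Reaches G M m (⋃ j ∈ J, C j) ∧ GradesFwd G L k J C

/-- A bi-grading: a bi-levelling in which `M` also grades `C` backwards. -/
def IsBiGrading (G : SimpleGraph V) (L : ℕ → Set V) (k : ℕ) (M : ℕ → Set V) (m : ℕ)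
    (J : Finset ℤ) (C : ℤ → Set V) : Prop :=
  IsBiLevelling G L k M m J C ∧ GradesBwd G M m J C

/-- The bi-levelling `(L, M, C)` is `(A i : i ∈ I)`-rainbow: each block of `C`, each
level of `L`, and each level of `M` other than `M 0 = L 0` is included in a block of
`A`, and distinct such sets lie in distinct blocks. -/
def RainbowBiLevelling (I : Finset ℤ) (A : ℤ → Set V)
    (L : ℕ → Set V) (k : ℕ) (M : ℕ → Set V) (m : ℕ)
    (J : Finset ℤ) (C : ℤ → Set V) : Prop :=
  ∃ (qc : ℤ → ℤ) (ql qm : ℕ → ℤ),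
    (∀ j ∈ J, qc j ∈ I ∧ C j ⊆ A (qc j)) ∧
    (∀ i ≤ k, ql i ∈ I ∧ L i ⊆ A (ql i)) ∧
    (∀ i, 1 ≤ i → i ≤ m → qm i ∈ I ∧ M i ⊆ A (qm i)) ∧
    (∀ j ∈ J, ∀ j' ∈ J, qc j = qc j' → j = j') ∧
    (∀ i ≤ k, ∀ i' ≤ k, ql i = ql i' → i = i') ∧
    (∀ i, 1 ≤ i → i ≤ m → ∀ i', 1 ≤ i' → i' ≤ m → qm i = qm i' → i = i') ∧
    (∀ j ∈ J, ∀ i ≤ k, qc j ≠ ql i) ∧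
    (∀ j ∈ J, ∀ i, 1 ≤ i → i ≤ m → qc j ≠ qm i) ∧
    (∀ i ≤ k, ∀ i', 1 ≤ i' → i' ≤ m → ql i ≠ qm i')

/-- Each block of `(C j : j ∈ J)` lies in a block of `(A i : i ∈ I)`; the `A`-size of
`C` is at least `η` when every block of `C` has size at least `η` times the size of the
block of `A` containing it. -/
def SizeGE (I : Finset ℤ) (A : ℤ → Set V) (J : Finset ℤ) (C : ℤ → Set V) (η : ℝ) : Prop :=
  ∀ j ∈ J, ∀ i ∈ I, C j ⊆ A i → η * ((A i).ncard : ℝ) ≤ ((C j).ncard : ℝ)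

/-- A `(B i : i ∈ I)`-rainbow induced path `p 0 - p 1 - ⋯ - p n` in `G`. -/
def RainbowPath (G : SimpleGraph V) (I : Finset ℤ) (B : ℤ → Set V)
    (n : ℕ) (p : ℕ → V) : Prop :=
  (∀ i ≤ n, ∀ j ≤ n, p i = p j → i = j) ∧
  (∀ i < n, G.Adj (p i) (p (i+1))) ∧
  (∀ i j, i + 1 < j → j ≤ n → ¬ G.Adj (p i) (p j)) ∧
  ∃ q : ℕ → ℤ, (∀ i ≤ n, q i ∈ I ∧ p i ∈ B (q i)) ∧
    ∀ i ≤ n, ∀ j ≤ n, q i = q j → i = j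

/-- A `(B i : i ∈ I)`-rainbow copy of `H` in `G`: an induced copy of `H` with each
vertex in a different block. -/
def RainbowCopy (G : SimpleGraph V) (I : Finset ℤ) (B : ℤ → Set V)
    (H : SimpleGraph W) : Prop :=
  ∃ (f : H ↪g G) (q : W → ℤ), Function.Injective q ∧ ∀ w : W, q w ∈ I ∧ f w ∈ B (q w)

/-- `(N,K,σ,lam,c)` forces `H`. -/
def Forces (H : SimpleGraph W) (N K : ℕ) (σ lam c : ℝ) : Prop :=
  ∀ {V : Type} [Fintype V] (G : SimpleGraph V),
    Coherent G ((Fintype.card V : ℝ) ^ (1 - c)) ((Fintype.card V : ℝ) ^ (1 - c)) →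
    N ≤ Fintype.card V →
    ∀ (I : Finset ℤ) (A : ℤ → Set V), IsBlockade I A → I.card = K →
      ShrinkageLE I A σ → LinkageLE G I A lam →
      RainbowCopy G I A H

/-- `p 0 - ⋯ - p n` is a handle of length `n` that can be added to (the graph induced
on) `S` inside the ambient graph `H`: an induced path of `H[S ∪ p]` of length at least
two whose ends lie in `S`, whose internal vertices avoid `S` and have degree two in
`H[S ∪ p]`. -/
def IsHandle (H : SimpleGraph V) (S : Set V) (n : ℕ) (p : ℕ → V) : Prop :=
  2 ≤ n ∧
  (∀ i ≤ n, ∀ j ≤ n, p i = p j → i = j) ∧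
  p 0 ∈ S ∧ p n ∈ S ∧
  (∀ i, 0 < i → i < n → p i ∉ S) ∧
  (∀ i < n, H.Adj (p i) (p (i+1))) ∧
  (∀ i j, i + 1 < j → j ≤ n → ¬ H.Adj (p i) (p j)) ∧
  (∀ i, 0 < i → i < n → ∀ w, (w ∈ S ∨ ∃ j ≤ n, w = p j) → H.Adj (p i) w →
    w = p (i-1) ∨ w = p (i+1))

/-- The vertex sets `S` such that the induced subgraph `H[S]` can be built, starting
from the two-vertex graph with no edges, by repeatedly adding handles of length at
least `β`. -/
inductive BuildableOn (H : SimpleGraph V) (β : ℕ) : Set V → Prop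
  | base (u v : V) (huv : u ≠ v) (hadj : ¬ H.Adj u v) : BuildableOn H β {u, v}
  | handle (S : Set V) (n : ℕ) (p : ℕ → V) (hS : BuildableOn H β S)
      (hh : IsHandle H S n p) (hn : β ≤ n) :
      BuildableOn H β (S ∪ {w | ∃ j ≤ n, w = p j})

/-- `H` is `β`-buildable. -/
def Buildable [Fintype V] (H : SimpleGraph V) (β : ℕ) : Prop :=
  BuildableOn H β Set.univ

/-- The vertex sets `S` such that the induced subgraph `H[S]` can be built, starting
from the null graph, by repeatedly adding a subleaf or a handle of length at least
`β`. -/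
inductive WeaklyBuildableOn (H : SimpleGraph V) (β : ℕ) : Set V → Prop
  | empty : WeaklyBuildableOn H β ∅
  | subleaf (S : Set V) (v : V) (hv : v ∉ S) (hdeg : (S ∩ H.neighborSet v).ncard ≤ 1)
      (hS : WeaklyBuildableOn H β S) : WeaklyBuildableOn H β (insert v S)
  | handle (S : Set V) (n : ℕ) (p : ℕ → V) (hS : WeaklyBuildableOn H β S)
      (hh : IsHandle H S n p) (hn : β ≤ n) :
      WeaklyBuildableOn H β (S ∪ {w | ∃ j ≤ n, w = p j})

/-- `H` is weakly `β`-buildable. -/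
def WeaklyBuildable [Fintype V] (H : SimpleGraph V) (β : ℕ) : Prop :=
  WeaklyBuildableOn H β Set.univ

/-!
For `c ≥ 1` no graph meets the hypotheses for small `ε`, so let `c < 1`, put `k = ⌊β/3⌋ - 1`,
hence `c (k + 1) > 1`, and cut `G` into blocks of small mutual linkage. Adding the handles one by
one, we find copies of `H` that are rainbow, with at most one vertex in each block. To add a
handle of length `n ≥ 3k + 3` it suffices to find a vertex `w` and lengths `m + m' = n` such that,
after discarding some blocks and slightly shrinking the others, every vertex of the surviving
blocks is joined to `w` by an induced path of length `m` and by one of length `m'`, both through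
discarded blocks, where paths of the two kinds meet or touch only at `w`: two such paths glued at
`w` attach the handle to any rainbow copy of the smaller graph in the surviving blocks.

As `|G| ^ (1 - c) ≤ τ ^ k` for some `τ` with `τ |G| ^ (1 - c)` much smaller than `|G|`, coherence
makes neighbourhoods expand, and a single vertex `y` reaches much of every block within `k + 1`
steps. Two fans of paths from some `y` and then, in the surviving blocks, two more from some `w`
yield paths of length at most `2k + 2` (from `w` by way of `y`) and at most `k + 1`. The latter
are lengthened by routing them through one more block at a time. What keeps the paths induced is
that blocks are entered through private covers, which have no edges to the other blocks; a random
choice among candidate covers of the individual blocks is free of conflicts.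
-/

open scoped Classical Finset

universe u v

variable {ι : Type*}

/-- The number of neighbours of `v` in the finite set `C`. -/
def degIn (G : SimpleGraph V) (v : V) (C : Finset V) : ℕ :=
  #{c ∈ C | G.Adj v c}

/-- The set of vertices of the finite set `C` that have a neighbour in `Z`. -/
def nbrsIn (G : SimpleGraph V) (Z C : Finset V) : Finset V :=
  {c ∈ C | ∃ z ∈ Z, G.Adj z c}

section Degrees

variable {G : SimpleGraph V} {Z C C' D : Finset V} {v : V}

lemma mem_nbrsIn : v ∈ nbrsIn G Z C ↔ v ∈ C ∧ ∃ z ∈ Z, G.Adj z v :=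
  Finset.mem_filter

lemma nbrsIn_subset : nbrsIn G Z C ⊆ C :=
  Finset.filter_subset _ _

lemma degIn_le_card : degIn G v C ≤ #C :=
  Finset.card_filter_le _ _

lemma degIn_mono (h : C ⊆ C') : degIn G v C ≤ degIn G v C' :=
  Finset.card_le_card (Finset.filter_subset_filter _ h)

lemma sum_degIn_comm (G : SimpleGraph V) (C D : Finset V) :
    ∑ d ∈ D, (degIn G d C : ℝ) = ∑ c ∈ C, (degIn G c D : ℝ) := by
  have h := Finset.sum_card_bipartiteAbove_eq_sum_card_bipartiteBelow (s := D) (t := C) G.Adj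
  simp only [Finset.bipartiteAbove, Finset.bipartiteBelow, G.adj_comm _] at h
  simp only [degIn]
  exact_mod_cast h

lemma card_nbrsIn_le_sum : (#(nbrsIn G Z C) : ℝ) ≤ ∑ z ∈ Z, (degIn G z C : ℝ) := by
  have hsub : nbrsIn G Z C ⊆ Z.biUnion fun z ↦ {c ∈ C | G.Adj z c} := fun c hc ↦ by
    obtain ⟨hcC, z, hz, hzc⟩ := mem_nbrsIn.1 hc
    exact Finset.mem_biUnion.2 ⟨z, hz, Finset.mem_filter.2 ⟨hcC, hzc⟩⟩
  exact_mod_cast (Finset.card_le_card hsub).trans Finset.card_biUnion_le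

lemma degIn_nbrsIn_of_mem (hv : v ∈ Z) : degIn G v (nbrsIn G Z C) = degIn G v C := by
  unfold degIn nbrsIn
  congr 1
  ext c
  simp only [Finset.mem_filter]
  exact ⟨fun h ↦ ⟨h.1.1, h.2⟩, fun h ↦ ⟨⟨h.1, v, hv, h.2⟩, h.2⟩⟩

lemma card_nbrsIn_insert_add :
    #(nbrsIn G (insert v Z) C) + degIn G v (nbrsIn G Z C) = degIn G v C + #(nbrsIn G Z C) := by
  have hunion : nbrsIn G (insert v Z) C = {c ∈ C | G.Adj v c} ∪ nbrsIn G Z C := by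
    ext c
    simp only [mem_nbrsIn, Finset.mem_union, Finset.mem_filter, Finset.exists_mem_insert]
    tauto
  have hinter : {c ∈ nbrsIn G Z C | G.Adj v c} = {c ∈ C | G.Adj v c} ∩ nbrsIn G Z C := by
    ext c
    simp only [mem_nbrsIn, Finset.mem_inter, Finset.mem_filter]
    tauto
  rw [hunion, degIn, hinter, Finset.card_union_add_card_inter, degIn]

end Degrees

section Hitting

variable (G : SimpleGraph V)

lemma exists_subset_halfSaturating_or_large (D C : Finset V) {s : ℝ} (hs : 0 ≤ s) :
    ∃ Z ⊆ D, ∑ d ∈ Z, (degIn G d C : ℝ) ≤ s ∧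
      ((∀ d ∈ D, degIn G d C ≤ 2 * degIn G d (nbrsIn G Z C)) ∨
        ∃ d ∈ D, s ≤ 2 * #(nbrsIn G (insert d Z) C)) := by
  let P : Finset V → Prop := fun Z ↦
    ∑ d ∈ Z, (degIn G d C : ℝ) ≤ 2 * #(nbrsIn G Z C) ∧ ∑ d ∈ Z, (degIn G d C : ℝ) ≤ s
  have hP : ∅ ∈ D.powerset.filter P :=
    Finset.mem_filter.2 ⟨Finset.empty_mem_powerset _, by simp, by simpa using hs⟩
  obtain ⟨Z, hZ, hmax⟩ := Finset.exists_max_image _ Finset.card ⟨∅, hP⟩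
  rw [Finset.mem_filter, Finset.mem_powerset] at hZ
  obtain ⟨hZD, hZN, hZs⟩ := hZ
  refine ⟨Z, hZD, hZs, ?_⟩
  by_contra! hcon
  obtain ⟨⟨d, hdD, hd⟩, hsmall⟩ := hcon
  have hdZ : d ∉ Z := fun hdZ ↦ by rw [degIn_nbrsIn_of_mem hdZ] at hd; omega
  have hadd : (#(nbrsIn G (insert d Z) C) + degIn G d (nbrsIn G Z C) : ℝ) =
      degIn G d C + #(nbrsIn G Z C) := mod_cast card_nbrsIn_insert_add
  have hd' : (2 * degIn G d (nbrsIn G Z C) : ℝ) < degIn G d C := mod_cast hd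
  have hsum : ∑ e ∈ insert d Z, (degIn G e C : ℝ) ≤ 2 * #(nbrsIn G (insert d Z) C) := by
    rw [Finset.sum_insert hdZ]
    linarith
  have hmem : insert d Z ∈ D.powerset.filter P :=
    Finset.mem_filter.2 ⟨Finset.mem_powerset.2 (Finset.insert_subset hdD hZD), hsum,
      hsum.trans (hsmall d hdD).le⟩
  have := hmax _ hmem
  rw [Finset.card_insert_of_notMem hdZ] at this
  omega

variable {G} {D C : Finset V} {J : Finset ι} {B : ι → Finset V} {Δ θ κ r : ℝ}

/-- The vertices `d ∈ D` whose density to every block `B j`, `j ∈ J`, is at most `ρ` times their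
density to `C`. -/
def proportionate (G : SimpleGraph V) (D C : Finset V) (J : Finset ι) (B : ι → Finset V)
    (ρ : ℝ) : Finset V :=
  {d ∈ D | ∀ j ∈ J, (degIn G d (B j) : ℝ) * #C ≤ ρ * degIn G d C * #(B j)}

lemma proportionate_subset {ρ : ℝ} : proportionate G D C J B ρ ⊆ D :=
  Finset.filter_subset _ _

lemma sum_sdiff_proportionate_le (hΔ : 0 ≤ Δ) (hθ : 0 < θ) (hr : 0 < r) (hJ : #J ≤ r)
    (hB : ∀ j ∈ J, ∀ b ∈ B j, degIn G b D ≤ θ * Δ) :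
    ∑ d ∈ D \ proportionate G D C J B (2 * r * θ), (degIn G d C : ℝ) ≤ Δ / 2 * #C := by
  let f : ι → V → ℝ := fun j d ↦ degIn G d (B j) * #C / (2 * r * θ * #(B j))
  have hf (j d) : 0 ≤ f j d := by positivity
  have hpoint : ∀ d ∈ D \ proportionate G D C J B (2 * r * θ),
      (degIn G d C : ℝ) ≤ ∑ j ∈ J, f j d := by
    intro d hd
    obtain ⟨hdD, hdp⟩ := Finset.mem_sdiff.1 hd
    simp only [proportionate, Finset.mem_filter, not_and, not_forall, not_le] at hdp
    obtain ⟨j, hj, hlt⟩ := hdp hdD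
    have hpos : 0 < degIn G d (B j) := Nat.pos_of_ne_zero fun h ↦ by
      rw [h, Nat.cast_zero, zero_mul] at hlt
      exact hlt.not_ge (by positivity)
    have hBj : (0 : ℝ) < #(B j) := mod_cast hpos.trans_le degIn_le_card
    refine le_trans ?_ (Finset.single_le_sum (fun i _ ↦ hf i d) hj)
    rw [le_div_iff₀ (by positivity)]
    linarith
  have hblock : ∀ j ∈ J, ∑ d ∈ D, f j d ≤ Δ * #C / (2 * r) := by
    intro j hj
    have hsum : ∑ d ∈ D, (degIn G d (B j) : ℝ) ≤ #(B j) * (θ * Δ) := by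
      rw [sum_degIn_comm, ← nsmul_eq_mul]
      exact Finset.sum_le_card_nsmul _ _ _ (hB j hj)
    rw [← Finset.sum_div, ← Finset.sum_mul]
    refine div_le_of_le_mul₀ (by positivity) (by positivity) ?_
    calc _ ≤ #(B j) * (θ * Δ) * #C := by gcongr
      _ = Δ * #C / (2 * r) * (2 * r * θ * #(B j)) := by field_simp
  calc _ ≤ ∑ d ∈ D \ proportionate G D C J B (2 * r * θ), ∑ j ∈ J, f j d :=
        Finset.sum_le_sum hpoint
    _ ≤ ∑ d ∈ D, ∑ j ∈ J, f j d :=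
        Finset.sum_le_sum_of_subset_of_nonneg Finset.sdiff_subset
          fun d _ _ ↦ Finset.sum_nonneg fun j _ ↦ hf j d
    _ ≤ #J * (Δ * #C / (2 * r)) := by
        rw [Finset.sum_comm, ← nsmul_eq_mul]
        exact Finset.sum_le_card_nsmul _ _ _ hblock
    _ ≤ r * (Δ * #C / (2 * r)) := by gcongr
    _ = Δ / 2 * #C := by field_simp

lemma le_sum_proportionate (hΔ : 0 ≤ Δ) (hθ : 0 < θ) (hr : 0 < r) (hJ : #J ≤ r)
    (hC : ∀ c ∈ C, Δ ≤ degIn G c D) (hB : ∀ j ∈ J, ∀ b ∈ B j, degIn G b D ≤ θ * Δ) :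
    Δ / 2 * #C ≤ ∑ d ∈ proportionate G D C J B (2 * r * θ), (degIn G d C : ℝ) := by
  have htotal : Δ * #C ≤ ∑ d ∈ D, (degIn G d C : ℝ) := by
    rw [sum_degIn_comm, mul_comm, ← nsmul_eq_mul]
    exact Finset.card_nsmul_le_sum _ _ _ hC
  have hsplit := Finset.sum_sdiff (f := fun d ↦ (degIn G d C : ℝ))
    (proportionate_subset (G := G) (D := D) (C := C) (J := J) (B := B) (ρ := 2 * r * θ))
  have hrest := sum_sdiff_proportionate_le (G := G) (C := C) hΔ hθ hr hJ hB
  linarith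

lemma sum_degIn_le_of_subset_proportionate {ρ s : ℝ} {Z : Finset V} {j : ι} (hρ : 0 ≤ ρ)
    (hC : C.Nonempty) (hj : j ∈ J) (hZ : Z ⊆ proportionate G D C J B ρ)
    (hs : ∑ d ∈ Z, (degIn G d C : ℝ) ≤ s * #C) :
    ∑ d ∈ Z, (degIn G d (B j) : ℝ) ≤ ρ * s * #(B j) := by
  have hCpos : (0 : ℝ) < #C := mod_cast hC.card_pos
  refine le_of_mul_le_mul_right ?_ hCpos
  calc (∑ d ∈ Z, (degIn G d (B j) : ℝ)) * #C
      ≤ ∑ d ∈ Z, ρ * degIn G d C * #(B j) := by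
        rw [Finset.sum_mul]
        exact Finset.sum_le_sum fun d hd ↦ (Finset.mem_filter.1 (hZ hd)).2 j hj
    _ = ρ * (∑ d ∈ Z, (degIn G d C : ℝ)) * #(B j) := by
        rw [← Finset.sum_mul, ← Finset.mul_sum]
    _ ≤ ρ * (s * #C) * #(B j) := by gcongr
    _ = _ := by ring

lemma card_le_card_nbrsIn_of_halfSaturating {P Z : Finset V} (hΔ : 0 < Δ) (hP : P ⊆ D)
    (hsum : Δ / 2 * #C ≤ ∑ d ∈ P, (degIn G d C : ℝ)) (hC : ∀ c ∈ C, degIn G c D ≤ θ * Δ)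
    (hsat : ∀ d ∈ P, degIn G d C ≤ 2 * degIn G d (nbrsIn G Z C)) :
    (#C : ℝ) ≤ 4 * θ * #(nbrsIn G Z C) := by
  refine le_of_mul_le_mul_left (a := Δ / 2) ?_ (by positivity)
  calc Δ / 2 * #C ≤ ∑ d ∈ P, (degIn G d C : ℝ) := hsum
    _ ≤ ∑ d ∈ P, 2 * (degIn G d (nbrsIn G Z C) : ℝ) :=
        Finset.sum_le_sum fun d hd ↦ mod_cast hsat d hd
    _ ≤ ∑ d ∈ D, 2 * (degIn G d (nbrsIn G Z C) : ℝ) :=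
        Finset.sum_le_sum_of_subset_of_nonneg hP fun _ _ _ ↦ by positivity
    _ = 2 * ∑ c ∈ nbrsIn G Z C, (degIn G c D : ℝ) := by rw [← Finset.mul_sum, sum_degIn_comm]
    _ ≤ 2 * (#(nbrsIn G Z C) * (θ * Δ)) := by
        rw [← nsmul_eq_mul]
        gcongr
        exact Finset.sum_le_card_nsmul _ _ _ fun c hc ↦ hC c (nbrsIn_subset hc)
    _ = Δ / 2 * (4 * θ * #(nbrsIn G Z C)) := by ring

theorem exists_subset_card_nbrsIn_large_small (hΔ : 0 < Δ) (hθ : 0 < θ) (hκ : 0 < κ) (hκ1 : κ ≤ 1)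
    (hJ : #J ≤ r) (hr : 1 ≤ r) (hCne : C.Nonempty)
    (hClo : ∀ c ∈ C, Δ ≤ degIn G c D) (hChi : ∀ c ∈ C, degIn G c D ≤ θ * Δ)
    (hB : ∀ j ∈ J, ∀ b ∈ B j, degIn G b D ≤ θ * Δ)
    (hD : ∀ d ∈ D, ∀ j ∈ J, degIn G d (B j) ≤ κ / 2 * #(B j)) :
    ∃ Z ⊆ D, κ / (8 * r * θ) * #C ≤ #(nbrsIn G Z C) ∧
      ∀ j ∈ J, (#(nbrsIn G Z (B j)) : ℝ) ≤ κ * #(B j) := by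
  set P := proportionate G D C J B (2 * r * θ)
  have hPD : P ⊆ D := proportionate_subset
  obtain ⟨Z, hZP, hZs, hcase⟩ := exists_subset_halfSaturating_or_large G P C
    (s := κ / (4 * r * θ) * #C) (by positivity)
  have hZB : ∀ j ∈ J, ∑ d ∈ Z, (degIn G d (B j) : ℝ) ≤ κ / 2 * #(B j) := fun j hj ↦
    (sum_degIn_le_of_subset_proportionate (by positivity) hCne hj hZP hZs).trans_eq <| by
      field_simp
      ring
  rcases hcase with hsat | ⟨d, hdP, hlarge⟩
  · refine ⟨Z, hZP.trans hPD, ?_, fun j hj ↦ card_nbrsIn_le_sum.trans ((hZB j hj).trans ?_)⟩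
    · have hN := card_le_card_nbrsIn_of_halfSaturating hΔ hPD
        (le_sum_proportionate hΔ.le (by positivity) (by positivity) hJ hClo hB) hChi hsat
      calc κ / (8 * r * θ) * #C ≤ 1 / (8 * 1 * θ) * (4 * θ * #(nbrsIn G Z C)) := by gcongr
        _ = #(nbrsIn G Z C) / 2 := by field_simp; ring
        _ ≤ #(nbrsIn G Z C) := half_le_self (by positivity)
    · gcongr
      linarith
  · refine ⟨insert d Z, Finset.insert_subset (hPD hdP) (hZP.trans hPD), ?_, fun j hj ↦ ?_⟩
    · calc κ / (8 * r * θ) * #C = κ / (4 * r * θ) * #C / 2 := by field_simp; ring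
        _ ≤ _ := by linarith
    · have hadd : (#(nbrsIn G (insert d Z) (B j)) : ℝ) ≤
          degIn G d (B j) + #(nbrsIn G Z (B j)) :=
        mod_cast (Nat.le_add_right _ _).trans_eq card_nbrsIn_insert_add
      have := card_nbrsIn_le_sum (G := G) (Z := Z) (C := B j)
      linarith [hZB j hj, hD d (hPD hdP) j hj]

end Hitting

section Selection

variable {α K : Type*}

lemma exists_labelling_large_fibers {B : Finset α} (hB : B.Nonempty) {hits : K → α → Prop}
    [∀ k, DecidablePred (hits k)] {η : ℝ} (hη : 0 < η)
    (h : ∀ C ⊆ B, C.Nonempty → ∃ k, η * #C ≤ #{c ∈ C | hits k c}) :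
    ∃ U ⊆ B, (#B : ℝ) ≤ 2 * #U ∧ ∃ key : α → K, ∀ c ∈ U, hits (key c) c ∧
      η / 2 * #B ≤ #{x ∈ U | key x = key c} := by
  obtain ⟨k₀, -⟩ := h B subset_rfl hB
  let P : Finset α → Prop := fun U ↦ ∃ key : α → K, ∀ c ∈ U, hits (key c) c ∧
    η / 2 * #B ≤ #{x ∈ U | key x = key c}
  obtain ⟨U, hU, hmax⟩ := Finset.exists_max_image (B.powerset.filter P) Finset.card
    ⟨∅, Finset.mem_filter.2 ⟨Finset.empty_mem_powerset _, fun _ ↦ k₀, by simp⟩⟩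
  rw [Finset.mem_filter, Finset.mem_powerset] at hU
  obtain ⟨hUB, key, hkey⟩ := hU
  refine ⟨U, hUB, ?_, key, hkey⟩
  by_contra! hlt
  have hcard : (#(B \ U) : ℝ) + #U = #B := mod_cast Finset.card_sdiff_add_card_eq_card hUB
  have hpos : (0 : ℝ) < #(B \ U) := by linarith [(#U).cast_nonneg (α := ℝ)]
  obtain ⟨k, hk⟩ := h (B \ U) Finset.sdiff_subset (Finset.card_pos.1 (mod_cast hpos))
  set X := {c ∈ B \ U | hits k c}
  have hXU : ∀ x ∈ X, x ∈ B ∧ x ∉ U := fun x hx ↦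
    Finset.mem_sdiff.1 (Finset.mem_filter.1 hx).1
  have hXpos : (0 : ℝ) < #X := lt_of_lt_of_le (by positivity) hk
  have hmem : U ∪ X ∈ B.powerset.filter P := by
    refine Finset.mem_filter.2 ⟨Finset.mem_powerset.2
      (Finset.union_subset hUB fun x hx ↦ (hXU x hx).1), fun c ↦ if c ∈ X then k else key c, ?_⟩
    intro c hc
    by_cases hcX : c ∈ X
    · simp only [hcX, if_true]
      refine ⟨(Finset.mem_filter.1 hcX).2, ?_⟩
      calc η / 2 * #B ≤ η * #(B \ U) := by nlinarith
        _ ≤ #X := hk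
        _ ≤ _ := mod_cast Finset.card_le_card fun x hx ↦ by simp [hx]
    · have hcU : c ∈ U := (Finset.mem_union.1 hc).resolve_right hcX
      simp only [hcX, if_false]
      refine ⟨(hkey c hcU).1, (hkey c hcU).2.trans (mod_cast Finset.card_le_card fun x hx ↦ ?_)⟩
      rw [Finset.mem_filter] at hx ⊢
      have hxX : x ∉ X := fun hxX ↦ (hXU x hxX).2 hx.1
      exact ⟨Finset.mem_union_left _ hx.1, by rw [if_neg hxX, hx.2]⟩
  have hle := hmax _ hmem
  rw [Finset.card_union_of_disjoint (Finset.disjoint_right.2 fun x hx ↦ (hXU x hx).2)] at hle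
  have : 0 < #X := mod_cast hXpos
  omega

lemma card_filter_mul_le_sum {Y : Finset α} {p : α → Prop} [DecidablePred p] {g : α → ℝ}
    (hg : ∀ x, 0 ≤ g x) {s : ℝ} (h : ∀ x ∈ Y, p x → s ≤ g x) :
    #{x ∈ Y | p x} * s ≤ ∑ x ∈ Y, g x := by
  calc #{x ∈ Y | p x} * s ≤ ∑ x ∈ Y with p x, g x := by
        rw [← nsmul_eq_mul]
        exact Finset.card_nsmul_le_sum _ _ _ fun x hx ↦
          h x (Finset.mem_filter.1 hx).1 (Finset.mem_filter.1 hx).2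
    _ ≤ _ := Finset.sum_le_sum_of_subset_of_nonneg (Finset.filter_subset _ _) fun x _ _ ↦ hg x

lemma card_fiber_average_gt_mul_le (U : Finset α) (key : α → K) {g : α → ℝ} (hg : ∀ x, 0 ≤ g x)
    (s : ℝ) :
    #{c ∈ U | s * #{x ∈ U | key x = key c} < ∑ x ∈ U with key x = key c, g x} * s ≤
      ∑ x ∈ U, g x := by
  set heavy := {c ∈ U | s * #{x ∈ U | key x = key c} < ∑ x ∈ U with key x = key c, g x} with hdef
  have hU : ∀ c ∈ U, key c ∈ U.image key := fun c hc ↦ Finset.mem_image_of_mem _ hc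
  rw [← Finset.sum_fiberwise_of_maps_to hU,
    Finset.card_eq_sum_card_fiberwise fun c hc ↦ hU c (Finset.mem_filter.1 hc).1,
    Nat.cast_sum, Finset.sum_mul]
  refine Finset.sum_le_sum fun k _ ↦ ?_
  rcases Finset.eq_empty_or_nonempty {c ∈ heavy | key c = k} with hempty | ⟨c, hc⟩
  · rw [hempty, Finset.card_empty, Nat.cast_zero, zero_mul]
    exact Finset.sum_nonneg fun x _ ↦ hg x
  · obtain ⟨hcheavy, rfl⟩ := Finset.mem_filter.1 hc
    have hheavy := (Finset.mem_filter.1 hcheavy).2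
    calc (#{x ∈ heavy | key x = key c} : ℝ) * s = #{x ∈ U | key x = key c} * s := by
          congr 2
          refine congrArg _ (Finset.ext fun x ↦ ?_)
          simp only [hdef, Finset.mem_filter]
          exact ⟨fun h ↦ ⟨h.1.1, h.2⟩, fun h ↦ ⟨⟨h.1, by rwa [h.2]⟩, h.2⟩⟩
      _ ≤ _ := by linarith

variable [Fintype ι]

/-- Swapping the `j`-th coordinate of a tuple with an independent element of `U j` preserves the
uniform distribution, so a conflict at `(i, j)` is no likelier for a random tuple than for a random
element of `U j` against a fixed one of `U i`. -/
lemma card_piFinset_conflict_le {U : ι → Finset α} (hU : ∀ i, (U i).Nonempty) {i j : ι}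
    (hij : i ≠ j) {bad : α → α → Prop} {ρ : ℝ}
    (h : ∀ a ∈ U i, #{b ∈ U j | bad a b} ≤ ρ * #(U j)) :
    #{t ∈ Fintype.piFinset U | bad (t i) (t j)} ≤ ρ * #(Fintype.piFinset U) := by
  set T := Fintype.piFinset U
  let swap : (ι → α) × α → (ι → α) × α := fun x ↦ (Function.update x.1 j x.2, x.1 j)
  have hswap : ∀ x ∈ T ×ˢ U j, swap x ∈ T ×ˢ U j := by
    intro x hx
    simp only [T, swap, Finset.mem_product, Fintype.mem_piFinset] at hx ⊢
    refine ⟨fun a ↦ ?_, hx.1 j⟩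
    rcases eq_or_ne a j with rfl | ha
    · rw [Function.update_self]
      exact hx.2
    · rw [Function.update_of_ne ha]
      exact hx.1 a
  have hcard : #{x ∈ T ×ˢ U j | bad (x.1 i) (x.1 j)} = #{x ∈ T ×ˢ U j | bad (x.1 i) x.2} := by
    refine Finset.card_nbij' swap swap ?_ ?_ ?_ ?_
    · intro x hx
      simp only [Finset.coe_filter, Set.mem_ofPred_eq] at hx ⊢
      exact ⟨hswap x hx.1, by simpa [swap, Function.update_of_ne hij] using hx.2⟩
    · intro x hx
      simp only [Finset.coe_filter, Set.mem_ofPred_eq] at hx ⊢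
      exact ⟨hswap x hx.1, by simpa [swap, Function.update_of_ne hij] using hx.2⟩
    · intro x _
      simp [swap]
    · intro x _
      simp [swap]
  have hleft : #{x ∈ T ×ˢ U j | bad (x.1 i) (x.1 j)} = #{t ∈ T | bad (t i) (t j)} * #(U j) := by
    rw [← Finset.card_product]
    exact congrArg _ (Finset.filter_product_left fun t : ι → α ↦ bad (t i) (t j))
  have hright : (#{x ∈ T ×ˢ U j | bad (x.1 i) x.2} : ℝ) ≤ #T * (ρ * #(U j)) := by
    rw [Finset.card_filter, Finset.sum_product]
    simp only [← Finset.card_filter]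
    push_cast
    rw [← nsmul_eq_mul]
    exact Finset.sum_le_card_nsmul _ _ _ fun t ht ↦ h _ (Fintype.mem_piFinset.1 ht i)
  have hUj : (0 : ℝ) < #(U j) := mod_cast (hU j).card_pos
  refine le_of_mul_le_mul_right ?_ hUj
  rw [← hcard, hleft, Nat.cast_mul] at hright
  linarith

lemma exists_tuple_forall_not_conflict {U : ι → Finset α} (hU : ∀ i, (U i).Nonempty)
    {bad : ι → ι → α → α → Prop} {ρ : ℝ} (hρ : 0 ≤ ρ) (hρ1 : Fintype.card ι ^ 2 * ρ < 1)
    (h : ∀ i j, i ≠ j → ∀ a ∈ U i, #{b ∈ U j | bad i j a b} ≤ ρ * #(U j)) :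
    ∃ t : ι → α, (∀ i, t i ∈ U i) ∧ ∀ i j, i ≠ j → ¬ bad i j (t i) (t j) := by
  by_contra! hcon
  set T := Fintype.piFinset U
  have hT : (0 : ℝ) < #T := mod_cast (Fintype.piFinset_nonempty.2 hU).card_pos
  have hpair : ∀ p : ι × ι, (#{t ∈ T | p.1 ≠ p.2 ∧ bad p.1 p.2 (t p.1) (t p.2)} : ℝ) ≤ ρ * #T := by
    rintro ⟨i, j⟩
    by_cases hij : i = j
    · simp only [hij, ne_eq, not_true, false_and, Finset.filter_false, Finset.card_empty,
        Nat.cast_zero]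
      positivity
    · simpa only [ne_eq, hij, not_false_eq_true, true_and] using
        card_piFinset_conflict_le hU hij (h i j hij)
  have hcover : T ⊆ Finset.univ.biUnion fun p : ι × ι ↦
      {t ∈ T | p.1 ≠ p.2 ∧ bad p.1 p.2 (t p.1) (t p.2)} := fun t ht ↦ by
    obtain ⟨i, j, hij, hbad⟩ := hcon t (Fintype.mem_piFinset.1 ht)
    exact Finset.mem_biUnion.2 ⟨(i, j), Finset.mem_univ _, Finset.mem_filter.2 ⟨ht, hij, hbad⟩⟩
  have hle : (#T : ℝ) ≤ ∑ p : ι × ι, (#{t ∈ T | p.1 ≠ p.2 ∧ bad p.1 p.2 (t p.1) (t p.2)} : ℝ) :=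
    mod_cast (Finset.card_le_card hcover).trans Finset.card_biUnion_le
  have hsum := hle.trans (Finset.sum_le_card_nsmul _ _ _ fun p _ ↦ hpair p)
  rw [nsmul_eq_mul, Finset.card_univ, Fintype.card_prod, Nat.cast_mul] at hsum
  nlinarith

lemma card_le_two_mul_card_filter_forall {Y : Finset α} {p : ι → α → Prop}
    [∀ i, DecidablePred (p i)] {r : ℝ} (hr : 0 < r) (hι : Fintype.card ι ≤ r)
    (h : ∀ i, #{x ∈ Y | ¬ p i x} ≤ 1 / (2 * r) * #Y) :
    (#Y : ℝ) ≤ 2 * #{x ∈ Y | ∀ i, p i x} := by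
  have hbad : Y \ {x ∈ Y | ∀ i, p i x} ⊆ Finset.univ.biUnion fun i ↦ {x ∈ Y | ¬ p i x} :=
    fun x hx ↦ by
      obtain ⟨hxY, hx⟩ := Finset.mem_sdiff.1 hx
      simp only [Finset.mem_filter, hxY, true_and, not_forall] at hx
      obtain ⟨i, hi⟩ := hx
      exact Finset.mem_biUnion.2 ⟨i, Finset.mem_univ _, Finset.mem_filter.2 ⟨hxY, hi⟩⟩
  have hsum : (#(Y \ {x ∈ Y | ∀ i, p i x}) : ℝ) ≤ #Y / 2 := by
    calc (#(Y \ {x ∈ Y | ∀ i, p i x}) : ℝ) ≤ ∑ i, (#{x ∈ Y | ¬ p i x} : ℝ) :=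
          mod_cast (Finset.card_le_card hbad).trans Finset.card_biUnion_le
      _ ≤ Fintype.card ι * (1 / (2 * r) * #Y) := by
          rw [← nsmul_eq_mul]
          exact Finset.sum_le_card_nsmul _ _ _ fun i _ ↦ h i
      _ ≤ r * (1 / (2 * r) * #Y) := by gcongr
      _ = _ := by field_simp
  have hcard : (#(Y \ {x ∈ Y | ∀ i, p i x}) : ℝ) + #{x ∈ Y | ∀ i, p i x} = #Y :=
    mod_cast Finset.card_sdiff_add_card_eq_card (Finset.filter_subset _ _)
  linarith

lemma exists_compatible_fibers {U : ι → Finset α} (hU : ∀ i, (U i).Nonempty) (key : ι → α → K)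
    {g : ι → α → α → ℝ} (hg : ∀ i a x, 0 ≤ g i a x) {r : ℝ} (hr : 0 < r)
    (hι : Fintype.card ι ≤ r)
    (h : ∀ i j, i ≠ j → ∀ a ∈ U i, ∑ x ∈ U j, g i a x ≤ 1 / (4 * r ^ 3) * #(U j)) :
    ∃ t : ι → α, (∀ i, t i ∈ U i) ∧ ∀ j, (#{x ∈ U j | key j x = key j (t j)} : ℝ) ≤
      2 * #{x ∈ {x ∈ U j | key j x = key j (t j)} | ∀ i, i ≠ j → g i (t i) x < 1} := by
  let Y : ι → α → Finset α := fun j b ↦ {x ∈ U j | key j x = key j b}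
  obtain ⟨t, htU, ht⟩ := exists_tuple_forall_not_conflict hU (ρ := 1 / (2 * r ^ 2))
    (bad := fun i j a b ↦ 1 / (2 * r) * #(Y j b) < ∑ x ∈ Y j b, g i a x) (by positivity)
    (by
      calc (Fintype.card ι : ℝ) ^ 2 * (1 / (2 * r ^ 2)) ≤ r ^ 2 * (1 / (2 * r ^ 2)) := by gcongr
        _ < 1 := by field_simp; norm_num)
    (fun i j hij a ha ↦ by
      have havg := (card_fiber_average_gt_mul_le (U j) (key j) (hg i a) (1 / (2 * r))).trans
        (h i j hij a ha)
      refine ((le_div_iff₀ (by positivity)).2 havg).trans_eq ?_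
      field_simp
      ring)
  refine ⟨t, htU, fun j ↦ card_le_two_mul_card_filter_forall
    (p := fun i x ↦ i ≠ j → g i (t i) x < 1) hr hι fun i ↦ ?_⟩
  by_cases hij : i = j
  · simp only [hij, ne_eq, not_true, false_imp_iff, Finset.filter_false, Finset.card_empty,
      Nat.cast_zero]
    positivity
  · have hmarkov := card_filter_mul_le_sum (Y := Y j (t j))
      (p := fun x ↦ ¬ (i ≠ j → g i (t i) x < 1)) (hg i (t i)) (s := 1)
      fun x _ hx ↦ not_lt.1 (Classical.not_imp.1 hx).2
    linarith [not_lt.1 (ht i j hij)]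

end Selection

lemma anticomplete_union_left {G : SimpleGraph V} {A A' B : Set V} :
    Anticomplete G (A ∪ A') B ↔ Anticomplete G A B ∧ Anticomplete G A' B := by
  simp only [Anticomplete, Set.mem_union, or_imp, forall_and]

lemma exists_card_le_mul_card_fiber {β γ : Type*} [DecidableEq γ] {s : Finset β} {f : β → γ}
    {S : Finset γ} (hS : S.Nonempty) (hf : ∀ x ∈ s, f x ∈ S) :
    ∃ y ∈ S, #s ≤ #S * #{x ∈ s | f x = y} := by
  refine Finset.exists_le_of_sum_le hS ?_
  rw [Finset.sum_const, smul_eq_mul, ← Finset.mul_sum, ← Finset.card_eq_sum_card_fiberwise hf]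

/-- Finitely many blocks of vertices; `block i` is meaningful only for `i ∈ index`. -/
structure BlockFamily (V ι : Type*) where
  index : Finset ι
  block : ι → Finset V

namespace BlockFamily

variable {G : SimpleGraph V} {B B' B'' : BlockFamily V ι} {D D' : Finset V} {l ρ ρ' : ℝ}

/-- Every vertex of `D` is adjacent to at most a proportion `l` of each block. -/
def IsLinkedFrom (B : BlockFamily V ι) (G : SimpleGraph V) (D : Finset V) (l : ℝ) : Prop :=
  ∀ d ∈ D, ∀ j ∈ B.index, degIn G d (B.block j) ≤ l * #(B.block j)

/-- The linkage of the family is at most `l`: every vertex of a block is adjacent to at most a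
proportion `l` of each other block. -/
def IsLinked (B : BlockFamily V ι) (G : SimpleGraph V) (l : ℝ) : Prop :=
  ∀ i ∈ B.index, ∀ j ∈ B.index, i ≠ j → ∀ v ∈ B.block i, degIn G v (B.block j) ≤ l * #(B.block j)

/-- The colouring `q` maps the vertices of each block to the index of that block. In particular the
blocks are pairwise disjoint. -/
def IsColouredBy (B : BlockFamily V ι) (q : V → ι) : Prop :=
  ∀ j ∈ B.index, ∀ v ∈ B.block j, q v = j

/-- `Z j` covers the `j`-th block and is anticomplete to all other blocks. -/
def IsPrivatelyCoveredBy (B : BlockFamily V ι) (G : SimpleGraph V) (Z : ι → Finset V) : Prop :=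
  (∀ j ∈ B.index, Covers G (Z j) (B.block j)) ∧
    ∀ i ∈ B.index, ∀ j ∈ B.index, i ≠ j → Anticomplete G (Z i) (B.block j)

/-- `L m` covers all blocks of `B`, and the earlier sets `L 0, …, L (m - 1)` are anticomplete to
them. -/
def IsReachedAt (B : BlockFamily V ι) (G : SimpleGraph V) (L : ℕ → Finset V) (m : ℕ) : Prop :=
  ∀ j ∈ B.index, Covers G (L m) (B.block j) ∧ ∀ i < m, Anticomplete G (L i) (B.block j)

/-- `B'` arises from `B` by discarding blocks and shrinking each of the others by a factor of at
most `ρ`. -/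
structure Refines (B' B : BlockFamily V ι) (ρ : ℝ) : Prop where
  index_subset : B'.index ⊆ B.index
  block_subset : ∀ j ∈ B'.index, B'.block j ⊆ B.block j
  card_le : ∀ j ∈ B'.index, (#(B.block j) : ℝ) ≤ ρ * #(B'.block j)

lemma Refines.trans (h' : B''.Refines B' ρ') (h : B'.Refines B ρ) (hρ : 0 ≤ ρ) :
    B''.Refines B (ρ * ρ') where
  index_subset := h'.index_subset.trans h.index_subset
  block_subset j hj := (h'.block_subset j hj).trans (h.block_subset j (h'.index_subset hj))
  card_le j hj := by
    rw [mul_assoc]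
    exact (h.card_le j (h'.index_subset hj)).trans (by gcongr; exact h'.card_le j hj)

lemma Refines.mono (h : B'.Refines B ρ) (hρ : ρ ≤ ρ') : B'.Refines B ρ' :=
  { h with card_le := fun j hj ↦ (h.card_le j hj).trans (by gcongr) }

lemma Refines.nonempty (h : B'.Refines B ρ) (hB : ∀ j ∈ B.index, (B.block j).Nonempty) {j : ι}
    (hj : j ∈ B'.index) : (B'.block j).Nonempty :=
  Finset.nonempty_iff_ne_empty.2 fun h0 ↦ by
    have := h.card_le j hj
    have := (hB j (h.index_subset hj)).card_pos
    simp_all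

lemma IsColouredBy.of_refines {q : V → ι} (hq : B.IsColouredBy q) (h : B'.Refines B ρ) :
    B'.IsColouredBy q :=
  fun j hj v hv ↦ hq j (h.index_subset hj) v (h.block_subset j hj hv)

lemma Refines.degIn_le {v : V} {j : ι} (h : B'.Refines B ρ) (hl : 0 ≤ l) (hj : j ∈ B'.index)
    (hv : degIn G v (B.block j) ≤ l * #(B.block j)) :
    degIn G v (B'.block j) ≤ ρ * l * #(B'.block j) := calc
  (degIn G v (B'.block j) : ℝ) ≤ degIn G v (B.block j) :=
    mod_cast degIn_mono (h.block_subset j hj)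
  _ ≤ l * (ρ * #(B'.block j)) := hv.trans (by gcongr; exact h.card_le j hj)
  _ = _ := by ring

lemma IsLinkedFrom.mono {l' : ℝ} (hB : B.IsLinkedFrom G D l) (hl : l ≤ l') :
    B.IsLinkedFrom G D l' :=
  fun d hd j hj ↦ (hB d hd j hj).trans (by gcongr)

lemma IsLinked.mono {l' : ℝ} (hB : B.IsLinked G l) (hl : l ≤ l') : B.IsLinked G l' :=
  fun i hi j hj hij v hv ↦ (hB i hi j hj hij v hv).trans (by gcongr)

lemma IsReachedAt.of_refines {L : ℕ → Finset V} {m : ℕ} (hL : B.IsReachedAt G L m)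
    (h : B'.Refines B ρ) : B'.IsReachedAt G L m := fun j hj ↦
  have hj' := hL j (h.index_subset hj)
  ⟨fun v hv ↦ hj'.1 v (h.block_subset j hj hv),
    fun i hi x hx v hv ↦ hj'.2 i hi x hx v (h.block_subset j hj hv)⟩

lemma IsLinkedFrom.of_refines (hB : B.IsLinkedFrom G D l) (h : B'.Refines B ρ) (hl : 0 ≤ l) :
    B'.IsLinkedFrom G D (ρ * l) :=
  fun d hd j hj ↦ h.degIn_le hl hj (hB d hd j (h.index_subset hj))

lemma IsLinked.of_refines (hB : B.IsLinked G l) (h : B'.Refines B ρ) (hl : 0 ≤ l) :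
    B'.IsLinked G (ρ * l) := fun i hi j hj hij v hv ↦
  h.degIn_le hl hj
    (hB i (h.index_subset hi) j (h.index_subset hj) hij v (h.block_subset i hi hv))

lemma exists_refines_monochromatic {γ : Type*} (B : BlockFamily V ι) (type : V → γ) {S : Finset γ}
    (hS : S.Nonempty) (h : ∀ j ∈ B.index, ∀ v ∈ B.block j, type v ∈ S) :
    ∃ s ∈ S, ∃ B' : BlockFamily V ι, B'.Refines B #S ∧ #B.index ≤ #S * #B'.index ∧
      ∀ j ∈ B'.index, ∀ v ∈ B'.block j, type v = s := by
  have hblock (j : ι) : ∃ s, j ∈ B.index →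
      s ∈ S ∧ #(B.block j) ≤ #S * #{v ∈ B.block j | type v = s} := by
    by_cases hj : j ∈ B.index
    · obtain ⟨s, hs⟩ := exists_card_le_mul_card_fiber hS (h j hj)
      exact ⟨s, fun _ ↦ hs⟩
    · exact ⟨hS.choose, fun h ↦ absurd h hj⟩
  choose major hmajor using hblock
  obtain ⟨s, hs, hcard⟩ := exists_card_le_mul_card_fiber hS fun j hj ↦ (hmajor j hj).1
  refine ⟨s, hs, ⟨{j ∈ B.index | major j = s}, fun j ↦ {v ∈ B.block j | type v = s}⟩,
    ⟨Finset.filter_subset _ _, fun j _ ↦ Finset.filter_subset _ _, fun j hj ↦ ?_⟩, hcard,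
    fun j _ v hv ↦ (Finset.mem_filter.1 hv).2⟩
  obtain ⟨hjB, rfl⟩ := Finset.mem_filter.1 hj
  exact_mod_cast (hmajor j hjB).2

end BlockFamily

/-- Bounds on the quality of a block family: on the number of blocks, on their mutual linkage, and
on the scale `Q` in terms of which block sizes are measured. -/
structure Thresholds where
  length : ℕ
  linkage : ℝ
  scale : ℝ
  linkage_pos : 0 < linkage
  one_lt_scale : 1 < scale

/-- The block family `B` in `G` and the scale `Q` meet the thresholds `t`. -/
structure Thresholds.IsMet (t : Thresholds) (G : SimpleGraph V) (B : BlockFamily V ι) (Q : ℝ) :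
    Prop where
  scale_le : t.scale ≤ Q
  length_le : t.length ≤ #B.index
  nonempty : ∀ j ∈ B.index, (B.block j).Nonempty
  isLinked : B.IsLinked G t.linkage

namespace Thresholds.IsMet

variable {t t' : Thresholds} {G : SimpleGraph V} {B B' : BlockFamily V ι} {Q ρ : ℝ}

lemma one_lt (h : t.IsMet G B Q) : 1 < Q :=
  t.one_lt_scale.trans_le h.scale_le

lemma of_refines (h : t.IsMet G B Q) (hB : B'.Refines B ρ) (hscale : t'.scale ≤ t.scale)
    (hlinkage : ρ * t.linkage ≤ t'.linkage) (hlength : t'.length ≤ #B'.index) :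
    t'.IsMet G B' Q where
  scale_le := hscale.trans h.scale_le
  length_le := hlength
  nonempty _ hj := hB.nonempty h.nonempty hj
  isLinked := (h.isLinked.of_refines hB t.linkage_pos.le).mono hlinkage

end Thresholds.IsMet

section PrivateCovers

/-- Measures how badly `x` conflicts with a block `Y` covered by `Z`: if it is less than `1`, then
`x` has no neighbour in `Z` and fewer than `l / 2 * #Y` neighbours in `Y`. -/
def conflictWeight (G : SimpleGraph V) (l : ℝ) (Z Y : Finset V) (x : V) : ℝ :=
  (if ∃ z ∈ Z, G.Adj z x then 1 else 0) + 2 / l * (degIn G x Y / #Y)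

variable {G : SimpleGraph V} {D : Finset V} {B : ι → Finset V} {l : ℝ}

lemma conflictWeight_nonneg (hl : 0 < l) (Z Y : Finset V) (x : V) :
    0 ≤ conflictWeight G l Z Y x := by
  unfold conflictWeight
  positivity

lemma not_adj_and_degIn_le_of_conflictWeight_lt_one {Z Y : Finset V} {x : V} (hl : 0 < l)
    (hY : Y.Nonempty) (h : conflictWeight G l Z Y x < 1) :
    (∀ z ∈ Z, ¬ G.Adj z x) ∧ degIn G x Y ≤ l / 2 * #Y := by
  have : (0 : ℝ) < #Y := mod_cast hY.card_pos
  unfold conflictWeight at h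
  split_ifs at h with hZ
  · have : (0 : ℝ) ≤ 2 / l * (degIn G x Y / #Y) := by positivity
    linarith
  · push Not at hZ
    refine ⟨hZ, ?_⟩
    rw [zero_add, div_mul_div_comm, div_lt_one (by positivity)] at h
    linarith

lemma sum_conflictWeight_le {δ : ℝ} {Z Y U C : Finset V} (hl : 0 < l) (hδ : 0 ≤ δ) (hUC : U ⊆ C)
    (hCU : (#C : ℝ) ≤ 2 * #U) (hY : Y.Nonempty) (hZ : #(nbrsIn G Z C) ≤ δ * #C)
    (hdeg : ∀ y ∈ Y, degIn G y C ≤ δ * l / 2 * #C) :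
    ∑ x ∈ U, conflictWeight G l Z Y x ≤ 4 * δ * #U := by
  have : (0 : ℝ) < #Y := mod_cast hY.card_pos
  have hcover : (#{x ∈ U | ∃ z ∈ Z, G.Adj z x} : ℝ) ≤ δ * (2 * #U) := calc
    _ ≤ (#(nbrsIn G Z C) : ℝ) :=
      mod_cast Finset.card_le_card (Finset.filter_subset_filter _ hUC)
    _ ≤ _ := hZ.trans (by gcongr)
  have hdegree : ∑ y ∈ Y, (degIn G y U : ℝ) ≤ #Y * (δ * l / 2 * (2 * #U)) := by
    rw [← nsmul_eq_mul]
    refine Finset.sum_le_card_nsmul _ _ _ fun y hy ↦ ?_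
    calc (degIn G y U : ℝ) ≤ degIn G y C := mod_cast degIn_mono hUC
      _ ≤ _ := (hdeg y hy).trans (by gcongr)
  simp only [conflictWeight]
  rw [Finset.sum_add_distrib, Finset.sum_boole, ← Finset.mul_sum, ← Finset.sum_div, sum_degIn_comm]
  calc _ ≤ δ * (2 * #U) + 2 / l * (#Y * (δ * l / 2 * (2 * #U)) / #Y) := by gcongr
    _ = 4 * δ * #U := by field_simp; ring

lemma exists_private_covers_of_hitting {K : Type*} [Fintype ι] {Z : K → Finset V}
    {hits : K → V → Prop} {r η : ℝ} (hr : 0 < r) (hι : Fintype.card ι ≤ r) (hη : 0 < η) (hl : 0 < l)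
    (hB : ∀ j, (B j).Nonempty)
    (hhit : ∀ j, ∀ C ⊆ B j, C.Nonempty → ∃ k, η * #C ≤ #{c ∈ C | hits k c} ∧
      ∀ i, #(nbrsIn G (Z k) (B i)) ≤ 1 / (16 * r ^ 3) * #(B i))
    (hlink : ∀ i j, i ≠ j → ∀ v ∈ B i, degIn G v (B j) ≤ l / (32 * r ^ 3) * #(B j)) :
    ∃ (key : ι → K) (C : ι → Finset V), ∀ j, C j ⊆ B j ∧ η / 4 * #(B j) ≤ #(C j) ∧
      (∀ c ∈ C j, hits (key j) c) ∧ ∀ i, i ≠ j → Anticomplete G (Z (key i)) (C j) ∧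
        ∀ v ∈ C i, degIn G v (C j) ≤ l * #(C j) := by
  let L := {k : K // ∀ i, #(nbrsIn G (Z k) (B i)) ≤ 1 / (16 * r ^ 3) * #(B i)}
  have hlabel (j : ι) := exists_labelling_large_fibers (hB j) (hits := fun (k : L) ↦ hits k) hη
    fun C hCB hC ↦ by
      obtain ⟨k, hkC, hkB⟩ := hhit j C hCB hC
      exact ⟨⟨k, hkB⟩, hkC⟩
  choose U hUB hBU key hkey using hlabel
  have hU (j) : (U j).Nonempty := Finset.card_pos.1 <| by
    have : (0 : ℝ) < #(B j) := mod_cast (hB j).card_pos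
    have : (0 : ℝ) < #(U j) := by linarith [hBU j]
    exact_mod_cast this
  let Y : ι → V → Finset V := fun j a ↦ {x ∈ U j | key j x = key j a}
  have hY {j a} (ha : a ∈ U j) : (Y j a).Nonempty := ⟨a, Finset.mem_filter.2 ⟨ha, rfl⟩⟩
  let g : ι → V → V → ℝ := fun i a ↦ conflictWeight G l (Z (key i a)) (Y i a)
  have hg (i a x) : 0 ≤ g i a x := conflictWeight_nonneg hl _ _ _
  obtain ⟨t, htU, ht⟩ := exists_compatible_fibers hU key hg hr hι fun i j hij a ha ↦ by
    have h := sum_conflictWeight_le (δ := 1 / (16 * r ^ 3)) hl (by positivity) (hUB j) (hBU j)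
      (hY ha) ((key i a).2 j) fun y hy ↦
        (hlink i j hij y (hUB i (Finset.mem_filter.1 hy).1)).trans_eq (by ring)
    exact h.trans_eq (by field_simp; norm_num)
  let C : ι → Finset V := fun j ↦ {x ∈ Y j (t j) | ∀ i, i ≠ j → g i (t i) x < 1}
  have hCY (j) : C j ⊆ Y j (t j) := Finset.filter_subset _ _
  have hYU (j) : Y j (t j) ⊆ U j := Finset.filter_subset _ _
  have hYC (j) : (#(Y j (t j)) : ℝ) ≤ 2 * #(C j) := by convert ht j
  have hcompat {i j x} (hij : i ≠ j) (hx : x ∈ C j) :=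
    not_adj_and_degIn_le_of_conflictWeight_lt_one hl (hY (htU i)) ((Finset.mem_filter.1 hx).2 i hij)
  refine ⟨fun j ↦ key j (t j), C, fun j ↦ ⟨(hCY j).trans ((hYU j).trans (hUB j)), ?_,
    fun x hx ↦ ?_, fun i hij ↦ ⟨fun z hz x hx ↦ (hcompat hij hx).1 z hz, fun v hv ↦ ?_⟩⟩⟩
  · have hkeyY : η / 2 * #(B j) ≤ #(Y j (t j)) := by
      convert (hkey j (t j) (htU j)).2
    linarith [hYC j]
  · obtain ⟨hxU, hxt⟩ := Finset.mem_filter.1 (hCY j hx)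
    simpa only [hxt] using (hkey j x hxU).1
  · calc (degIn G v (C j) : ℝ) ≤ degIn G v (Y j (t j)) := mod_cast degIn_mono (hCY j)
      _ ≤ l / 2 * #(Y j (t j)) := (hcompat hij.symm hv).2
      _ ≤ l / 2 * (2 * #(C j)) := by gcongr; exact hYC j
      _ = l * #(C j) := by ring

namespace BlockFamily

variable {B B' : BlockFamily V ι} {D₁ D₂ : Finset V} {Q ρ : ℝ}

lemma exists_refines_of_hitting {K : Type*} [Nonempty K] {Z : K → Finset V} {hits : K → V → Prop}
    {r η : ℝ} (hr : 0 < r) (hι : #B.index ≤ r) (hη : 0 < η) (hl : 0 < l)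
    (hB : ∀ j ∈ B.index, (B.block j).Nonempty)
    (hhit : ∀ j ∈ B.index, ∀ C ⊆ B.block j, C.Nonempty → ∃ k, η * #C ≤ #{c ∈ C | hits k c} ∧
      ∀ i ∈ B.index, #(nbrsIn G (Z k) (B.block i)) ≤ 1 / (16 * r ^ 3) * #(B.block i))
    (hlink : B.IsLinked G (l / (32 * r ^ 3))) :
    ∃ (key : ι → K) (B' : BlockFamily V ι), B'.Refines B (4 / η) ∧ B'.index = B.index ∧
      B'.IsLinked G l ∧ (∀ j ∈ B'.index, ∀ c ∈ B'.block j, hits (key j) c) ∧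
      ∀ i ∈ B'.index, ∀ j ∈ B'.index, i ≠ j → Anticomplete G (Z (key i)) (B'.block j) := by
  obtain ⟨key, C, h⟩ := exists_private_covers_of_hitting (ι := B.index) (G := G) (Z := Z)
    (hits := hits) (B := fun j ↦ B.block j) hr (by simpa using hι) hη hl (fun j ↦ hB j j.2)
    (fun j C hC hne ↦ (hhit j j.2 C hC hne).imp fun k hk ↦ ⟨hk.1, fun i ↦ hk.2 i i.2⟩)
    (fun i j hij ↦ hlink i i.2 j j.2 (Subtype.coe_ne_coe.2 hij))
  let key' : ι → K := Function.extend Subtype.val key fun _ ↦ Classical.arbitrary K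
  let C' : ι → Finset V := Function.extend Subtype.val C fun _ ↦ ∅
  have hkey' (j : B.index) : key' j = key j := Subtype.val_injective.extend_apply ..
  have hC' (j : B.index) : C' j = C j := Subtype.val_injective.extend_apply ..
  refine ⟨key', ⟨B.index, C'⟩, ⟨subset_rfl, fun j hj ↦ ?_, fun j hj ↦ ?_⟩, rfl,
    fun i hi j hj hij ↦ ?_, fun j hj ↦ ?_, fun i hi j hj hij ↦ ?_⟩ <;>
    lift j to B.index using hj
  · simpa only [hC'] using (h j).1
  · have hcard : η / 4 * #(B.block j) ≤ #(C j) := (h j).2.1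
    simp only [hC', div_mul_eq_mul_div, le_div_iff₀ hη]
    linarith
  · lift i to B.index using hi
    simpa only [hC'] using fun v hv ↦ ((h j).2.2.2 i (by simpa using hij)).2 v hv
  · simpa only [hC', hkey'] using (h j).2.2.1
  · lift i to B.index using hi
    simpa only [hC', hkey'] using ((h j).2.2.2 i (by simpa using hij)).1

/-- All vertices of the blocks have about `Δ` neighbours in `D`, up to a factor of `Q`. -/
def HasUniformDegree (B : BlockFamily V ι) (G : SimpleGraph V) (D : Finset V) (Δ Q : ℝ) : Prop :=
  ∀ j ∈ B.index, ∀ v ∈ B.block j, Δ ≤ degIn G v D ∧ degIn G v D ≤ Q * Δ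

lemma HasUniformDegree.of_refines {Δ : ℝ} (hB : B.HasUniformDegree G D Δ Q) (h : B'.Refines B ρ) :
    B'.HasUniformDegree G D Δ Q :=
  fun j hj v hv ↦ hB j (h.index_subset hj) v (h.block_subset j hj hv)

lemma exists_refines_hasUniformDegree {T : ℕ} (hQ : 1 < Q) (hD : #D ≤ Q ^ T)
    (hcov : ∀ j ∈ B.index, Covers G D (B.block j)) :
    ∃ Δ > 0, ∃ B' : BlockFamily V ι, B'.Refines B (T + 1 : ℕ) ∧
      #B.index ≤ (T + 1) * #B'.index ∧ B'.HasUniformDegree G D Δ Q := by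
  have hlevel (v : V) : ∃ n, 1 ≤ degIn G v D →
      n ∈ Finset.range (T + 1) ∧ Q ^ n ≤ degIn G v D ∧ degIn G v D ≤ Q * Q ^ n := by
    by_cases hv : 1 ≤ degIn G v D
    · obtain ⟨n, hn, hn'⟩ := exists_nat_pow_near (x := (degIn G v D : ℝ)) (mod_cast hv) hQ
      have hnT : Q ^ n ≤ Q ^ T := hn.trans ((Nat.cast_le.2 degIn_le_card).trans hD)
      rw [pow_le_pow_iff_right₀ hQ] at hnT
      exact ⟨n, fun _ ↦ ⟨by grind, hn, by rw [← pow_succ']; exact hn'.le⟩⟩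
    · exact ⟨0, fun h ↦ absurd h hv⟩
  choose level hlevel using hlevel
  have hpos : ∀ j ∈ B.index, ∀ v ∈ B.block j, 1 ≤ degIn G v D := fun j hj v hv ↦ by
    obtain ⟨d, hd, hdv⟩ := hcov j hj v hv
    exact Finset.card_pos.2 ⟨d, Finset.mem_filter.2 ⟨hd, hdv.symm⟩⟩
  obtain ⟨n, -, B', hB', hcard, hn⟩ := B.exists_refines_monochromatic level
    (S := Finset.range (T + 1)) (by simp) fun j hj v hv ↦ (hlevel v (hpos j hj v hv)).1
  rw [Finset.card_range] at hB' hcard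
  refine ⟨Q ^ n, by positivity, B', hB', hcard, fun j hj v hv ↦ ?_⟩
  have := hlevel v (hpos j (hB'.index_subset hj) v (hB'.block_subset j hj hv))
  rw [hn j hj v hv] at this
  exact this.2

lemma exists_pair_hitting {Δ₁ Δ₂ κ r : ℝ} (hr : 1 ≤ r) (hcard : #B.index ≤ r) (hQ : 0 < Q)
    (hκ : 0 < κ) (hκ1 : κ ≤ 1) (hΔ₁ : 0 < Δ₁) (hΔ₂ : 0 < Δ₂)
    (hB₁ : B.HasUniformDegree G D₁ Δ₁ Q) (hB₂ : B.HasUniformDegree G D₂ Δ₂ Q)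
    (hD₁ : B.IsLinkedFrom G D₁ (κ / 2)) (hD₂ : B.IsLinkedFrom G D₂ (κ / 2)) {j : ι}
    (hj : j ∈ B.index) {C : Finset V} (hC : C ⊆ B.block j) (hCne : C.Nonempty) :
    ∃ Z₁ ⊆ D₁, ∃ Z₂ ⊆ D₂, (κ / (8 * r * Q)) ^ 2 * #C ≤
        #{c ∈ C | (∃ z ∈ Z₁, G.Adj z c) ∧ ∃ z ∈ Z₂, G.Adj z c} ∧
      ∀ i ∈ B.index, #(nbrsIn G (Z₁ ∪ Z₂) (B.block i)) ≤ 2 * κ * #(B.block i) := by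
  obtain ⟨Z₁, hZ₁D, hZ₁C, hZ₁B⟩ := exists_subset_card_nbrsIn_large_small hΔ₁ hQ hκ hκ1
    hcard hr hCne (fun c hc ↦ (hB₁ j hj c (hC hc)).1)
    (fun c hc ↦ (hB₁ j hj c (hC hc)).2) (fun i hi b hb ↦ (hB₁ i hi b hb).2) hD₁
  have hne : (nbrsIn G Z₁ C).Nonempty := Finset.card_pos.1 <| by
    have : (0 : ℝ) < #C := mod_cast hCne.card_pos
    have : (0 : ℝ) < #(nbrsIn G Z₁ C) := lt_of_lt_of_le (by positivity) hZ₁C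
    exact_mod_cast this
  have hsub : nbrsIn G Z₁ C ⊆ B.block j := nbrsIn_subset.trans hC
  obtain ⟨Z₂, hZ₂D, hZ₂C, hZ₂B⟩ := exists_subset_card_nbrsIn_large_small hΔ₂ hQ hκ hκ1
    hcard hr hne (fun c hc ↦ (hB₂ j hj c (hsub hc)).1)
    (fun c hc ↦ (hB₂ j hj c (hsub hc)).2) (fun i hi b hb ↦ (hB₂ i hi b hb).2) hD₂
  refine ⟨Z₁, hZ₁D, Z₂, hZ₂D, ?_, fun i hi ↦ ?_⟩
  · rw [sq, mul_assoc, ← Finset.filter_filter]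
    exact (mul_le_mul_of_nonneg_left hZ₁C (by positivity)).trans hZ₂C
  · have hunion : #(nbrsIn G (Z₁ ∪ Z₂) (B.block i)) ≤
        #(nbrsIn G Z₁ (B.block i)) + #(nbrsIn G Z₂ (B.block i)) :=
      (Finset.card_le_card fun c hc ↦ by grind [mem_nbrsIn]).trans (Finset.card_union_le _ _)
    rify at hunion
    linarith [hZ₁B i hi, hZ₂B i hi]

lemma Refines.restrict {J : Finset ι} (h : B'.Refines B ρ) (hJ : J ⊆ B'.index) :
    Refines ⟨J, B'.block⟩ B ρ where
  index_subset := hJ.trans h.index_subset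
  block_subset j hj := h.block_subset j (hJ hj)
  card_le j hj := h.card_le j (hJ hj)

lemma exists_refines_card_eq_hasUniformDegree {T r : ℕ} (hQ : 1 < Q)
    (hcard : (T + 1) ^ 2 * r ≤ #B.index) (hD₁ : #D₁ ≤ Q ^ T) (hD₂ : #D₂ ≤ Q ^ T)
    (hcov₁ : ∀ j ∈ B.index, Covers G D₁ (B.block j))
    (hcov₂ : ∀ j ∈ B.index, Covers G D₂ (B.block j)) :
    ∃ Δ₁ > 0, ∃ Δ₂ > 0, ∃ B' : BlockFamily V ι, B'.Refines B ((T + 1) ^ 2) ∧ #B'.index = r ∧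
      B'.HasUniformDegree G D₁ Δ₁ Q ∧ B'.HasUniformDegree G D₂ Δ₂ Q := by
  obtain ⟨Δ₁, hΔ₁, B₁, hB₁, hcard₁, hu₁⟩ := exists_refines_hasUniformDegree hQ hD₁ hcov₁
  obtain ⟨Δ₂, hΔ₂, B₂, hB₂, hcard₂, hu₂⟩ := exists_refines_hasUniformDegree (B := B₁) hQ hD₂
    fun j hj v hv ↦ hcov₂ j (hB₁.index_subset hj) v (hB₁.block_subset j hj hv)
  have hr : r ≤ #B₂.index := by
    have : (T + 1) ^ 2 * r ≤ (T + 1) ^ 2 * #B₂.index := hcard.trans <| hcard₁.trans <|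
      (Nat.mul_le_mul_left _ hcard₂).trans_eq (by ring)
    exact Nat.le_of_mul_le_mul_left this (by positivity)
  obtain ⟨J, hJ, rfl⟩ := Finset.exists_subset_card_eq hr
  have hB : B₂.Refines B ((T + 1) ^ 2) :=
    (hB₂.trans hB₁ (by positivity)).mono (by push_cast; nlinarith)
  have hJB : Refines ⟨J, B₂.block⟩ B₂ 1 := ⟨hJ, fun _ _ ↦ subset_rfl, fun _ _ ↦ (one_mul _).ge⟩
  exact ⟨Δ₁, hΔ₁, Δ₂, hΔ₂, ⟨J, B₂.block⟩, hB.restrict hJ, rfl,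
    (hu₁.of_refines hB₂).of_refines hJB, hu₂.of_refines hJB⟩

lemma exists_refines_isPrivatelyCoveredBy_of_hasUniformDegree {Δ₁ Δ₂ κ r : ℝ} (hr : 1 ≤ r)
    (hcard : #B.index ≤ r) (hQ : 0 < Q) (hl : 0 < l) (hB : ∀ j ∈ B.index, (B.block j).Nonempty)
    (hκ : κ = 1 / (32 * r ^ 3)) (hBl : B.IsLinked G (κ * l)) (hΔ₁ : 0 < Δ₁) (hΔ₂ : 0 < Δ₂)
    (hB₁ : B.HasUniformDegree G D₁ Δ₁ Q) (hB₂ : B.HasUniformDegree G D₂ Δ₂ Q)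
    (hD₁ : B.IsLinkedFrom G D₁ (κ / 2)) (hD₂ : B.IsLinkedFrom G D₂ (κ / 2)) :
    ∃ (B' : BlockFamily V ι) (Z₁ Z₂ : ι → Finset V), B'.Refines B (2 ^ 18 * r ^ 8 * Q ^ 2) ∧
      B'.index = B.index ∧ B'.IsLinked G l ∧ (∀ j, Z₁ j ⊆ D₁ ∧ Z₂ j ⊆ D₂) ∧
      B'.IsPrivatelyCoveredBy G Z₁ ∧ B'.IsPrivatelyCoveredBy G Z₂ := by
  have hκ0 : 0 < κ := by rw [hκ]; positivity
  have hκ1 : κ ≤ 1 := by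
    have : 1 ≤ r ^ 3 := one_le_pow₀ hr
    exact hκ.trans_le (div_le_one_of_le₀ (by linarith) (by positivity))
  let K := {Z : Finset V × Finset V // Z.1 ⊆ D₁ ∧ Z.2 ⊆ D₂}
  have : Nonempty K := ⟨⟨(∅, ∅), by simp⟩⟩
  obtain ⟨key, B', hB', hindex, hlink, hhits, hanti⟩ := exists_refines_of_hitting (G := G) (B := B)
    (Z := fun k : K ↦ k.1.1 ∪ k.1.2)
    (hits := fun k c ↦ (∃ z ∈ k.1.1, G.Adj z c) ∧ ∃ z ∈ k.1.2, G.Adj z c)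
    (η := (κ / (8 * r * Q)) ^ 2) (by positivity) hcard (by positivity) hl hB
    (fun j hj C hC hCne ↦ by
      obtain ⟨Z₁, hZ₁, Z₂, hZ₂, hZC, hZB⟩ := exists_pair_hitting hr hcard hQ hκ0 hκ1 hΔ₁ hΔ₂
        hB₁ hB₂ hD₁ hD₂ hj hC hCne
      exact ⟨⟨(Z₁, Z₂), hZ₁, hZ₂⟩, by convert hZC,
        fun i hi ↦ (hZB i hi).trans_eq (by rw [hκ]; field_simp; norm_num)⟩)
    (hBl.mono (by rw [hκ, one_div_mul_eq_div]))
  simp only [Finset.coe_union, anticomplete_union_left] at hanti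
  exact ⟨B', fun j ↦ (key j).1.1, fun j ↦ (key j).1.2,
    hB'.mono (le_of_eq (by rw [hκ]; field_simp; norm_num)), hindex, hlink, fun j ↦ (key j).2,
    ⟨fun j hj c hc ↦ (hhits j hj c hc).1, fun i hi j hj hij ↦ (hanti i hi j hj hij).1⟩,
    ⟨fun j hj c hc ↦ (hhits j hj c hc).2, fun i hi j hj hij ↦ (hanti i hi j hj hij).2⟩⟩

lemma exists_refines_isPrivatelyCoveredBy_of_linkage {T r : ℕ} (hr : 1 ≤ r) (hl : 0 < l)
    (hQ : 1 < Q) (hB : ∀ j ∈ B.index, (B.block j).Nonempty) (hcard : (T + 1) ^ 2 * r ≤ #B.index)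
    {l₀ : ℝ} (hl₀ : l₀ = min 1 l / (64 * r ^ 3 * (T + 1) ^ 2)) (hBl : B.IsLinked G l₀)
    (hQD₁ : #D₁ ≤ Q ^ T) (hQD₂ : #D₂ ≤ Q ^ T)
    (hD₁ : B.IsLinkedFrom G D₁ l₀) (hD₂ : B.IsLinkedFrom G D₂ l₀)
    (hcov₁ : ∀ j ∈ B.index, Covers G D₁ (B.block j))
    (hcov₂ : ∀ j ∈ B.index, Covers G D₂ (B.block j)) :
    ∃ (B' : BlockFamily V ι) (Z₁ Z₂ : ι → Finset V),
      B'.Refines B ((T + 1) ^ 2 * (2 ^ 18 * r ^ 8 * Q ^ 2)) ∧ #B'.index = r ∧ B'.IsLinked G l ∧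
      (∀ j, Z₁ j ⊆ D₁ ∧ Z₂ j ⊆ D₂) ∧
      B'.IsPrivatelyCoveredBy G Z₁ ∧ B'.IsPrivatelyCoveredBy G Z₂ := by
  have hl₀_nonneg : 0 ≤ l₀ := by rw [hl₀]; positivity
  set κ : ℝ := 1 / (32 * r ^ 3) with hκ
  have hl₀_eq : (T + 1) ^ 2 * l₀ = κ / 2 * min 1 l := by rw [hl₀, hκ]; field_simp; norm_num
  have hl₀κ : (T + 1) ^ 2 * l₀ ≤ κ / 2 :=
    hl₀_eq.trans_le (mul_le_of_le_one_right (by positivity) (min_le_left _ _))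
  have hl₀l : (T + 1) ^ 2 * l₀ ≤ κ * l := by
    rw [hl₀_eq]
    gcongr
    exacts [half_le_self (by positivity), min_le_right _ _]
  obtain ⟨Δ₁, hΔ₁, Δ₂, hΔ₂, B₁, hB₁, hcard₁, hu₁, hu₂⟩ :=
    exists_refines_card_eq_hasUniformDegree hQ hcard hQD₁ hQD₂ hcov₁ hcov₂
  obtain ⟨B', Z₁, Z₂, hB', hindex, h⟩ := exists_refines_isPrivatelyCoveredBy_of_hasUniformDegree
    (mod_cast hr : (1 : ℝ) ≤ r) (mod_cast hcard₁.le) (by positivity) hl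
    (fun j hj ↦ hB₁.nonempty hB hj) hκ ((hBl.of_refines hB₁ hl₀_nonneg).mono hl₀l) hΔ₁ hΔ₂ hu₁ hu₂
    ((hD₁.of_refines hB₁ hl₀_nonneg).mono hl₀κ) ((hD₂.of_refines hB₁ hl₀_nonneg).mono hl₀κ)
  exact ⟨B', Z₁, Z₂, hB'.trans hB₁ (by positivity), hindex ▸ hcard₁, h⟩

end BlockFamily

theorem exists_refines_isPrivatelyCoveredBy (T : ℕ) (t' : Thresholds) : ∃ t : Thresholds,
    ∀ {V : Type u} {ι : Type v} {G : SimpleGraph V} {B : BlockFamily V ι} {D₁ D₂ : Finset V}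
      {Q : ℝ}, t.IsMet G B Q → #D₁ ≤ Q ^ T → #D₂ ≤ Q ^ T →
      B.IsLinkedFrom G D₁ t.linkage → B.IsLinkedFrom G D₂ t.linkage →
      (∀ j ∈ B.index, Covers G D₁ (B.block j)) → (∀ j ∈ B.index, Covers G D₂ (B.block j)) →
      ∃ (B' : BlockFamily V ι) (Z₁ Z₂ : ι → Finset V), t'.IsMet G B' Q ∧ B'.Refines B (Q ^ 3) ∧
        (∀ j, Z₁ j ⊆ D₁ ∧ Z₂ j ⊆ D₂) ∧
        B'.IsPrivatelyCoveredBy G Z₁ ∧ B'.IsPrivatelyCoveredBy G Z₂ := by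
  have hl := t'.linkage_pos
  set r : ℕ := max 1 t'.length
  have hr : 1 ≤ r := le_max_left _ _
  let t : Thresholds :=
    { length := (T + 1) ^ 2 * r
      linkage := min 1 t'.linkage / (64 * r ^ 3 * (T + 1) ^ 2)
      scale := max t'.scale ((T + 1) ^ 2 * (2 ^ 18 * r ^ 8))
      linkage_pos := by positivity
      one_lt_scale := lt_max_of_lt_left t'.one_lt_scale }
  refine ⟨t, fun {V ι G B D₁ D₂ Q} hB hQD₁ hQD₂ hD₁ hD₂ hcov₁ hcov₂ ↦ ?_⟩
  obtain ⟨hQ, hQ'⟩ := max_le_iff.1 hB.scale_le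
  obtain ⟨B', Z₁, Z₂, hB', hcard, hlink, hZ⟩ := B.exists_refines_isPrivatelyCoveredBy_of_linkage
    hr hl hB.one_lt hB.nonempty hB.length_le rfl hB.isLinked hQD₁ hQD₂ hD₁ hD₂ hcov₁ hcov₂
  refine ⟨B', Z₁, Z₂, ⟨hQ, hcard ▸ le_max_right _ _, fun j ↦ hB'.nonempty hB.nonempty, hlink⟩,
    hB'.mono ?_, hZ⟩
  calc (T + 1) ^ 2 * (2 ^ 18 * r ^ 8 * Q ^ 2) = (T + 1) ^ 2 * (2 ^ 18 * r ^ 8) * Q ^ 2 := by ring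
    _ ≤ Q * Q ^ 2 := by gcongr
    _ = Q ^ 3 := by ring

end PrivateCovers

section Growth

variable {G : SimpleGraph V} {μ τ : ℝ}

lemma Coherent.card_sdiff_nbrsIn_lt {γ δ : ℝ} {C D : Finset V} (hG : Coherent G γ δ)
    (hDC : Disjoint D C) (hD : γ ≤ #D) : #(C \ nbrsIn G D C) < δ := by
  by_contra! h
  refine hG ⟨D, ↑(C \ nbrsIn G D C), Finset.disjoint_coe.2 (hDC.mono_right Finset.sdiff_subset),
    fun d hd c hc hdc ↦ ?_, by rwa [Set.ncard_coe_finset], by rwa [Set.ncard_coe_finset]⟩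
  obtain ⟨hcC, hcN⟩ := Finset.mem_sdiff.1 (Finset.mem_coe.1 hc)
  exact hcN (mem_nbrsIn.2 ⟨hcC, d, hd, hdc⟩)

lemma Coherent.card_lt_card_nbrsIn_add {γ δ : ℝ} {C D : Finset V} (hG : Coherent G γ δ)
    (hDC : Disjoint D C) (hD : γ ≤ #D) : (#C : ℝ) < #(nbrsIn G D C) + δ := by
  have h := hG.card_sdiff_nbrsIn_lt hDC hD
  rw [Finset.cast_card_sdiff nbrsIn_subset] at h
  linarith

lemma card_nbrsIn_union_le {X Y C : Finset V} :
    #(nbrsIn G (X ∪ Y) C) ≤ #(nbrsIn G X C) + #(nbrsIn G Y C) := by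
  refine (Finset.card_le_card fun c hc ↦ ?_).trans (Finset.card_union_le _ _)
  obtain ⟨hcC, z, hz, hzc⟩ := mem_nbrsIn.1 hc
  exact (Finset.mem_union.1 hz).elim
    (fun hz ↦ Finset.mem_union_left _ (mem_nbrsIn.2 ⟨hcC, z, hz, hzc⟩))
    (fun hz ↦ Finset.mem_union_right _ (mem_nbrsIn.2 ⟨hcC, z, hz, hzc⟩))

lemma Coherent.exists_small_forall_expands (hG : Coherent G μ μ) (hμ : 0 < μ) (hτ : 0 ≤ τ)
    {B C : Finset V} (hBC : Disjoint B C) (hC : (2 + τ) * μ ≤ #C) :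
    ∃ Bad ⊆ B, #Bad < μ ∧ ∀ X ⊆ B \ Bad, min μ (τ * #X) ≤ #(nbrsIn G X C) := by
  let P : Finset V → Prop := fun X ↦ #X < μ ∧ #(nbrsIn G X C) ≤ τ * #X
  obtain ⟨Bad, hBad, hmax⟩ := Finset.exists_max_image (B.powerset.filter P) Finset.card
    ⟨∅, Finset.mem_filter.2 ⟨Finset.empty_mem_powerset _, by simpa [P, nbrsIn] using hμ⟩⟩
  rw [Finset.mem_filter, Finset.mem_powerset] at hBad
  obtain ⟨hBadB, hBadμ, hBadN⟩ := hBad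
  refine ⟨Bad, hBadB, hBadμ, fun X hX ↦ ?_⟩
  by_contra! hcon
  obtain ⟨hXμ, hXτ⟩ := lt_min_iff.1 hcon
  have hdisj : Disjoint Bad X := (Finset.disjoint_sdiff).mono_right hX
  have hunionB : Bad ∪ X ⊆ B := Finset.union_subset hBadB (hX.trans Finset.sdiff_subset)
  have hcard : (#(Bad ∪ X) : ℝ) = #Bad + #X := mod_cast Finset.card_union_of_disjoint hdisj
  have hN : (#(nbrsIn G (Bad ∪ X) C) : ℝ) ≤ #(nbrsIn G Bad C) + #(nbrsIn G X C) :=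
    mod_cast card_nbrsIn_union_le
  rcases lt_or_ge (#(Bad ∪ X) : ℝ) μ with hsmall | hlarge
  · have hmem : Bad ∪ X ∈ B.powerset.filter P := Finset.mem_filter.2
      ⟨Finset.mem_powerset.2 hunionB, hsmall, by rw [hcard, mul_add]; linarith⟩
    have hX0 : #X = 0 := by
      have := hmax _ hmem
      rw [Finset.card_union_of_disjoint hdisj] at this
      omega
    rw [hX0, Nat.cast_zero, mul_zero] at hXτ
    exact hXτ.not_ge (by positivity)
  · have h := hG.card_lt_card_nbrsIn_add (hBC.mono_left hunionB) hlarge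
    have : τ * #Bad ≤ τ * μ := by gcongr
    linarith

/-- Successive levels `L 0, …, L k`, each covering the next, with `L i` contained in `A i`. -/
structure IsLevelsIn (G : SimpleGraph V) (A : ℕ → Finset V) (k : ℕ) (L : ℕ → Finset V) :
    Prop where
  subset : ∀ i ≤ k, L i ⊆ A i
  covers : ∀ i < k, Covers G (L i) (L (i + 1))

lemma Coherent.exists_small_forall_levels (hG : Coherent G μ μ) (hμ : 0 < μ) (hτ : 1 ≤ τ) (k : ℕ)
    {A : ℕ → Finset V} (hA : ∀ i < k, Disjoint (A i) (A (i + 1)))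
    (hcard : ∀ i ≤ k, (3 + τ) * μ ≤ #(A i)) :
    ∃ Bad : Finset V, #Bad < μ ∧ ∀ X ⊆ A 0 \ Bad, ∃ L : ℕ → Finset V, L 0 = X ∧
      IsLevelsIn G A k L ∧ min μ (τ ^ k * #X) ≤ #(L k) := by
  induction k generalizing A with
  | zero =>
    exact ⟨∅, by simpa using hμ, fun X hX ↦ ⟨fun _ ↦ X, rfl,
      ⟨fun i hi ↦ by simpa [Nat.le_zero.1 hi] using hX, by simp⟩, by simp⟩⟩
  | succ k ih =>
    obtain ⟨Bad₁, hBad₁, hlevels⟩ := ih (A := fun i ↦ A (i + 1))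
      (fun i hi ↦ hA (i + 1) (by omega)) (fun i hi ↦ hcard (i + 1) (by omega))
    have hC : (2 + τ) * μ ≤ #(A 1 \ Bad₁) := by
      have h : (#(A 1) : ℝ) - #Bad₁ ≤ #(A 1 \ Bad₁) := by
        rw [sub_le_iff_le_add]
        exact_mod_cast Finset.card_le_card_sdiff_add_card
      linarith [hcard 1 (by omega)]
    obtain ⟨Bad, -, hBad, hexp⟩ := hG.exists_small_forall_expands hμ (zero_le_one.trans hτ)
      ((hA 0 (by omega)).mono_right Finset.sdiff_subset) hC
    refine ⟨Bad, hBad, fun X hX ↦ ?_⟩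
    set N := nbrsIn G X (A 1 \ Bad₁)
    obtain ⟨L, hL0, hL, hLk⟩ := hlevels N nbrsIn_subset
    refine ⟨fun i ↦ Nat.casesOn i X L, rfl, ⟨?_, ?_⟩, le_trans ?_ hLk⟩
    · rintro (_ | i) hi
      · exact hX.trans Finset.sdiff_subset
      · exact hL.subset i (by omega)
    · rintro (_ | i) hi
      · exact fun v hv ↦ (mem_nbrsIn.1 (hL0 ▸ hv : v ∈ N)).2
      · exact hL.covers i (by omega)
    · rw [pow_succ, mul_assoc]
      refine le_min (min_le_left _ _) ?_
      rcases min_le_iff.1 (hexp X hX) with hN | hN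
      · exact (min_le_left _ _).trans (hN.trans
          (le_mul_of_one_le_left (Nat.cast_nonneg _) (one_le_pow₀ hτ)))
      · exact (min_le_right _ _).trans (by gcongr)

lemma Coherent.exists_levels_common_root (hG : Coherent G μ μ) (hμ : 0 < μ) (hτ : 1 ≤ τ) {k : ℕ}
    (hk : μ ≤ τ ^ k) {A A' : ℕ → Finset V} (h0 : A 0 = A' 0)
    (hA : ∀ i < k, Disjoint (A i) (A (i + 1))) (hA' : ∀ i < k, Disjoint (A' i) (A' (i + 1)))
    (hcard : ∀ i ≤ k, (3 + τ) * μ ≤ #(A i)) (hcard' : ∀ i ≤ k, (3 + τ) * μ ≤ #(A' i)) :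
    ∃ (y : V) (L L' : ℕ → Finset V), L 0 = {y} ∧ L' 0 = {y} ∧ IsLevelsIn G A k L ∧
      IsLevelsIn G A' k L' ∧ μ ≤ #(L k) ∧ μ ≤ #(L' k) := by
  obtain ⟨Bad, hBad, hlevels⟩ := hG.exists_small_forall_levels hμ hτ k hA hcard
  obtain ⟨Bad', hBad', hlevels'⟩ := hG.exists_small_forall_levels hμ hτ k hA' hcard'
  have hgood : (A 0 \ (Bad ∪ Bad')).Nonempty := by
    rw [Finset.sdiff_nonempty]
    intro hsub
    have : (#(A 0) : ℝ) ≤ #Bad + #Bad' :=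
      mod_cast (Finset.card_le_card hsub).trans (Finset.card_union_le _ _)
    have : μ ≤ τ * μ := le_mul_of_one_le_left hμ.le hτ
    linarith [hcard 0 k.zero_le]
  obtain ⟨y, hy⟩ := hgood
  simp only [Finset.mem_sdiff, Finset.mem_union, not_or] at hy
  obtain ⟨hyA, hyBad, hyBad'⟩ := hy
  obtain ⟨L, hL0, hL, hLk⟩ := hlevels {y} (by simp [hyA, hyBad])
  obtain ⟨L', hL'0, hL', hLk'⟩ := hlevels' {y} (by simp [← h0, hyA, hyBad'])
  simp only [Finset.card_singleton, Nat.cast_one, mul_one, min_eq_left hk] at hLk hLk'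
  exact ⟨y, L, L', hL0, hL'0, hL, hL', hLk, hLk'⟩

lemma Coherent.exists_refines_first_level (hG : Coherent G μ μ) {B : BlockFamily V ι} {k : ℕ}
    (hk : 1 ≤ k) {y : V} {L : ℕ → Finset V} (hL0 : L 0 = {y}) (hLk : μ ≤ #(L k))
    (hdisj : ∀ j ∈ B.index, Disjoint (L k) (B.block j))
    (hcard : ∀ j ∈ B.index, 4 * μ ≤ #(B.block j)) (hy : B.IsLinkedFrom G {y} (1 / 4)) :
    ∃ m, 1 ≤ m ∧ m ≤ k ∧ ∃ B' : BlockFamily V ι, B'.Refines B (2 * k) ∧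
      #B.index ≤ k * #B'.index ∧ B'.IsReachedAt G L m := by
  let C : BlockFamily V ι :=
    ⟨B.index, fun j ↦ {v ∈ nbrsIn G (L k) (B.block j) | ¬ G.Adj y v}⟩
  have hC : C.Refines B 2 := by
    refine ⟨subset_rfl, fun j _ ↦ (Finset.filter_subset _ _).trans nbrsIn_subset, fun j hj ↦ ?_⟩
    have hN := hG.card_lt_card_nbrsIn_add (hdisj j hj) hLk
    have hsplit : (#(nbrsIn G (L k) (B.block j)) : ℝ) =
        degIn G y (nbrsIn G (L k) (B.block j)) + #(C.block j) :=
      mod_cast (Finset.card_filter_add_card_filter_not _).symm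
    have hdeg : (degIn G y (nbrsIn G (L k) (B.block j)) : ℝ) ≤ degIn G y (B.block j) :=
      mod_cast degIn_mono nbrsIn_subset
    linarith [hcard j hj, hy y (Finset.mem_singleton_self y) j hj]
  let first : V → ℕ := fun v ↦ sInf {i | ∃ z ∈ L i, G.Adj z v}
  have hfirst {v : V} {j : ι} (hv : v ∈ C.block j) : (∃ z ∈ L (first v), G.Adj z v) ∧
      first v ∈ Finset.Icc 1 k := by
    obtain ⟨hvN, hyv⟩ := Finset.mem_filter.1 hv
    have hmem : ∃ z ∈ L (first v), G.Adj z v :=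
      Nat.sInf_mem (s := {i | ∃ z ∈ L i, G.Adj z v}) ⟨k, (mem_nbrsIn.1 hvN).2⟩
    refine ⟨hmem, Finset.mem_Icc.2 ⟨Nat.one_le_iff_ne_zero.2 fun h0 ↦ ?_,
      Nat.sInf_le (mem_nbrsIn.1 hvN).2⟩⟩
    rw [h0, hL0] at hmem
    simp [hyv] at hmem
  obtain ⟨m, hm, B', hB', hlen, hmono⟩ := C.exists_refines_monochromatic first
    (Finset.nonempty_Icc.2 hk) fun j _ v hv ↦ (hfirst hv).2
  rw [Nat.card_Icc, Nat.add_sub_cancel] at hB' hlen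
  refine ⟨m, (Finset.mem_Icc.1 hm).1, (Finset.mem_Icc.1 hm).2, B', hB'.trans hC zero_le_two, hlen,
    fun j hj ↦ ⟨fun v hv ↦ ?_, fun i hi z hz v hv hzv ↦ ?_⟩⟩
  · rw [← hmono j hj v hv]
    exact (hfirst (hB'.block_subset j hj hv)).1
  · rw [← hmono j hj v hv] at hi
    exact Nat.notMem_of_lt_sInf hi ⟨z, hz, hzv⟩

end Growth

section Walks

variable {G : SimpleGraph V} {q : V → ι} {u v w : V}

/-- The vertices of the walk `p` have pairwise distinct colours under `q`. -/
def IsRainbow (q : V → ι) (p : G.Walk u v) : Prop :=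
  (p.support.map q).Nodup

lemma isRainbow_iff {p : G.Walk u v} :
    IsRainbow q p ↔ p.IsPath ∧ Set.InjOn q {x | x ∈ p.support} := by
  rw [Walk.isPath_def]
  exact ⟨fun h ↦ ⟨h.of_map, List.inj_on_of_nodup_map h⟩,
    fun h ↦ h.1.map_on h.2⟩

lemma IsRainbow.cons {p : G.Walk v w} (hp : IsRainbow q p) (h : G.Adj u v)
    (hu : ∀ x ∈ p.support, q x ≠ q u) : IsRainbow q (Walk.cons h p) := by
  rw [IsRainbow, Walk.support_cons, List.map_cons, List.nodup_cons]
  exact ⟨by simpa using hu, hp⟩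

lemma IsRainbow.reverse {p : G.Walk u v} (hp : IsRainbow q p) : IsRainbow q p.reverse := by
  rw [IsRainbow, Walk.support_reverse, List.map_reverse, List.nodup_reverse]
  exact hp

lemma IsRainbow.append {p : G.Walk u v} {r : G.Walk v w} (hp : IsRainbow q p) (hr : IsRainbow q r)
    (h : ∀ x ∈ p.support, ∀ y ∈ r.support, q x = q y → y = v) : IsRainbow q (p.append r) := by
  have hnodup := hr
  rw [IsRainbow, ← r.cons_tail_support, List.map_cons, List.nodup_cons] at hnodup
  rw [IsRainbow, Walk.support_append, List.map_append, List.nodup_append]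
  refine ⟨hp, hnodup.2, ?_⟩
  simp only [List.mem_map, forall_exists_index, and_imp]
  rintro _ x hx rfl _ y hy rfl hxy
  have hyr : y ∈ r.support := List.mem_of_mem_tail hy
  exact hnodup.1 (List.mem_map.2 ⟨y, hy, by rw [h x hx y hyr hxy]⟩)

lemma isChordless_reverse {p : G.Walk u v} (hp : p.IsChordless) : p.reverse.IsChordless := by
  simpa [Walk.isChordless_iff_forall_mem_edges] using hp

lemma isChordless_append {p : G.Walk u v} {r : G.Walk v w} (hp : p.IsChordless)
    (hr : r.IsChordless) (h : ∀ x ∈ p.support, ∀ y ∈ r.support, G.Adj x y → x = v ∨ y = v) :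
    (p.append r).IsChordless := by
  have hcross : ∀ x ∈ p.support, ∀ y ∈ r.support, G.Adj x y → s(x, y) ∈ (p.append r).edges := by
    intro x hx y hy hxy
    rw [Walk.edges_append, List.mem_append]
    rcases h x hx y hy hxy with rfl | rfl
    · exact Or.inr (hr.mem_edges r.start_mem_support hy hxy)
    · exact Or.inl (hp.mem_edges hx p.end_mem_support hxy)
  rw [Walk.isChordless_iff_forall_mem_edges]
  intro x y hx hy hxy
  rw [Walk.mem_support_append_iff] at hx hy
  rcases hx with hx | hx <;> rcases hy with hy | hy
  · exact Walk.edges_append p r ▸ List.mem_append_left _ (hp.mem_edges hx hy hxy)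
  · exact hcross x hx y hy hxy
  · exact Sym2.eq_swap ▸ hcross y hy x hx hxy.symm
  · exact Walk.edges_append p r ▸ List.mem_append_right _ (hr.mem_edges hx hy hxy)

lemma isChordless_cons {p : G.Walk v w} (hp : p.IsChordless) (h : G.Adj u v)
    (hu : ∀ x ∈ p.support, G.Adj u x → x = v) : (Walk.cons h p).IsChordless := by
  refine isChordless_append (p := h.toWalk) h.isChordless_toWalk hp ?_
  simp only [h.support_toWalk, List.mem_cons, List.not_mem_nil, or_false, forall_eq_or_imp,
    forall_eq, true_or, implies_true, and_true]
  exact fun x hx hux ↦ Or.inr (hu x hx hux)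

lemma mem_edges_of_adj_of_forall_length_le {x y : V} (a : G.Walk u x) (m : G.Walk x y)
    (b : G.Walk y v) (hxy : G.Adj x y)
    (hmin : (a.append (m.append b)).length ≤ (a.append (b.cons hxy)).length) :
    s(x, y) ∈ (a.append (m.append b)).edges := by
  cases m with
  | nil => exact absurd rfl hxy.ne
  | cons h m =>
    cases m with
    | nil => simp
    | cons h' m =>
      simp only [Walk.length_append, Walk.length_cons] at hmin
      omega

lemma exists_chordless_path_support_subset (p : G.Walk u v) :
    ∃ p' : G.Walk u v, p'.IsPath ∧ p'.IsChordless ∧ p'.length ≤ p.length ∧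
      p'.support ⊆ p.support := by
  have hne : {r : G.Walk u v | r.support ⊆ p.support}.Nonempty := ⟨p, List.Subset.refl _⟩
  set r := Function.argminOn Walk.length _ hne
  have hr : r.support ⊆ p.support := Function.argminOn_mem Walk.length _ hne
  have hmin : ∀ r' : G.Walk u v, r'.support ⊆ p.support → r.bypass.length ≤ r'.length :=
    fun r' hr' ↦ r.length_bypass_le_length.trans (Function.argminOn_le Walk.length _ hr')
  have hb : r.bypass.support ⊆ p.support :=
    List.Subset.trans r.support_bypass_subset_support hr
  refine ⟨r.bypass, r.bypass_isPath, ?_, hmin p (List.Subset.refl _), hb⟩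
  generalize r.bypass = p' at hmin hb
  have hcut {x y : V} (a : G.Walk u x) (m : G.Walk x y) (b : G.Walk y v)
      (hp' : p' = a.append (m.append b)) (hxy : G.Adj x y) : s(x, y) ∈ p'.edges := by
    subst hp'
    refine mem_edges_of_adj_of_forall_length_le a m b hxy (hmin _ fun z hz ↦ hb ?_)
    simp only [Walk.mem_support_append_iff, Walk.support_cons, List.mem_cons] at hz ⊢
    rcases hz with hz | rfl | hz
    · exact Or.inl hz
    · exact Or.inl a.end_mem_support
    · exact Or.inr (Or.inr hz)
  rw [Walk.isChordless_iff_forall_mem_edges]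
  intro x y hx hy hxy
  have hsplit := p'.take_spec hx
  rw [← hsplit, Walk.mem_support_append_iff] at hy
  rcases hy with hy | hy
  · refine Sym2.eq_swap ▸ hcut ((p'.takeUntil x hx).takeUntil y hy)
      ((p'.takeUntil x hx).dropUntil y hy) (p'.dropUntil x hx) ?_ hxy.symm
    rw [Walk.append_assoc, Walk.take_spec, hsplit]
  · exact hcut (p'.takeUntil x hx) ((p'.dropUntil x hx).takeUntil y hy)
      ((p'.dropUntil x hx).dropUntil y hy) (by rw [Walk.take_spec, hsplit]) hxy

lemma IsRainbow.exists_chordless {p : G.Walk u v} (hp : IsRainbow q p) :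
    ∃ p' : G.Walk u v, IsRainbow q p' ∧ p'.IsChordless ∧ p'.length ≤ p.length ∧
      p'.support ⊆ p.support := by
  obtain ⟨p', hpath, hchord, hlen, hsub⟩ := exists_chordless_path_support_subset p
  exact ⟨p', isRainbow_iff.2 ⟨hpath, (isRainbow_iff.1 hp).2.mono hsub⟩, hchord, hlen, hsub⟩

end Walks

section Fans

variable {G : SimpleGraph V} {q : V → ι} {B₀ B B' : BlockFamily V ι} {w y : V} {ρ : ℝ}
  {S S' : Finset ℕ} {P P' : ι → Set V}

/-- The vertices in those blocks of `B₀` whose indices do not occur in `B`. -/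
def BlockFamily.discarded (B₀ B : BlockFamily V ι) : Set V :=
  {x | ∃ i ∈ B₀.index, i ∉ B.index ∧ x ∈ B₀.block i}

lemma BlockFamily.IsColouredBy.notMem_index {x : V} (hq : B₀.IsColouredBy q)
    (hx : x ∈ B₀.discarded B) : q x ∉ B.index := by
  obtain ⟨i, hi, hiB, hxi⟩ := hx
  rwa [hq i hi x hxi]

lemma BlockFamily.IsColouredBy.mem_index {x : V} (hq : B₀.IsColouredBy q)
    (hx : x ∈ B₀.discarded B) : q x ∈ B₀.index ∧ x ∈ B₀.block (q x) := by
  obtain ⟨i, hi, -, hxi⟩ := hx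
  rw [hq i hi x hxi]
  exact ⟨hi, hxi⟩

lemma BlockFamily.Refines.discarded_subset (h : B'.Refines B ρ) :
    B₀.discarded B ⊆ B₀.discarded B' :=
  fun _ ⟨i, hi, hiB, hxi⟩ ↦ ⟨i, hi, fun hiB' ↦ hiB (h.index_subset hiB'), hxi⟩

lemma BlockFamily.Refines.discarded_subset_left (h : B.Refines B₀ ρ) :
    B.discarded B' ⊆ B₀.discarded B' :=
  fun _ ⟨i, hi, hiB, hxi⟩ ↦ ⟨i, h.index_subset hi, hiB, h.block_subset i hi hxi⟩

/-- Every vertex `c` of the `j`-th block of `B` is joined to the root `w` by a rainbow chordless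
path with a length in `S`, whose vertices other than `c` belong to `P j`. These sets `P j` use only
blocks of `B₀` that are no longer present in `B`, and are anticomplete to all blocks of `B` but the
`j`-th. -/
structure IsFan (G : SimpleGraph V) (q : V → ι) (B₀ B : BlockFamily V ι) (w : V) (S : Finset ℕ)
    (P : ι → Set V) : Prop where
  exists_walk : ∀ j ∈ B.index, ∀ c ∈ B.block j, ∃ p : G.Walk c w, p.length ∈ S ∧
    IsRainbow q p ∧ p.IsChordless ∧ ∀ x ∈ p.support, x = c ∨ x ∈ P j
  subset_discarded : ∀ j ∈ B.index, P j ⊆ B₀.discarded B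
  root_mem : w ∈ B₀.discarded B
  anticomplete : ∀ i ∈ B.index, ∀ j ∈ B.index, i ≠ j → Anticomplete G (P i) (B.block j)

lemma IsFan.of_refines (h : IsFan G q B₀ B w S P) (hB : B'.Refines B ρ) :
    IsFan G q B₀ B' w S P where
  exists_walk j hj c hc := h.exists_walk j (hB.index_subset hj) c (hB.block_subset j hj hc)
  subset_discarded j hj := (h.subset_discarded j (hB.index_subset hj)).trans hB.discarded_subset
  root_mem := hB.discarded_subset h.root_mem
  anticomplete i hi j hj hij x hx y hy :=
    h.anticomplete i (hB.index_subset hi) j (hB.index_subset hj) hij x hx y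
      (hB.block_subset j hj hy)

lemma IsFan.of_refines_left (h : IsFan G q B B' w S P) (hB : B.Refines B₀ ρ) :
    IsFan G q B₀ B' w S P :=
  { h with
    subset_discarded := fun j hj ↦ (h.subset_discarded j hj).trans hB.discarded_subset_left
    root_mem := hB.discarded_subset_left h.root_mem }

lemma IsFan.mono (h : IsFan G q B₀ B w S P) (hS : S ⊆ S') : IsFan G q B₀ B w S' P :=
  { h with
    exists_walk := fun j hj c hc ↦
      (h.exists_walk j hj c hc).imp fun _ ⟨hpS, hp⟩ ↦ ⟨hS hpS, hp⟩ }

lemma IsFan.exists_refines_singleton (h : IsFan G q B₀ B w S P) (hq : B.IsColouredBy q)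
    (hS : S.Nonempty) : ∃ n ∈ S, ∃ B' : BlockFamily V ι, B'.Refines B #S ∧
      #B.index ≤ #S * #B'.index ∧ IsFan G q B₀ B' w {n} P := by
  let lengths : V → Set ℕ := fun c ↦ {n | n ∈ S ∧ ∃ p : G.Walk c w, p.length = n ∧
    IsRainbow q p ∧ p.IsChordless ∧ ∀ x ∈ p.support, x = c ∨ x ∈ P (q c)}
  have hlengths : ∀ j ∈ B.index, ∀ c ∈ B.block j, sInf (lengths c) ∈ lengths c := by
    intro j hj c hc
    obtain ⟨p, hpS, hp⟩ := h.exists_walk j hj c hc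
    rw [← hq j hj c hc] at hp
    exact Nat.sInf_mem ⟨p.length, hpS, p, rfl, hp⟩
  obtain ⟨n, hn, B', hB', hcard, hmono⟩ := B.exists_refines_monochromatic
    (fun c ↦ sInf (lengths c)) hS fun j hj c hc ↦ (hlengths j hj c hc).1
  refine ⟨n, hn, B', hB', hcard, { h.of_refines hB' with exists_walk := fun j hj c hc ↦ ?_ }⟩
  have hcB := hB'.block_subset j hj hc
  obtain ⟨-, p, hp⟩ := hlengths j (hB'.index_subset hj) c hcB
  rw [hmono j hj c hc, hq j (hB'.index_subset hj) c hcB] at hp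
  exact ⟨p, Finset.mem_singleton.2 hp.1, hp.2⟩

lemma IsFan.root_mem_block (h : IsFan G q B₀ B w S P) (hq : B₀.IsColouredBy q)
    (hB : B.Refines B₀ ρ) {j : ι} (hj : j ∈ B.index) (hne : (B.block j).Nonempty) : w ∈ P j := by
  obtain ⟨c, hc⟩ := hne
  obtain ⟨p, -, -, -, hp⟩ := h.exists_walk j hj c hc
  refine (hp w p.end_mem_support).resolve_left fun hwc ↦ hq.notMem_index h.root_mem ?_
  rwa [hwc, hq.of_refines hB j hj c hc]

/-- Two fans with a common root `w` whose paths share no colour except at `w`. -/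
structure IsFanPair (G : SimpleGraph V) (q : V → ι) (B₀ B : BlockFamily V ι) (w : V)
    (S S' : Finset ℕ) (P P' : ι → Set V) : Prop where
  left : IsFan G q B₀ B w S P
  right : IsFan G q B₀ B w S' P'
  eq_root : ∀ i ∈ B.index, ∀ j ∈ B.index, ∀ x ∈ P i, ∀ x' ∈ P' j, q x = q x' → x = w ∧ x' = w

lemma IsFanPair.of_refines (h : IsFanPair G q B₀ B w S S' P P') (hB : B'.Refines B ρ) :
    IsFanPair G q B₀ B' w S S' P P' where
  left := h.left.of_refines hB
  right := h.right.of_refines hB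
  eq_root i hi j hj := h.eq_root i (hB.index_subset hi) j (hB.index_subset hj)

lemma IsFanPair.eq_root_left (h : IsFanPair G q B₀ B w S S' P P') (hq : B₀.IsColouredBy q)
    (hB : B.Refines B₀ ρ) {j : ι} (hj : j ∈ B.index) (hne : (B.block j).Nonempty) {x : V}
    (hx : x ∈ P j) (hxw : q x = q w) : x = w :=
  (h.eq_root j hj j hj x hx w (h.right.root_mem_block hq hB hj hne) hxw).1

/-- A fan pair in which, moreover, the paths of the two fans are joined by no edges except at the
root. -/
structure IsBiFan (G : SimpleGraph V) (q : V → ι) (B₀ B : BlockFamily V ι) (w : V)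
    (S S' : Finset ℕ) (P P' : ι → Set V) : Prop extends IsFanPair G q B₀ B w S S' P P' where
  eq_root_of_adj : ∀ i ∈ B.index, ∀ j ∈ B.index, ∀ x ∈ P i, ∀ x' ∈ P' j, G.Adj x x' →
    x = w ∨ x' = w

lemma IsBiFan.of_refines (h : IsBiFan G q B₀ B w S S' P P') (hB : B'.Refines B ρ) :
    IsBiFan G q B₀ B' w S S' P P' where
  toIsFanPair := h.toIsFanPair.of_refines hB
  eq_root_of_adj i hi j hj := h.eq_root_of_adj i (hB.index_subset hi) j (hB.index_subset hj)

/-- Levels as in `IsLevelsIn` growing from the single vertex `y`, the `i`-th one contained in the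
block of `B` with index `e i`; these blocks are distinct and their indices avoid `J`. -/
structure IsRainbowLevels (G : SimpleGraph V) (B : BlockFamily V ι) (J : Finset ι) (y : V) (k : ℕ)
    (e : ℕ → ι) (L : ℕ → Finset V) : Prop extends IsLevelsIn G (fun i ↦ B.block (e i)) k L where
  zero : L 0 = {y}
  index_mem : ∀ i ≤ k, e i ∈ B.index \ J
  injOn : Set.InjOn e (Set.Iic k)

namespace IsRainbowLevels

variable {J : Finset ι} {k m : ℕ} {e : ℕ → ι} {L : ℕ → Finset V}

lemma mono (h : IsRainbowLevels G B J y k e L) (hm : m ≤ k) : IsRainbowLevels G B J y m e L where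
  subset i hi := h.subset i (hi.trans hm)
  covers i hi := h.covers i (hi.trans_le hm)
  zero := h.zero
  index_mem i hi := h.index_mem i (hi.trans hm)
  injOn := h.injOn.mono (Set.Iic_subset_Iic.2 hm)

lemma colour_eq (h : IsRainbowLevels G B J y k e L) (hq : B.IsColouredBy q) {i : ℕ} (hi : i ≤ k)
    {v : V} (hv : v ∈ L i) : q v = e i :=
  hq _ (Finset.mem_sdiff.1 (h.index_mem i hi)).1 v (h.subset i hi hv)

lemma exists_walk (h : IsRainbowLevels G B J y k e L) (hq : B.IsColouredBy q) {i : ℕ} (hi : i ≤ k)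
    {v : V} (hv : v ∈ L i) : ∃ p : G.Walk v y, p.length = i ∧ IsRainbow q p ∧
      ∀ x ∈ p.support, x = v ∨ ∃ i' < i, x ∈ L i' := by
  induction i generalizing v with
  | zero =>
    obtain rfl : v = y := by simpa [h.zero] using hv
    exact ⟨Walk.nil, rfl, by simp [IsRainbow], by simp⟩
  | succ i ih =>
    obtain ⟨z, hz, hzv⟩ := h.covers i (by omega) v hv
    obtain ⟨p, hlen, hrainbow, hp⟩ := ih (by omega) hz
    have hp' : ∀ x ∈ p.support, ∃ i' < i + 1, x ∈ L i' := fun x hx ↦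
      (hp x hx).elim (fun hxz ↦ ⟨i, i.lt_succ_self, hxz ▸ hz⟩)
        fun ⟨i', hi', hx⟩ ↦ ⟨i', hi'.trans i.lt_succ_self, hx⟩
    refine ⟨Walk.cons hzv.symm p, by simp [hlen], hrainbow.cons _ fun x hx hxv ↦ ?_, ?_⟩
    · obtain ⟨i', hi', hxi'⟩ := hp' x hx
      rw [h.colour_eq hq (by omega) hxi', h.colour_eq hq hi hv] at hxv
      exact hi'.ne (h.injOn (Set.mem_Iic.2 (by omega)) (Set.mem_Iic.2 hi) hxv)
    · simpa only [Walk.support_cons, List.mem_cons, forall_eq_or_imp, true_or, true_and]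
        using fun x hx ↦ Or.inr (hp' x hx)

lemma isFan (h : IsRainbowLevels G B J y m e L) (hq : B.IsColouredBy q) (hB : B'.Refines B ρ)
    (hJ : B'.index ⊆ J) {Z : ι → Finset V} (hZ : ∀ j, Z j ⊆ L m)
    (hcover : B'.IsPrivatelyCoveredBy G Z) (hreach : B'.IsReachedAt G L m) :
    IsFan G q B B' y (Finset.Iic (m + 1)) fun j ↦ Z j ∪ {x | ∃ i < m, x ∈ L i} := by
  have hdisc {i : ℕ} (hi : i ≤ m) : ↑(L i) ⊆ B.discarded B' := fun x hx ↦
    have hei := Finset.mem_sdiff.1 (h.index_mem i hi)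
    ⟨e i, hei.1, fun hiB' ↦ hei.2 (hJ hiB'), h.subset i hi hx⟩
  have hsub : ∀ j, (Z j ∪ {x | ∃ i < m, x ∈ L i} : Set V) ⊆ B.discarded B' := by
    rintro j x (hx | ⟨i, hi, hx⟩)
    · exact hdisc le_rfl (hZ j hx)
    · exact hdisc hi.le hx
  refine ⟨fun j hj c hc ↦ ?_, fun j _ ↦ hsub j, hdisc (Nat.zero_le m) (by simp [h.zero]), ?_⟩
  · obtain ⟨z, hz, hzc⟩ := hcover.1 j hj c hc
    obtain ⟨p, hlen, hrainbow, hp⟩ := h.exists_walk hq le_rfl (hZ j hz)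
    have hp' : ∀ x ∈ p.support, x ∈ (Z j ∪ {x | ∃ i < m, x ∈ L i} : Set V) := fun x hx ↦
      (hp x hx).imp_left fun hxz ↦ by rwa [hxz]
    have hcons : IsRainbow q (Walk.cons hzc.symm p) := hrainbow.cons _ fun x hx hxc ↦ by
      refine hq.notMem_index (hsub j (hp' x hx)) ?_
      rwa [hxc, hq.of_refines hB j hj c hc]
    obtain ⟨p', hrainbow', hchord, hlen', hsupp⟩ := hcons.exists_chordless
    refine ⟨p', Finset.mem_Iic.2 (by simpa [hlen] using hlen'), hrainbow', hchord, fun x hx ↦ ?_⟩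
    have hx' := hsupp hx
    rw [Walk.support_cons, List.mem_cons] at hx'
    exact hx'.imp id (hp' x)
  · exact fun i hi j hj hij ↦ anticomplete_union_left.2
      ⟨hcover.2 i hi j hj hij, fun x ⟨i', hi', hx⟩ ↦ (hreach j hj).2 i' hi' x hx⟩

end IsRainbowLevels

end Fans

section FanPairs

variable {G : SimpleGraph V} {q : V → ι} {μ τ : ℝ} {k : ℕ}

namespace BlockFamily

variable {B B' : BlockFamily V ι} {l ρ : ℝ}

lemma IsColouredBy.disjoint (hq : B.IsColouredBy q) {i j : ι} (hi : i ∈ B.index) (hj : j ∈ B.index)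
    (hij : i ≠ j) : Disjoint (B.block i) (B.block j) :=
  Finset.disjoint_left.2 fun v hvi hvj ↦ hij ((hq i hi v hvi).symm.trans (hq j hj v hvj))

lemma refines_restrict {J : Finset ι} (hJ : J ⊆ B.index) : Refines ⟨J, B.block⟩ B 1 :=
  ⟨hJ, fun _ _ ↦ subset_rfl, fun _ _ ↦ (one_mul _).ge⟩

lemma IsLinked.isLinkedFrom_of_refines (hl : B.IsLinked G l) (h : B'.Refines B ρ) (hl0 : 0 ≤ l)
    {D : Finset V} {i : ι} (hi : i ∈ B.index) (hiB' : i ∉ B'.index) (hD : D ⊆ B.block i) :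
    B'.IsLinkedFrom G D (ρ * l) := fun d hd j hj ↦
  h.degIn_le hl0 hj (hl i hi j (h.index_subset hj) (fun hij ↦ hiB' (hij ▸ hj)) d (hD hd))

end BlockFamily

lemma IsRainbowLevels.isLinkedFrom {B B' : BlockFamily V ι} {J : Finset ι} {y : V} {m : ℕ}
    {e : ℕ → ι} {L : ℕ → Finset V} {l ρ : ℝ} (h : IsRainbowLevels G B J y k e L)
    (hl : B.IsLinked G l) (hB : B'.Refines B ρ) (hJ : B'.index ⊆ J) (hl0 : 0 ≤ l) (hm : m ≤ k) :
    B'.IsLinkedFrom G (L m) (ρ * l) :=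
  have hem := Finset.mem_sdiff.1 (h.index_mem m hm)
  hl.isLinkedFrom_of_refines hB hl0 hem.1 (fun hi ↦ hem.2 (hJ hi)) (h.subset m hm)

lemma exists_injOn_injOn_common_zero {s : Finset ι} (hk : 2 * k + 1 ≤ #s) :
    ∃ J ⊆ s, #s ≤ #J + (2 * k + 1) ∧ ∃ e e' : ℕ → ι, e 0 = e' 0 ∧
      (∀ i ≤ k, e i ∈ s \ J) ∧ (∀ i ≤ k, e' i ∈ s \ J) ∧
      Set.InjOn e (Set.Iic k) ∧ Set.InjOn e' (Set.Iic k) ∧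
      ∀ i ≤ k, ∀ i' ≤ k, e i = e' i' → i = 0 ∧ i' = 0 := by
  have : Nonempty ι := (Finset.card_pos.1 (Nat.zero_lt_of_lt hk)).to_type
  obtain ⟨e, hes, he⟩ := (Finset.range (2 * k + 1)).finite_toSet.exists_injOn_of_encard_le
    (t := (s : Set ι)) (by
      rw [Set.encard_coe_eq_coe_finsetCard, Set.encard_coe_eq_coe_finsetCard, Finset.card_range]
      exact_mod_cast hk)
  set R := (Finset.range (2 * k + 1)).image e
  have hmem : ∀ i < 2 * k + 1, e i ∈ s \ (s \ R) := fun i hi ↦ by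
    rw [sdiff_sdiff_right_self]
    exact Finset.mem_inter.2 ⟨hes (by simpa using hi),
      Finset.mem_image_of_mem e (Finset.mem_range.2 hi)⟩
  have hinj : ∀ i < 2 * k + 1, ∀ i' < 2 * k + 1, e i = e i' → i = i' :=
    fun i hi i' hi' ↦ he (by simpa using hi) (by simpa using hi')
  let shift : ℕ → ℕ := fun i ↦ if i = 0 then 0 else k + i
  have hshift : ∀ i ≤ k, shift i < 2 * k + 1 := fun i hi ↦ by grind
  refine ⟨s \ R, Finset.sdiff_subset, ?_, e, e ∘ shift, by simp [shift],
    fun i hi ↦ hmem i (by omega), fun i hi ↦ hmem _ (hshift i hi), fun i hi i' hi' ↦ ?_,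
    fun i hi i' hi' h ↦ ?_, fun i hi i' hi' h ↦ ?_⟩
  · have hR : #R ≤ 2 * k + 1 := Finset.card_image_le.trans_eq (Finset.card_range _)
    exact (Finset.card_le_card_sdiff_add_card).trans (by gcongr)
  · rw [Set.mem_Iic] at hi hi'
    exact hinj i (by omega) i' (by omega)
  · have := hinj _ (hshift i hi) _ (hshift i' hi') h
    grind
  · have := hinj i (by omega) _ (hshift i' hi') h
    grind

lemma Coherent.exists_rainbowLevels_common_root (hG : Coherent G μ μ) (hμ : 0 < μ) (hτ : 1 ≤ τ)
    (hk : μ ≤ τ ^ k) {B : BlockFamily V ι} (hq : B.IsColouredBy q) (hlen : 2 * k + 1 ≤ #B.index)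
    (hcard : ∀ j ∈ B.index, (3 + τ) * μ ≤ #(B.block j)) :
    ∃ J ⊆ B.index, #B.index ≤ #J + (2 * k + 1) ∧ ∃ (y : V) (e e' : ℕ → ι) (L L' : ℕ → Finset V),
      IsRainbowLevels G B J y k e L ∧ IsRainbowLevels G B J y k e' L' ∧
      (∀ i ≤ k, ∀ i' ≤ k, e i = e' i' → i = 0 ∧ i' = 0) ∧ μ ≤ #(L k) ∧ μ ≤ #(L' k) := by
  obtain ⟨J, hJ, hcardJ, e, e', h0, he, he', hinj, hinj', hne⟩ :=
    exists_injOn_injOn_common_zero hlen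
  have hmem {i : ι} (hi : i ∈ B.index \ J) : i ∈ B.index := (Finset.mem_sdiff.1 hi).1
  have hdisj {f : ℕ → ι} (hf : ∀ i ≤ k, f i ∈ B.index \ J) (hinj : Set.InjOn f (Set.Iic k)) :
      ∀ i < k, Disjoint (B.block (f i)) (B.block (f (i + 1))) := fun i hi ↦
    hq.disjoint (hmem (hf i hi.le)) (hmem (hf _ hi)) fun h ↦
      i.lt_succ_self.ne (hinj (Set.mem_Iic.2 hi.le) (Set.mem_Iic.2 hi) h)
  obtain ⟨y, L, L', hL0, hL0', hL, hL', hLk, hLk'⟩ := hG.exists_levels_common_root hμ hτ hk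
    (congrArg B.block h0) (hdisj he hinj) (hdisj he' hinj') (fun i hi ↦ hcard _ (hmem (he i hi)))
    fun i hi ↦ hcard _ (hmem (he' i hi))
  exact ⟨J, hJ, hcardJ, y, e, e', L, L', ⟨hL, hL0, he, hinj⟩, ⟨hL', hL0', he', hinj'⟩, hne, hLk,
    hLk'⟩

lemma Coherent.exists_refines_two_first_levels (hG : Coherent G μ μ) {B : BlockFamily V ι}
    (hk : 1 ≤ k) {y : V} {L L' : ℕ → Finset V} (hL0 : L 0 = {y}) (hL0' : L' 0 = {y})
    (hLk : μ ≤ #(L k)) (hLk' : μ ≤ #(L' k))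
    (hdisj : ∀ j ∈ B.index, Disjoint (L k) (B.block j))
    (hdisj' : ∀ j ∈ B.index, Disjoint (L' k) (B.block j)) (hμ : 0 ≤ μ)
    (hcard : ∀ j ∈ B.index, 8 * k * μ ≤ #(B.block j))
    (hy : B.IsLinkedFrom G {y} (1 / (8 * k))) :
    ∃ m ≤ k, ∃ m' ≤ k, ∃ B' : BlockFamily V ι, B'.Refines B (4 * k ^ 2) ∧
      #B.index ≤ k * (k * #B'.index) ∧ B'.IsReachedAt G L m ∧ B'.IsReachedAt G L' m' := by
  have hk' : (1 : ℝ) ≤ k := mod_cast hk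
  obtain ⟨m, -, hm, B₁, hB₁, hcard₁, h₁⟩ := hG.exists_refines_first_level hk hL0 hLk hdisj
    (fun j hj ↦ (by nlinarith : 4 * μ ≤ 8 * k * μ).trans (hcard j hj))
    (hy.mono (one_div_le_one_div_of_le (by norm_num) (by linarith)))
  obtain ⟨m', -, hm', B₂, hB₂, hcard₂, h₂⟩ := hG.exists_refines_first_level hk hL0' hLk'
    (fun j hj ↦ (hdisj' j (hB₁.index_subset hj)).mono_right (hB₁.block_subset j hj))
    (fun j hj ↦ le_of_mul_le_mul_left (a := 2 * (k : ℝ)) (by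
      linarith [hcard j (hB₁.index_subset hj), hB₁.card_le j hj]) (by positivity))
    ((hy.of_refines hB₁ (by positivity)).mono (by field_simp; norm_num))
  exact ⟨m, hm, m', hm', B₂, (hB₂.trans hB₁ (by positivity)).mono (by linarith),
    hcard₁.trans (Nat.mul_le_mul_left k hcard₂), h₁.of_refines hB₂, h₂⟩

lemma Coherent.exists_refines_rainbowLevels_pair {B : BlockFamily V ι} {l : ℝ}
    (hG : Coherent G μ μ) (hμ : 0 < μ) (hτ : 1 ≤ τ) (hk : 1 ≤ k) (hμτ : μ ≤ τ ^ k)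
    (hq : B.IsColouredBy q) (hlen : 2 * k + 1 ≤ #B.index) (hl0 : 0 ≤ l) (hl : l ≤ 1 / (8 * k))
    (hlink : B.IsLinked G l) (hcard : ∀ j ∈ B.index, (3 + τ) * μ ≤ #(B.block j))
    (hcard' : ∀ j ∈ B.index, 8 * k * μ ≤ #(B.block j)) :
    ∃ (B' : BlockFamily V ι) (J : Finset ι) (y : V) (e e' : ℕ → ι) (L L' : ℕ → Finset V) (m m' : ℕ),
      B'.Refines B (4 * k ^ 2) ∧ B'.index ⊆ J ∧
      #B.index ≤ k * (k * #B'.index) + (2 * k + 1) ∧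
      IsRainbowLevels G B J y k e L ∧ IsRainbowLevels G B J y k e' L' ∧
      (∀ i ≤ k, ∀ i' ≤ k, e i = e' i' → i = 0 ∧ i' = 0) ∧ m ≤ k ∧ m' ≤ k ∧
      B'.IsReachedAt G L m ∧ B'.IsReachedAt G L' m' := by
  obtain ⟨J, hJ, hcardJ, y, e, e', L, L', h, h', hne, hLk, hLk'⟩ :=
    hG.exists_rainbowLevels_common_root hμ hτ hμτ hq hlen hcard
  have hdisj {f : ℕ → ι} {M : ℕ → Finset V} (hM : IsRainbowLevels G B J y k f M) :
      ∀ j ∈ J, Disjoint (M k) (B.block j) := fun j hj ↦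
    have hf := Finset.mem_sdiff.1 (hM.index_mem k le_rfl)
    (hq.disjoint hf.1 (hJ hj) fun hi ↦ hf.2 (hi ▸ hj)).mono_left (hM.subset k le_rfl)
  have hBJ := B.refines_restrict hJ
  have hy := h.isLinkedFrom hlink hBJ subset_rfl hl0 (Nat.zero_le k)
  rw [h.zero, one_mul] at hy
  obtain ⟨m, hm, m', hm', B', hB', hcard'', hreach, hreach'⟩ :=
    hG.exists_refines_two_first_levels (B := ⟨J, B.block⟩) hk h.zero h'.zero hLk hLk' (hdisj h)
      (hdisj h') hμ.le (fun j hj ↦ hcard' j (hJ hj)) (hy.mono hl)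
  refine ⟨B', J, y, e, e', L, L', m, m', (hB'.trans hBJ zero_le_one).mono (one_mul _).le,
    hB'.index_subset, hcardJ.trans (by gcongr), h, h', hne, hm, hm', hreach, hreach'⟩

lemma IsRainbowLevels.isFanPair {B B' : BlockFamily V ι} {J : Finset ι} {y : V} {e e' : ℕ → ι}
    {L L' : ℕ → Finset V} {Z Z' : ι → Finset V} {m m' : ℕ} {ρ : ℝ}
    (h : IsRainbowLevels G B J y k e L) (h' : IsRainbowLevels G B J y k e' L')
    (hne : ∀ i ≤ k, ∀ i' ≤ k, e i = e' i' → i = 0 ∧ i' = 0) (hq : B.IsColouredBy q)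
    (hB : B'.Refines B ρ) (hJ : B'.index ⊆ J) (hm : m ≤ k) (hm' : m' ≤ k)
    (hZ : ∀ j, Z j ⊆ L m ∧ Z' j ⊆ L' m') (hcov : B'.IsPrivatelyCoveredBy G Z)
    (hcov' : B'.IsPrivatelyCoveredBy G Z')
    (hreach : B'.IsReachedAt G L m) (hreach' : B'.IsReachedAt G L' m') :
    IsFanPair G q B B' y (Finset.Iic (k + 1)) (Finset.Iic (k + 1))
      (fun j ↦ Z j ∪ {x | ∃ i < m, x ∈ L i}) (fun j ↦ Z' j ∪ {x | ∃ i < m', x ∈ L' i}) where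
  left := ((h.mono hm).isFan hq hB hJ (fun j ↦ (hZ j).1) hcov hreach).mono
    (Finset.Iic_subset_Iic.2 (by omega))
  right := ((h'.mono hm').isFan hq hB hJ (fun j ↦ (hZ j).2) hcov' hreach').mono
    (Finset.Iic_subset_Iic.2 (by omega))
  eq_root i _ j _ x hx x' hx' hxx' := by
    obtain ⟨a, ha, hxa⟩ : ∃ a ≤ k, x ∈ L a := hx.elim (fun hx ↦ ⟨m, hm, (hZ i).1 hx⟩)
      fun ⟨a, ha, hx⟩ ↦ ⟨a, by omega, hx⟩
    obtain ⟨b, hb, hxb⟩ : ∃ b ≤ k, x' ∈ L' b := hx'.elim (fun hx ↦ ⟨m', hm', (hZ j).2 hx⟩)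
      fun ⟨b, hb, hx⟩ ↦ ⟨b, by omega, hx⟩
    rw [h.colour_eq hq ha hxa, h'.colour_eq hq hb hxb] at hxx'
    obtain ⟨rfl, rfl⟩ := hne a ha b hb hxx'
    rw [h.zero] at hxa
    rw [h'.zero] at hxb
    exact ⟨Finset.mem_singleton.1 hxa, Finset.mem_singleton.1 hxb⟩

lemma three_add_mul_le_and_eight_mul_le {τ μ Q x κ : ℝ} (hτ : 1 ≤ τ) (hμ : 0 ≤ μ) (hκ : 1 ≤ κ)
    (hQ : 4 * κ ^ 2 ≤ Q) (h : 4 * (1 + τ) * μ * Q ≤ x) :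
    (3 + τ) * μ ≤ x ∧ 8 * κ * μ ≤ x := by
  have hQ' : (1 + τ) * μ * (4 * κ) ≤ (1 + τ) * μ * Q := by gcongr; nlinarith
  have := mul_le_mul_of_nonneg_right hτ hμ
  constructor <;> nlinarith

lemma IsRainbowLevels.card_le {B : BlockFamily V ι} {J : Finset ι} {y : V} {e : ℕ → ι}
    {L : ℕ → Finset V} {s : ℝ} (h : IsRainbowLevels G B J y k e L)
    (hB : ∀ j ∈ B.index, #(B.block j) ≤ s) {i : ℕ} (hi : i ≤ k) : #(L i) ≤ s :=
  (Nat.cast_le.2 (Finset.card_le_card (h.subset i hi))).trans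
    (hB _ (Finset.mem_sdiff.1 (h.index_mem i hi)).1)

theorem exists_refines_isFanPair (T : ℕ) (hk : 1 ≤ k) (t' : Thresholds) : ∃ t : Thresholds,
    ∀ {V : Type u} {ι : Type v} {G : SimpleGraph V} {q : V → ι} {B : BlockFamily V ι} {Q μ τ : ℝ},
      t.IsMet G B Q → B.IsColouredBy q → Coherent G μ μ → 0 < μ → 1 ≤ τ → μ ≤ τ ^ k →
      (∀ j ∈ B.index, #(B.block j) ≤ Q ^ T) →
      (∀ j ∈ B.index, 4 * (1 + τ) * μ * Q ≤ #(B.block j)) →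
      ∃ (B' : BlockFamily V ι) (y : V) (P P' : ι → Set V), t'.IsMet G B' Q ∧
        B'.Refines B (Q ^ 4) ∧
        IsFanPair G q B B' y (Finset.Iic (k + 1)) (Finset.Iic (k + 1)) P P' := by
  obtain ⟨t₃, ht₃⟩ := exists_refines_isPrivatelyCoveredBy.{u, v} T t'
  have hk' : (1 : ℝ) ≤ k := mod_cast hk
  have hl₃ := t₃.linkage_pos
  let t : Thresholds :=
    { length := k * (k * t₃.length) + (2 * k + 1)
      linkage := min (t₃.linkage / (4 * k ^ 2)) (1 / (8 * k))
      scale := max t₃.scale (4 * k ^ 2)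
      linkage_pos := by positivity
      one_lt_scale := lt_max_of_lt_left t₃.one_lt_scale }
  refine ⟨t, fun {V ι G q B Q μ τ} hB hq hG hμ hτ hμτ hQT hcard ↦ ?_⟩
  have hQk : 4 * (k : ℝ) ^ 2 ≤ Q := le_of_max_le_right hB.scale_le
  have hQ : 1 < Q := hB.one_lt
  have hlink : 4 * k ^ 2 * t.linkage ≤ t₃.linkage := by
    rw [← le_div_iff₀' (by positivity)]
    exact min_le_left _ _
  have hsize {j : ι} (hj : j ∈ B.index) := three_add_mul_le_and_eight_mul_le hτ hμ.le hk' hQk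
    (hcard j hj)
  obtain ⟨B₂, J, y, e, e', L, L', m, m', hB₂, hJ, hcard₂, h, h', hne, hm, hm', hL, hL'⟩ :=
    hG.exists_refines_rainbowLevels_pair hμ hτ hk hμτ hq (le_of_add_le_right hB.length_le)
      t.linkage_pos.le (min_le_right _ _) hB.isLinked (fun j hj ↦ (hsize hj).1)
      fun j hj ↦ (hsize hj).2
  have hlen : t₃.length ≤ #B₂.index := by
    have := Nat.le_of_add_le_add_right (hB.length_le.trans hcard₂)
    exact Nat.le_of_mul_le_mul_left (Nat.le_of_mul_le_mul_left this hk) hk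
  have hlinked {f : ℕ → ι} {M : ℕ → Finset V} (hM : IsRainbowLevels G B J y k f M) {i : ℕ}
      (hi : i ≤ k) : B₂.IsLinkedFrom G (M i) t₃.linkage :=
    (hM.isLinkedFrom hB.isLinked hB₂ hJ t.linkage_pos.le hi).mono hlink
  obtain ⟨B₃, Z, Z', hB₃, hB₃₂, hZ, hcov, hcov'⟩ := ht₃
    (hB.of_refines hB₂ (le_max_left _ _) hlink hlen) (h.card_le hQT hm) (h'.card_le hQT hm')
    (hlinked h hm) (hlinked h' hm') (fun j hj ↦ (hL j hj).1) (fun j hj ↦ (hL' j hj).1)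
  have hB₃B : B₃.Refines B (Q ^ 4) := (hB₃₂.trans hB₂ (by positivity)).mono <| by
    rw [pow_succ' Q 3]
    gcongr
  exact ⟨B₃, y, _, _, hB₃, hB₃B, h.isFanPair h' hne hq hB₃B (hB₃₂.index_subset.trans hJ) hm hm' hZ
    hcov hcov' (hL.of_refines hB₃₂) (hL'.of_refines hB₃₂)⟩

end FanPairs

section BiFans

variable {G : SimpleGraph V} {q : V → ι} {B₀ B B₁ B' : BlockFamily V ι} {w y : V} {ρ ρ' : ℝ}
  {S : Finset ℕ} {P R U U₁ U₂ U' : ι → Set V}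

lemma IsFanPair.exists_walk_through {k l : ℕ} {j : ι} {c : V}
    (h : IsFanPair G q B₀ B y (Finset.Iic k) (Finset.Iic l) U₁ U₂) (hq : B₀.IsColouredBy q)
    (hB : B.Refines B₀ ρ) (hj : j ∈ B.index) (hc : c ∈ B.block j) (hqw : q w ∈ B.index)
    (hw : w ∈ B.block (q w)) (hjw : j ≠ q w) :
    ∃ p : G.Walk c w, p.length ∈ Finset.Iic (k + l) ∧ IsRainbow q p ∧ p.IsChordless ∧
      ∀ x ∈ p.support, x = c ∨ x ∈ U₁ j ∪ U₂ (q w) ∪ {w} := by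
  obtain ⟨p, hpk, hp, -, hsupp⟩ := h.left.exists_walk j hj c hc
  obtain ⟨r, hrl, hr, -, hsupp'⟩ := h.right.exists_walk (q w) hqw w hw
  have hdisc : ∀ x ∈ U₁ j, q x ∉ B.index := fun x hx ↦
    hq.notMem_index (h.left.subset_discarded j hj hx)
  have hdisc' : ∀ x ∈ U₂ (q w), q x ∉ B.index := fun x hx ↦
    hq.notMem_index (h.right.subset_discarded (q w) hqw hx)
  have hqc := hq.of_refines hB j hj c hc
  have hpr : IsRainbow q (p.append r.reverse) := by
    refine hp.append hr.reverse fun x hx x' hx' hxx' ↦ ?_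
    rw [Walk.support_reverse, List.mem_reverse] at hx'
    rcases hsupp x hx with rfl | hx <;> rcases hsupp' x' hx' with rfl | hx'
    · exact absurd (hqc.symm.trans hxx') hjw
    · exact absurd hj (hqc ▸ hxx' ▸ hdisc' x' hx')
    · exact absurd (hxx' ▸ hqw) (hdisc x hx)
    · exact (h.eq_root j hj (q w) hqw x hx x' hx' hxx').2
  obtain ⟨p', hp', hchord, hlen, hsub⟩ := hpr.exists_chordless
  refine ⟨p', Finset.mem_Iic.2 ?_, hp', hchord, fun x hx ↦ ?_⟩
  · rw [Finset.mem_Iic] at hpk hrl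
    simp only [Walk.length_append, Walk.length_reverse] at hlen
    omega
  · have hx := hsub hx
    rw [Walk.mem_support_append_iff, Walk.support_reverse, List.mem_reverse] at hx
    rcases hx with hx | hx
    · exact (hsupp x hx).imp_right fun hx ↦ .inl (.inl hx)
    · exact .inr ((hsupp' x hx).elim (fun hx ↦ .inr hx) fun hx ↦ .inl (.inr hx))

lemma IsFanPair.isFan_through {k l : ℕ}
    (h : IsFanPair G q B₀ B y (Finset.Iic k) (Finset.Iic l) U₁ U₂) (hq : B₀.IsColouredBy q)
    (hB : B.Refines B₀ ρ) (hB' : B'.Refines B ρ') (hw : w ∈ B.discarded B')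
    (hanti : ∀ j ∈ B'.index, Anticomplete G {w} (B'.block j)) :
    IsFan G q B₀ B' w (Finset.Iic (k + l)) fun j ↦ U₁ j ∪ U₂ (q w) ∪ {w} := by
  have hqB := hq.of_refines hB
  obtain ⟨hqw, hwB⟩ := hqB.mem_index hw
  have hne : ∀ j ∈ B'.index, j ≠ q w := fun j hj h ↦ hqB.notMem_index hw (h ▸ hj)
  refine ⟨fun j hj c hc ↦ h.exists_walk_through hq hB (hB'.index_subset hj)
    (hB'.block_subset j hj hc) hqw hwB (hne j hj), fun j hj ↦ ?_, hB.discarded_subset_left hw,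
    fun i hi j hj hij ↦ ?_⟩
  · exact Set.union_subset (Set.union_subset
      ((h.left.subset_discarded j (hB'.index_subset hj)).trans hB'.discarded_subset)
      ((h.right.subset_discarded (q w) hqw).trans hB'.discarded_subset))
      (Set.singleton_subset_iff.2 (hB.discarded_subset_left hw))
  · have hjB := hB'.index_subset hj
    refine anticomplete_union_left.2 ⟨anticomplete_union_left.2 ⟨?_, ?_⟩, hanti j hj⟩
    · exact fun x hx v hv ↦ h.left.anticomplete i (hB'.index_subset hi) j hjB hij x hx v
        (hB'.block_subset j hj hv)
    · exact fun x hx v hv ↦ h.right.anticomplete (q w) hqw j hjB (hne j hj).symm x hx v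
        (hB'.block_subset j hj hv)

lemma IsFanPair.isBiFan {k l : ℕ} {S' : Finset ℕ}
    (h : IsFanPair G q B₀ B y (Finset.Iic k) (Finset.Iic l) U₁ U₂)
    (h' : IsFanPair G q B B' w S S' U U') (hq : B₀.IsColouredBy q) (hB : B.Refines B₀ ρ)
    (hB' : B'.Refines B ρ') (hne : ∀ j ∈ B'.index, (B'.block j).Nonempty)
    (hcard : 2 ≤ #B'.index) :
    IsBiFan G q B₀ B' w (Finset.Iic (k + l)) S (fun j ↦ U₁ j ∪ U₂ (q w) ∪ {w}) U := by
  have hqB := hq.of_refines hB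
  have hw := h'.left.root_mem
  obtain ⟨hqw, -⟩ := hqB.mem_index hw
  have hroot : ∀ j ∈ B'.index, ∀ x ∈ U j, q x = q w → x = w := fun j hj x hx ↦
    h'.eq_root_left hqB hB' hj (hne j hj) hx
  have hanti : ∀ j ∈ B'.index, Anticomplete G {w} (B'.block j) := by
    rintro j hj _ rfl
    obtain ⟨i, hi, hij⟩ := Finset.exists_mem_ne hcard j
    exact h'.left.anticomplete i hi j hj hij _ (h'.left.root_mem_block hqB hB' hi (hne i hi))
  refine ⟨⟨h.isFan_through hq hB hB' hw hanti, h'.left.of_refines_left hB, ?_⟩, ?_⟩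
  · rintro i hi j hj x hx x' hx' hxx'
    obtain ⟨hqx', -⟩ := hqB.mem_index (h'.left.subset_discarded j hj hx')
    rcases hx with (hx | hx) | rfl
    · exact absurd (hxx' ▸ hqx')
        (hq.notMem_index (h.left.subset_discarded i (hB'.index_subset hi) hx))
    · exact absurd (hxx' ▸ hqx') (hq.notMem_index (h.right.subset_discarded (q w) hqw hx))
    · exact ⟨rfl, hroot j hj x' hx' hxx'.symm⟩
  · rintro i hi j hj x hx x' hx' hadj
    obtain ⟨hqx', hx'B⟩ := hqB.mem_index (h'.left.subset_discarded j hj hx')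
    rcases hx with (hx | hx) | rfl
    · refine absurd hadj (h.left.anticomplete i (hB'.index_subset hi) _ hqx' ?_ x hx x' hx'B)
      exact fun hi' ↦ hqB.notMem_index (h'.left.subset_discarded j hj hx') (hi' ▸ hi)
    · by_cases hxw : q x' = q w
      · exact .inr (hroot j hj x' hx' hxw)
      · exact absurd hadj (h.right.anticomplete _ hqw _ hqx' (Ne.symm hxw) x hx x' hx'B)
    · exact .inl rfl

lemma IsBiFan.exists_refines_singleton {S' : Finset ℕ} (h : IsBiFan G q B₀ B w S S' P R)
    (hq : B.IsColouredBy q) (hS : S.Nonempty) (hS' : S'.Nonempty) :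
    ∃ m ∈ S, ∃ n ∈ S', ∃ B' : BlockFamily V ι, B'.Refines B (#S * #S') ∧
      #B.index ≤ #S * (#S' * #B'.index) ∧ IsBiFan G q B₀ B' w {m} {n} P R := by
  obtain ⟨m, hm, B₁, hB₁, hcard₁, hleft⟩ := h.left.exists_refines_singleton hq hS
  obtain ⟨n, hn, B₂, hB₂, hcard₂, hright⟩ :=
    (h.right.of_refines hB₁).exists_refines_singleton (hq.of_refines hB₁) hS'
  have hB := hB₂.trans hB₁ (Nat.cast_nonneg _)
  exact ⟨m, hm, n, hn, B₂, hB, hcard₁.trans (Nat.mul_le_mul_left _ hcard₂),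
    { h.of_refines hB with left := hleft.of_refines hB₂, right := hright }⟩

lemma IsBiFan.cons {n : ℕ} {Z : ι → Finset V} {E : ι} (h : IsBiFan G q B₀ B w S {n} P R)
    (hq : B₀.IsColouredBy q) (hB : B.Refines B₀ ρ) (hB' : B'.Refines B ρ') (hE : E ∈ B.index)
    (hEB' : E ∉ B'.index) (hZ : ∀ j, Z j ⊆ B.block E) (hcover : B'.IsPrivatelyCoveredBy G Z) :
    IsBiFan G q B₀ B' w S {n + 1} P fun j ↦ Z j ∪ R E := by
  have hqB := hq.of_refines hB
  have hEj : ∀ j ∈ B'.index, E ≠ j := fun j hj h ↦ hEB' (h ▸ hj)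
  have hanti : ∀ j ∈ B'.index, Anticomplete G (R E) (B'.block j) := fun j hj x hx v hv ↦
    h.right.anticomplete E hE j (hB'.index_subset hj) (hEj j hj) x hx v (hB'.block_subset j hj hv)
  refine ⟨⟨h.left.of_refines hB', ⟨fun j hj c hc ↦ ?_, fun j _ ↦ Set.union_subset ?_ ?_,
    hB'.discarded_subset h.right.root_mem, fun i hi j hj hij ↦ ?_⟩, ?_⟩, ?_⟩
  · obtain ⟨z, hz, hzc⟩ := hcover.1 j hj c hc
    obtain ⟨p, hpn, hp, hchord, hsupp⟩ := h.right.exists_walk E hE z (hZ j hz)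
    refine ⟨.cons hzc.symm p, by simpa using hpn, hp.cons _ fun x hx ↦ ?_,
      isChordless_cons hchord _ fun x hx hcx ↦ (hsupp x hx).resolve_right fun hxR ↦
        hanti j hj x hxR c hc hcx.symm, ?_⟩
    · rw [hqB j (hB'.index_subset hj) c (hB'.block_subset j hj hc)]
      rcases hsupp x hx with rfl | hxR
      · exact hqB E hE x (hZ j hz) ▸ hEj j hj
      · exact fun hxj ↦ hq.notMem_index (h.right.subset_discarded E hE hxR)
          (hxj ▸ hB'.index_subset hj)
    · simp only [Walk.support_cons, List.mem_cons, forall_eq_or_imp, true_or, true_and]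
      exact fun x hx ↦ .inr ((hsupp x hx).imp_left fun hxz ↦ by rwa [hxz])
  · exact fun x hx ↦ hB.discarded_subset_left ⟨E, hE, hEB', hZ j hx⟩
  · exact (h.right.subset_discarded E hE).trans hB'.discarded_subset
  · exact anticomplete_union_left.2 ⟨hcover.2 i hi j hj hij, hanti j hj⟩
  · rintro i hi j - x hx x' (hx' | hx') hxx'
    · refine absurd hE ?_
      rw [← hqB E hE x' (hZ j hx'), ← hxx']
      exact hq.notMem_index (h.left.subset_discarded i (hB'.index_subset hi) hx)
    · exact h.eq_root i (hB'.index_subset hi) E hE x hx x' hx' hxx'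
  · rintro i hi j - x hx x' (hx' | hx') hadj
    · exact absurd hadj (h.left.anticomplete i (hB'.index_subset hi) E hE (hEj i hi).symm x hx x'
        (hZ j hx'))
    · exact h.eq_root_of_adj i (hB'.index_subset hi) E hE x hx x' hx' hadj

theorem exists_refines_isBiFan (T : ℕ) {k : ℕ} (hk : 1 ≤ k) (t' : Thresholds) : ∃ t : Thresholds,
    ∀ {V : Type u} {ι : Type v} {G : SimpleGraph V} {q : V → ι} {B : BlockFamily V ι} {Q μ τ : ℝ},
      t.IsMet G B Q → B.IsColouredBy q → Coherent G μ μ → 0 < μ → 1 ≤ τ → μ ≤ τ ^ k →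
      (∀ j ∈ B.index, #(B.block j) ≤ Q ^ T) →
      (∀ j ∈ B.index, 4 * (1 + τ) * μ * Q ^ 5 ≤ #(B.block j)) →
      ∃ m ≤ 2 * k + 2, ∃ n ≤ k + 1, ∃ (B' : BlockFamily V ι) (w : V) (P R : ι → Set V),
        t'.IsMet G B' Q ∧ B'.Refines B (Q ^ 9) ∧ IsBiFan G q B B' w {m} {n} P R := by
  have hl' := t'.linkage_pos
  let a := (2 * k + 3) * (k + 2)
  let t₃ : Thresholds :=
    { length := max 2 ((2 * k + 3) * ((k + 2) * t'.length))
      linkage := t'.linkage / a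
      scale := max t'.scale a
      linkage_pos := by positivity
      one_lt_scale := lt_max_of_lt_left t'.one_lt_scale }
  obtain ⟨t₂, ht₂⟩ := exists_refines_isFanPair.{u, v} T hk t₃
  obtain ⟨t, ht⟩ := exists_refines_isFanPair.{u, v} T hk t₂
  refine ⟨t, fun {V ι G q B Q μ τ} hB hq hG hμ hτ hμτ hQT hcard ↦ ?_⟩
  have hQ := hB.one_lt
  have : 0 < Q := by linarith
  obtain ⟨B₁, y, U₁, U₂, hB₁, hB₁B, hpair⟩ := ht hB hq hG hμ hτ hμτ hQT fun j hj ↦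
    (hcard j hj).trans' (by gcongr; exact le_self_pow₀ hQ.le (by norm_num))
  obtain ⟨B₂, w, U, U', hB₂, hB₂B₁, hpair'⟩ := ht₂ hB₁ (hq.of_refines hB₁B) hG hμ hτ hμτ
    (fun j hj ↦ (Nat.cast_le.2 (Finset.card_le_card (hB₁B.block_subset j hj))).trans
      (hQT j (hB₁B.index_subset hj)))
    fun j hj ↦ le_of_mul_le_mul_left (a := Q ^ 4) (by
      linarith [hcard j (hB₁B.index_subset hj), hB₁B.card_le j hj]) (by positivity)
  have hfan := hpair.isBiFan hpair' hq hB₁B hB₂B₁ hB₂.nonempty (le_of_max_le_left hB₂.length_le)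
  obtain ⟨m, hm, n, hn, B₃, hB₃, hcard₃, hfan'⟩ := hfan.exists_refines_singleton
    ((hq.of_refines hB₁B).of_refines hB₂B₁) Finset.nonempty_Iic Finset.nonempty_Iic
  have hQa : (a : ℝ) ≤ Q := le_of_max_le_right hB₂.scale_le
  rw [Nat.card_Iic, Nat.card_Iic, show k + 1 + (k + 1) + 1 = 2 * k + 3 by ring] at hcard₃ hB₃
  have hB₃B : B₃.Refines B (Q ^ 9) :=
    (hB₃.trans (hB₂B₁.trans hB₁B (by positivity)) (by positivity)).mono <| calc
      Q ^ 4 * Q ^ 4 * (↑(2 * k + 3) * ↑(k + 1 + 1)) = Q ^ 8 * a := by push_cast [a]; ring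
      _ ≤ Q ^ 8 * Q := by gcongr
      _ = Q ^ 9 := by ring
  have hlen : t'.length ≤ #B₃.index := by
    have := (le_of_max_le_right hB₂.length_le).trans hcard₃
    exact Nat.le_of_mul_le_mul_left (Nat.le_of_mul_le_mul_left this (by omega)) (by omega)
  have hlink : (2 * k + 3 : ℕ) * (k + 1 + 1 : ℕ) * t₃.linkage ≤ t'.linkage := by
    rw [← Nat.cast_mul, ← le_div_iff₀' (by positivity)]
  rw [Finset.mem_Iic] at hm hn
  exact ⟨m, by omega, n, hn, B₃, w, _, _, hB₂.of_refines hB₃ (le_max_left _ _) hlink hlen, hB₃B,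
    hfan'⟩

theorem exists_refines_isBiFan_succ (T : ℕ) (t' : Thresholds) : ∃ t : Thresholds,
    ∀ {V : Type u} {ι : Type v} {G : SimpleGraph V} {q : V → ι} {B₀ B : BlockFamily V ι}
      {Q μ ρ : ℝ} {S : Finset ℕ} {n : ℕ} {w : V} {P R : ι → Set V},
      t.IsMet G B Q → IsBiFan G q B₀ B w S {n} P R → B₀.IsColouredBy q → B.Refines B₀ ρ →
      Coherent G μ μ → 0 ≤ μ → (∀ j ∈ B.index, #(B.block j) ≤ Q ^ T) →
      (∀ j ∈ B.index, 2 * μ ≤ #(B.block j)) →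
      ∃ (B' : BlockFamily V ι) (R' : ι → Set V), t'.IsMet G B' Q ∧ B'.Refines B (Q ^ 4) ∧
        IsBiFan G q B₀ B' w S {n + 1} P R' := by
  obtain ⟨t₃, ht₃⟩ := exists_refines_isPrivatelyCoveredBy.{u, v} T t'
  have hl₃ := t₃.linkage_pos
  let t : Thresholds :=
    { length := t₃.length + 1
      linkage := t₃.linkage / 2
      scale := max t₃.scale 2
      linkage_pos := by positivity
      one_lt_scale := lt_max_of_lt_left t₃.one_lt_scale }
  refine ⟨t, fun {V ι G q B₀ B Q μ ρ S n w P R} hB hfan hq hB₀ hG _ hQT hcard ↦ ?_⟩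
  have hQ : 2 ≤ Q := le_of_max_le_right hB.scale_le
  obtain ⟨E, hE⟩ := Finset.card_pos.1 (Nat.zero_lt_of_lt hB.length_le)
  let C : BlockFamily V ι := ⟨B.index.erase E, fun j ↦ nbrsIn G (B.block E) (B.block j)⟩
  have hC : C.Refines B 2 := by
    refine ⟨B.index.erase_subset E, fun j _ ↦ nbrsIn_subset, fun j hj ↦ ?_⟩
    obtain ⟨hjE, hj⟩ := Finset.mem_erase.1 hj
    have := hG.card_lt_card_nbrsIn_add ((hq.of_refines hB₀).disjoint hE hj hjE.symm)
      (by linarith [hcard E hE])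
    linarith [hcard j hj]
  have hlink : 2 * t.linkage ≤ t₃.linkage := (mul_div_cancel₀ _ two_ne_zero).le
  have hlinked : C.IsLinkedFrom G (B.block E) t₃.linkage :=
    (hB.isLinked.isLinkedFrom_of_refines hC t.linkage_pos.le hE (Finset.notMem_erase E _)
      subset_rfl).mono hlink
  have hcov : ∀ j ∈ C.index, Covers G (B.block E) (C.block j) := fun j _ c hc ↦ (mem_nbrsIn.1 hc).2
  have hlen : t₃.length ≤ #C.index := by
    rw [Finset.card_erase_of_mem hE]
    exact Nat.le_sub_one_of_lt hB.length_le
  obtain ⟨B', Z, Z', hB', hB'C, hZ, hpriv, -⟩ := ht₃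
    (hB.of_refines hC (le_max_left _ _) hlink hlen) (hQT E hE) (hQT E hE) hlinked hlinked hcov hcov
  have hB'B : B'.Refines B (Q ^ 4) := (hB'C.trans hC zero_le_two).mono <| by
    rw [pow_succ' Q 3]
    gcongr
  exact ⟨B', _, hB', hB'B, hfan.cons hq hB₀ hB'B hE
    (fun h ↦ Finset.notMem_erase E _ (hB'C.index_subset h)) (fun j ↦ (hZ j).1) hpriv⟩

lemma Thresholds.exists_isMet_and_isMet (t t' : Thresholds) : ∃ t'' : Thresholds,
    ∀ {V : Type u} {ι : Type v} {G : SimpleGraph V} {B : BlockFamily V ι} {Q : ℝ},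
      t''.IsMet G B Q → t.IsMet G B Q ∧ t'.IsMet G B Q := by
  refine ⟨⟨max t.length t'.length, min t.linkage t'.linkage, max t.scale t'.scale,
    lt_min t.linkage_pos t'.linkage_pos, lt_max_of_lt_left t.one_lt_scale⟩, fun h ↦ ⟨?_, ?_⟩⟩
  · exact ⟨le_of_max_le_left h.scale_le, le_of_max_le_left h.length_le, h.nonempty,
      h.isLinked.mono (min_le_left _ _)⟩
  · exact ⟨le_of_max_le_right h.scale_le, le_of_max_le_right h.length_le, h.nonempty,
      h.isLinked.mono (min_le_right _ _)⟩

theorem exists_refines_isBiFan_add (T N : ℕ) (t' : Thresholds) : ∃ t : Thresholds,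
    ∀ {V : Type u} {ι : Type v} {G : SimpleGraph V} {q : V → ι} {B₀ B : BlockFamily V ι}
      {Q μ ρ : ℝ} {S : Finset ℕ} {n : ℕ} {w : V} {P R : ι → Set V},
      t.IsMet G B Q → IsBiFan G q B₀ B w S {n} P R → B₀.IsColouredBy q → B.Refines B₀ ρ → 0 ≤ ρ →
      Coherent G μ μ → 0 ≤ μ → (∀ j ∈ B.index, #(B.block j) ≤ Q ^ T) →
      (∀ j ∈ B.index, 2 * μ * Q ^ (4 * N) ≤ #(B.block j)) → ∀ e ≤ N,
      ∃ (B' : BlockFamily V ι) (R' : ι → Set V), t'.IsMet G B' Q ∧ B'.Refines B (Q ^ (4 * e)) ∧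
        IsBiFan G q B₀ B' w S {n + e} P R' := by
  induction N with
  | zero =>
    refine ⟨t', fun {V ι G q B₀ B Q μ ρ S n w P R} hB hfan _ _ _ _ _ _ _ e he ↦ ?_⟩
    obtain rfl := Nat.le_zero.1 he
    exact ⟨B, R, hB, by simpa using B.refines_restrict subset_rfl, hfan⟩
  | succ N ih =>
    obtain ⟨t₁, ht₁⟩ := ih
    obtain ⟨t₂, ht₂⟩ := exists_refines_isBiFan_succ.{u, v} T t₁
    obtain ⟨t, ht⟩ := t'.exists_isMet_and_isMet.{u, v} t₂
    refine ⟨t, fun {V ι G q B₀ B Q μ ρ S n w P R} hB hfan hq hB₀ hρ hG hμ hQT hcard e he ↦ ?_⟩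
    have hQ := hB.one_lt
    have : 0 < Q := by linarith
    cases e with
    | zero => exact ⟨B, R, (ht hB).1, by simpa using B.refines_restrict subset_rfl, hfan⟩
    | succ e =>
      obtain ⟨B₁, R₁, hB₁, hB₁B, hfan₁⟩ := ht₂ (ht hB).2 hfan hq hB₀ hG hμ hQT fun j hj ↦
        (hcard j hj).trans' (le_mul_of_one_le_right (by positivity) (one_le_pow₀ hQ.le))
      obtain ⟨B', R', hB', hB'B₁, hfan'⟩ := ht₁ hB₁ hfan₁ hq (hB₁B.trans hB₀ hρ) (by positivity)
        hG hμ (fun j hj ↦ (Nat.cast_le.2 (Finset.card_le_card (hB₁B.block_subset j hj))).trans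
          (hQT j (hB₁B.index_subset hj)))
        (fun j hj ↦ le_of_mul_le_mul_left (a := Q ^ 4) (by
          have := hcard j (hB₁B.index_subset hj)
          rw [Nat.mul_succ, pow_add] at this
          linarith [hB₁B.card_le j hj]) (by positivity)) e (by omega)
      refine ⟨B', R', hB', (hB'B₁.trans hB₁B (by positivity)).mono ?_, ?_⟩
      · rw [← pow_add, Nat.mul_succ, add_comm]
      · rwa [add_assoc, add_comm 1 e] at hfan'

theorem exists_refines_isBiFan_of_le (T : ℕ) {k N : ℕ} (hk : 1 ≤ k) (hN : 3 * k + 3 ≤ N)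
    (t' : Thresholds) : ∃ t : Thresholds,
    ∀ {V : Type u} {ι : Type v} {G : SimpleGraph V} {q : V → ι} {B : BlockFamily V ι} {Q μ τ : ℝ},
      t.IsMet G B Q → B.IsColouredBy q → Coherent G μ μ → 0 < μ → 1 ≤ τ → μ ≤ τ ^ k →
      (∀ j ∈ B.index, #(B.block j) ≤ Q ^ T) →
      (∀ j ∈ B.index, 4 * (1 + τ) * μ * Q ^ (4 * N + 9) ≤ #(B.block j)) →
      ∃ (m n : ℕ) (B' : BlockFamily V ι) (w : V) (P R : ι → Set V), m + n = N ∧ t'.IsMet G B' Q ∧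
        B'.Refines B (Q ^ (4 * N + 9)) ∧ IsBiFan G q B B' w {m} {n} P R := by
  obtain ⟨t₁, ht₁⟩ := exists_refines_isBiFan_add.{u, v} T N t'
  obtain ⟨t, ht⟩ := exists_refines_isBiFan.{u, v} T hk t₁
  refine ⟨t, fun {V ι G q B Q μ τ} hB hq hG hμ hτ hμτ hQT hcard ↦ ?_⟩
  have hQ := hB.one_lt
  have : 0 < Q := by linarith
  obtain ⟨m, hm, n, hn, B₁, w, P, R, hB₁, hB₁B, hfan⟩ := ht hB hq hG hμ hτ hμτ hQT fun j hj ↦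
    (hcard j hj).trans' (by gcongr <;> grind)
  obtain ⟨B', R', hB', hB'B₁, hfan'⟩ := ht₁ hB₁ hfan hq hB₁B (by positivity) hG hμ.le
    (fun j hj ↦ (Nat.cast_le.2 (Finset.card_le_card (hB₁B.block_subset j hj))).trans
      (hQT j (hB₁B.index_subset hj)))
    (fun j hj ↦ le_of_mul_le_mul_left (a := Q ^ 9) (by
      have h4 : 4 * (1 + τ) * μ * Q ^ (4 * N + 9) ≤ Q ^ 9 * #(B₁.block j) :=
        (hcard j (hB₁B.index_subset hj)).trans (hB₁B.card_le j hj)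
      refine h4.trans' ?_
      rw [pow_add, show Q ^ 9 * (2 * μ * Q ^ (4 * N)) = 2 * μ * (Q ^ (4 * N) * Q ^ 9) by ring]
      gcongr
      linarith) (by positivity)) (N - m - n) (by omega)
  refine ⟨m, n + (N - m - n), B', w, P, R', by omega, hB',
    (hB'B₁.trans hB₁B (by positivity)).mono ?_, hfan'⟩
  rw [← pow_add]
  exact pow_le_pow_right₀ hQ.le (by omega)

end BiFans

section Handles

variable {G : SimpleGraph V} {q : V → ι} {B₀ B : BlockFamily V ι} {ρ : ℝ}

theorem IsBiFan.exists_walk {w x y : V} {a b : ι} {m n : ℕ} {P R : ι → Set V}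
    (h : IsBiFan G q B₀ B w {m} {n} P R) (hq : B₀.IsColouredBy q) (hB : B.Refines B₀ ρ)
    (ha : a ∈ B.index) (hb : b ∈ B.index) (hab : a ≠ b) (hx : x ∈ B.block a) (hy : y ∈ B.block b)
    (hxy : ¬G.Adj x y) :
    ∃ p : G.Walk x y, p.length = m + n ∧ IsRainbow q p ∧ p.IsChordless ∧
      ∀ v ∈ p.support, v = x ∨ v = y ∨ v ∈ B₀.discarded B ∧
        ∀ d ∈ B.index, d ≠ a → d ≠ b → ∀ c ∈ B.block d, ¬G.Adj v c := by
  obtain ⟨p, hpm, hp, hpc, hpP⟩ := h.left.exists_walk a ha x hx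
  obtain ⟨r, hrn, hr, hrc, hrR⟩ := h.right.exists_walk b hb y hy
  have hqx := hq.of_refines hB a ha x hx
  have hqy := hq.of_refines hB b hb y hy
  have hqP : ∀ v ∈ P a, q v ∉ B.index := fun v hv ↦
    hq.notMem_index (h.left.subset_discarded a ha hv)
  have hqR : ∀ v ∈ R b, q v ∉ B.index := fun v hv ↦
    hq.notMem_index (h.right.subset_discarded b hb hv)
  refine ⟨p.append r.reverse, ?_, hp.append hr.reverse fun v hv v' hv' hvv' ↦ ?_,
    isChordless_append hpc (isChordless_reverse hrc) fun v hv v' hv' hvv' ↦ ?_, fun v hv ↦ ?_⟩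
  · rw [Walk.length_append, Walk.length_reverse, Finset.mem_singleton.1 hpm,
      Finset.mem_singleton.1 hrn]
  · rw [Walk.support_reverse, List.mem_reverse] at hv'
    rcases hpP v hv with rfl | hv <;> rcases hrR v' hv' with rfl | hv'
    · exact absurd (hqx.symm.trans (hvv'.trans hqy)) hab
    · exact absurd (hvv' ▸ hqx ▸ ha) (hqR v' hv')
    · exact absurd (hvv' ▸ hqy ▸ hb) (hqP v hv)
    · exact (h.eq_root a ha b hb v hv v' hv' hvv').2
  · rw [Walk.support_reverse, List.mem_reverse] at hv'
    rcases hpP v hv with rfl | hv <;> rcases hrR v' hv' with rfl | hv'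
    · exact absurd hvv' hxy
    · exact absurd hvv'.symm (h.right.anticomplete b hb a ha hab.symm v' hv' v hx)
    · exact absurd hvv' (h.left.anticomplete a ha b hb hab v hv v' hy)
    · exact h.eq_root_of_adj a ha b hb v hv v' hv' hvv'
  · rw [Walk.mem_support_append_iff, Walk.support_reverse, List.mem_reverse] at hv
    rcases hv with hv | hv
    · exact (hpP v hv).imp_right fun hv ↦ .inr ⟨h.left.subset_discarded a ha hv,
        fun d hd hda _ c hc ↦ h.left.anticomplete a ha d hd hda.symm v hv c hc⟩
    · exact .inr <| (hrR v hv).imp_right fun hv ↦ ⟨h.right.subset_discarded b hb hv,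
        fun d hd _ hdb c hc ↦ h.right.anticomplete b hb d hd hdb.symm v hv c hc⟩

lemma isChordless_adj_getVert_iff {x y : V} {p : G.Walk x y} (hp : p.IsPath) (hc : p.IsChordless)
    {i j : ℕ} (hi : i ≤ p.length) (hj : j ≤ p.length) :
    G.Adj (p.getVert i) (p.getVert j) ↔ i + 1 = j ∨ j + 1 = i := by
  constructor
  · intro h
    have hadj := hc.mem_edges (p.getVert_mem_support i) (p.getVert_mem_support j) h
    rw [← Walk.mem_edges_toSubgraph, Subgraph.mem_edgeSet, Walk.toSubgraph_adj_iff] at hadj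
    obtain ⟨l, hl, hlp⟩ := hadj
    have hinj {s t : ℕ} (hs : s ≤ p.length) (ht : t ≤ p.length) (h : p.getVert s = p.getVert t) :
        s = t := hp.getVert_injOn hs ht h
    rcases Sym2.eq_iff.1 hl with ⟨h₁, h₂⟩ | ⟨h₁, h₂⟩
    · exact .inl (hinj hlp.le hi h₁ ▸ hinj hlp hj h₂)
    · exact .inr (hinj hlp.le hj h₁ ▸ hinj hlp hi h₂)
  · rintro (rfl | rfl)
    · exact p.adj_getVert_succ hj
    · exact (p.adj_getVert_succ hi).symm

variable {H : SimpleGraph W} {S T : Set W} {n : ℕ} {p : ℕ → W} {f f' : W → V}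

lemma IsHandle.adj_iff (h : IsHandle H S n p) {i j : ℕ} (hi : i ≤ n) (hj : j ≤ n) :
    H.Adj (p i) (p j) ↔ i + 1 = j ∨ j + 1 = i := by
  obtain ⟨-, -, -, -, -, hadj, hnadj, -⟩ := h
  refine ⟨fun hij ↦ ?_, ?_⟩
  · by_contra! hne
    rcases lt_trichotomy i j with hlt | rfl | hlt
    · exact hnadj i j (by omega) hj hij
    · exact H.irrefl hij
    · exact hnadj j i (by omega) hi hij.symm
  · rintro (rfl | rfl)
    · exact hadj i hj
    · exact (hadj j hi).symm

lemma IsHandle.not_adj (h : IsHandle H S n p) {i : ℕ} (hi : 0 < i) (hin : i < n) {x : W}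
    (hx : x ∈ S) (hx0 : x ≠ p 0) (hxn : x ≠ p n) : ¬H.Adj x (p i) := by
  obtain ⟨-, -, -, -, hS, -, -, hdeg⟩ := h
  intro hadj
  rcases hdeg i hi hin x (.inl hx) hadj.symm with rfl | rfl
  · exact hS (i - 1) (Nat.pos_of_ne_zero fun h ↦ hx0 (by rw [h])) (by omega) hx
  · exact hS (i + 1) i.succ_pos (Nat.lt_of_le_of_ne hin fun h ↦ hxn (by rw [h])) hx

/-- On `S`, the map `f` is an induced embedding of `H` into `G` with values in the blocks of `B`,
distinct vertices being mapped to distinct blocks. The values outside `S` are irrelevant. -/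
structure IsRainbowEmbedding (H : SimpleGraph W) (G : SimpleGraph V) (q : V → ι)
    (B : BlockFamily V ι) (S : Set W) (f : W → V) : Prop where
  mem : ∀ x ∈ S, q (f x) ∈ B.index ∧ f x ∈ B.block (q (f x))
  injOn : Set.InjOn (q ∘ f) S
  adj_iff : ∀ x ∈ S, ∀ y ∈ S, G.Adj (f x) (f y) ↔ H.Adj x y

namespace IsRainbowEmbedding

lemma congr (h : IsRainbowEmbedding H G q B S f) (hf : Set.EqOn f f' S) :
    IsRainbowEmbedding H G q B S f' where
  mem x hx := hf hx ▸ h.mem x hx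
  injOn := h.injOn.congr fun _ hx ↦ congrArg q (hf hx)
  adj_iff x hx y hy := hf hx ▸ hf hy ▸ h.adj_iff x hx y hy

lemma of_refines (h : IsRainbowEmbedding H G q B S f) (hB : B.Refines B₀ ρ) :
    IsRainbowEmbedding H G q B₀ S f :=
  { h with
    mem := fun x hx ↦
      have hfx := h.mem x hx
      ⟨hB.index_subset hfx.1, hB.block_subset _ hfx.1 hfx.2⟩ }

lemma union (hS : IsRainbowEmbedding H G q B S f) (hT : IsRainbowEmbedding H G q B T f)
    (h : ∀ x ∈ S \ T, ∀ y ∈ T \ S, q (f x) ≠ q (f y) ∧ ¬H.Adj x y ∧ ¬G.Adj (f x) (f y)) :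
    IsRainbowEmbedding H G q B (S ∪ T) f := by
  have hpair : ∀ x ∈ S ∪ T, ∀ y ∈ S ∪ T,
      (q (f x) = q (f y) → x = y) ∧ (G.Adj (f x) (f y) ↔ H.Adj x y) := by
    intro x hx y hy
    by_cases hxS : x ∈ S <;> by_cases hyS : y ∈ S
    · exact ⟨fun hxy ↦ hS.injOn hxS hyS hxy, hS.adj_iff x hxS y hyS⟩
    · have hyT := hy.resolve_left hyS
      by_cases hxT : x ∈ T
      · exact ⟨fun hxy ↦ hT.injOn hxT hyT hxy, hT.adj_iff x hxT y hyT⟩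
      · obtain ⟨h₁, h₂, h₃⟩ := h x ⟨hxS, hxT⟩ y ⟨hyT, hyS⟩
        exact ⟨fun hxy ↦ absurd hxy h₁, iff_of_false h₃ h₂⟩
    · have hxT := hx.resolve_left hxS
      by_cases hyT : y ∈ T
      · exact ⟨fun hxy ↦ hT.injOn hxT hyT hxy, hT.adj_iff x hxT y hyT⟩
      · obtain ⟨h₁, h₂, h₃⟩ := h y ⟨hyS, hyT⟩ x ⟨hxT, hxS⟩
        rw [G.adj_comm, H.adj_comm]
        exact ⟨fun hxy ↦ absurd hxy.symm h₁, iff_of_false h₃ h₂⟩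
    · have hxT := hx.resolve_left hxS
      have hyT := hy.resolve_left hyS
      exact ⟨fun hxy ↦ hT.injOn hxT hyT hxy, hT.adj_iff x hxT y hyT⟩
  exact ⟨fun x hx ↦ hx.elim (hS.mem x) (hT.mem x), fun x hx y hy ↦ (hpair x hx y hy).1,
    fun x hx y hy ↦ (hpair x hx y hy).2⟩

end IsRainbowEmbedding

lemma IsHandle.exists_isRainbowEmbedding (h : IsHandle H S n p) {x y : V} {r : G.Walk x y}
    (hr : r.length = n) (hrq : IsRainbow q r) (hrc : r.IsChordless)
    (hmem : ∀ v ∈ r.support, q v ∈ B.index ∧ v ∈ B.block (q v)) :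
    ∃ g : W → V, (∀ i ≤ n, g (p i) = r.getVert i) ∧
      IsRainbowEmbedding H G q B {w | ∃ j ≤ n, w = p j} g := by
  have hinj : Set.InjOn p (Set.Iic n) := fun i hi j hj ↦ h.2.1 i hi j hj
  obtain ⟨hpath, hcol⟩ := isRainbow_iff.1 hrq
  have hg : ∀ i ≤ n, r.getVert (Function.invFunOn p (Set.Iic n) (p i)) = r.getVert i :=
    fun i hi ↦ by rw [hinj.leftInvOn_invFunOn hi]
  refine ⟨fun w ↦ r.getVert (Function.invFunOn p (Set.Iic n) w), hg,
    fun _ _ ↦ hmem _ (r.getVert_mem_support _), ?_, ?_⟩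
  · rintro _ ⟨i, hi, rfl⟩ _ ⟨j, hj, rfl⟩ hij
    simp only [Function.comp_apply, hg i hi, hg j hj] at hij
    exact congrArg p (hpath.getVert_injOn (hr ▸ hi) (hr ▸ hj)
      (hcol (r.getVert_mem_support i) (r.getVert_mem_support j) hij))
  · rintro _ ⟨i, hi, rfl⟩ _ ⟨j, hj, rfl⟩
    simp only [hg i hi, hg j hj]
    rw [isChordless_adj_getVert_iff hpath hrc (hr ▸ hi) (hr ▸ hj), h.adj_iff hi hj]

theorem IsHandle.exists_isRainbowEmbedding_union (h : IsHandle H S n p)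
    (hf : IsRainbowEmbedding H G q B S f) {r : G.Walk (f (p 0)) (f (p n))} (hr : r.length = n)
    (hrq : IsRainbow q r) (hrc : r.IsChordless)
    (hmem : ∀ v ∈ r.support, q v ∈ B.index ∧ v ∈ B.block (q v))
    (hint : ∀ v ∈ r.support, v = f (p 0) ∨ v = f (p n) ∨ ∀ x ∈ S, q (f x) ≠ q v ∧
      (x ≠ p 0 → x ≠ p n → ¬G.Adj (f x) v)) :
    ∃ F : W → V, IsRainbowEmbedding H G q B (S ∪ {w | ∃ j ≤ n, w = p j}) F := by
  obtain ⟨g, hgp, hg⟩ := h.exists_isRainbowEmbedding hr hrq hrc hmem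
  have hends : ∀ i ≤ n, p i ∈ S → i = 0 ∨ i = n := fun i hi hpi ↦ by
    by_contra! hne
    exact h.2.2.2.2.1 i (by omega) (by omega) hpi
  have hEqS : Set.EqOn f (S.piecewise f g) S := fun x hx ↦ (S.piecewise_eq_of_mem f g hx).symm
  have hEqT : Set.EqOn g (S.piecewise f g) {w | ∃ j ≤ n, w = p j} := by
    rintro _ ⟨i, hi, rfl⟩
    by_cases hpi : p i ∈ S
    · rw [S.piecewise_eq_of_mem f g hpi, hgp i hi]
      rcases hends i hi hpi with rfl | rfl
      · exact r.getVert_zero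
      · exact r.getVert_of_length_le hr.le
    · exact (S.piecewise_eq_of_notMem f g hpi).symm
  refine ⟨_, (hf.congr hEqS).union (hg.congr hEqT) ?_⟩
  rintro x ⟨hxS, hx⟩ _ ⟨⟨i, hi, rfl⟩, hpi⟩
  have hx0 : x ≠ p 0 := fun h ↦ hx ⟨0, n.zero_le, h⟩
  have hxn : x ≠ p n := fun h ↦ hx ⟨n, le_rfl, h⟩
  have hi0 : i ≠ 0 := by rintro rfl; exact hpi h.2.2.1
  have hin : i ≠ n := by rintro rfl; exact hpi h.2.2.2.1
  have hinj := (isRainbow_iff.1 hrq).1.getVert_injOn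
  have hget0 : r.getVert i ≠ f (p 0) := fun heq ↦
    hi0 (hinj (hi.trans hr.ge) r.length.zero_le (heq.trans r.getVert_zero.symm))
  have hgetn : r.getVert i ≠ f (p n) := fun heq ↦
    hin ((hinj (hi.trans hr.ge) (le_refl r.length) (heq.trans r.getVert_length.symm)).trans hr)
  obtain ⟨hq, hadj⟩ := ((hint _ (r.getVert_mem_support i)).resolve_left hget0).resolve_left
    hgetn x hxS
  rw [← hEqS hxS, ← hEqT ⟨i, hi, rfl⟩, hgp i hi]
  exact ⟨hq, h.not_adj (by omega) (by omega) hxS hx0 hxn, hadj hx0 hxn⟩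

theorem IsBiFan.exists_isRainbowEmbedding_union {w : V} {m m' : ℕ} {P R : ι → Set V}
    (hfan : IsBiFan G q B₀ B w {m} {m'} P R) (hq : B₀.IsColouredBy q) (hB : B.Refines B₀ ρ)
    (hf : IsRainbowEmbedding H G q B S f) (h : IsHandle H S n p) (hn : m + m' = n) :
    ∃ F : W → V, IsRainbowEmbedding H G q B₀ (S ∪ {w | ∃ j ≤ n, w = p j}) F := by
  obtain ⟨hn2, hinj, h0, hn', -, -, hnadj, -⟩ := id h
  obtain ⟨ha, hx⟩ := hf.mem _ h0
  obtain ⟨hb, hy⟩ := hf.mem _ hn'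
  have hne {x y : W} (hx : x ∈ S) (hy : y ∈ S) (hxy : x ≠ y) : q (f x) ≠ q (f y) :=
    fun hq ↦ hxy (hf.injOn hx hy hq)
  obtain ⟨r, hlen, hrq, hrc, hsupp⟩ := hfan.exists_walk hq hB ha hb
    (hne h0 hn' fun h ↦ absurd (hinj 0 n.zero_le n le_rfl h) (by omega)) hx hy
    fun hadj ↦ hnadj 0 n (by omega) le_rfl ((hf.adj_iff _ h0 _ hn').1 hadj)
  refine h.exists_isRainbowEmbedding_union (hf.of_refines hB) (hlen.trans hn) hrq hrc
    (fun v hv ↦ ?_) fun v hv ↦ (hsupp v hv).imp_right (Or.imp_right fun hv x hx ↦ ?_)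
  · rcases hsupp v hv with rfl | rfl | hv
    · exact (hf.of_refines hB).mem _ h0
    · exact (hf.of_refines hB).mem _ hn'
    · exact hq.mem_index hv.1
  · obtain ⟨hqx, hfx⟩ := hf.mem x hx
    exact ⟨fun heq ↦ hq.notMem_index hv.1 (heq ▸ hqx), fun hx0 hxn hadj ↦
      hv.2 _ hqx (hne hx h0 hx0) (hne hx hn' hxn) _ hfx hadj.symm⟩

end Handles

section Scaling

lemma rpow_mul_rpow_inv_pow_le {n a T : ℝ} (hn : 1 ≤ n) (M : ℕ) (ha : (M + 2) / T ≤ a) :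
    n ^ (1 - a) * (n ^ T⁻¹) ^ (M + 1) ≤ n ^ (1 - T⁻¹) := by
  rw [← Real.rpow_natCast, ← Real.rpow_mul (by linarith), ← Real.rpow_add (by linarith)]
  refine Real.rpow_le_rpow_of_exponent_le hn ?_
  rw [div_eq_mul_inv] at ha
  push_cast
  linarith

lemma four_mul_one_add_rpow_mul_le {n c b T : ℝ} {M : ℕ} (hn : 1 ≤ n) (hQ : 8 ≤ n ^ T⁻¹)
    (hb : 0 ≤ b) (hT : (M + 2) / T ≤ 1 - (b + (1 - c))) :
    4 * (1 + n ^ b) * n ^ (1 - c) * (n ^ T⁻¹) ^ M ≤ n ^ (1 - T⁻¹) := by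
  have hτ : 1 ≤ n ^ b := Real.one_le_rpow hn hb
  have h8 : 4 * (1 + n ^ b) ≤ n ^ b * n ^ T⁻¹ := by nlinarith
  calc 4 * (1 + n ^ b) * n ^ (1 - c) * (n ^ T⁻¹) ^ M
    _ ≤ (n ^ b * n ^ T⁻¹) * n ^ (1 - c) * (n ^ T⁻¹) ^ M := by gcongr
    _ = n ^ (1 - (1 - (b + (1 - c)))) * (n ^ T⁻¹) ^ (M + 1) := by
      rw [sub_sub_cancel, Real.rpow_add (by linarith), pow_succ]
      ring
    _ ≤ _ := rpow_mul_rpow_inv_pow_le hn M hT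

lemma exists_scaling {c σ : ℝ} {k : ℕ} (hk : 1 ≤ k) (hc : 1 < c * (k + 1)) (hc1 : c < 1)
    (hσ : 0 < σ) (M : ℕ) :
    ∃ T : ℕ, 0 < T ∧ ∀ Q₀ : ℝ, ∃ N : ℕ, ∀ n : ℝ, N ≤ n → ∃ Q τ : ℝ, Q₀ ≤ Q ∧ n ≤ Q ^ T ∧ 1 ≤ τ ∧
      n ^ (1 - c) ≤ τ ^ k ∧ 4 * (1 + τ) * n ^ (1 - c) * Q ^ M ≤ n ^ (1 - (T : ℝ)⁻¹) ∧
      n ^ (1 - σ) * Q ^ M ≤ n ^ (1 - (T : ℝ)⁻¹) := by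
  have hk0 : (0 : ℝ) < k := Nat.cast_pos.2 hk
  have hδ : 0 < 1 - ((1 - c) / k + (1 - c)) := calc
    0 < (c * (k + 1) - 1) / k := div_pos (by linarith) hk0
    _ = _ := by field_simp; ring
  obtain ⟨T, hT⟩ := exists_nat_gt ((M + 2) / min (1 - ((1 - c) / k + (1 - c))) σ)
  have hT0 : (0 : ℝ) < T := hT.trans_le' (by positivity)
  have hTmin := (div_le_comm₀ hT0 (lt_min hδ hσ)).2 hT.le
  have hTne : T ≠ 0 := (Nat.cast_pos.1 hT0).ne'
  refine ⟨T, Nat.cast_pos.1 hT0, fun Q₀ ↦ ?_⟩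
  obtain ⟨N, hN⟩ := exists_nat_ge (max Q₀ 8 ^ T)
  refine ⟨N, fun n hn ↦ ⟨n ^ (T : ℝ)⁻¹, n ^ ((1 - c) / k), ?_⟩⟩
  have hn1 : 1 ≤ n := (one_le_pow₀ (by norm_num)).trans (hN.trans hn)
  have hn0 : 0 < n := by linarith
  have hQT : (n ^ (T : ℝ)⁻¹) ^ T = n := Real.rpow_inv_natCast_pow hn0.le hTne
  have hQ : max Q₀ 8 ≤ n ^ (T : ℝ)⁻¹ :=
    le_of_pow_le_pow_left₀ hTne (by positivity) (hQT.symm ▸ hN.trans hn)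
  have hQ8 := (le_max_right _ _).trans hQ
  have hb : 0 ≤ (1 - c) / k := div_nonneg (by linarith) hk0.le
  refine ⟨(le_max_left _ _).trans hQ, hQT.ge, Real.one_le_rpow hn1 hb, ?_,
    four_mul_one_add_rpow_mul_le hn1 hQ8 hb (hTmin.trans (min_le_left _ _)), ?_⟩
  · rw [← Real.rpow_natCast, ← Real.rpow_mul hn0.le, div_mul_cancel₀ _ hk0.ne']
  · refine (rpow_mul_rpow_inv_pow_le hn1 M (hTmin.trans (min_le_right _ _))).trans' ?_
    gcongr
    · linarith
    · exact M.le_succ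

end Scaling

section Forcing

variable {G : SimpleGraph V} {q : V → ℤ} {B : BlockFamily V ℤ} {H : SimpleGraph W} {S : Set W}
  {f : W → V} {c σ l : ℝ} {N K : ℕ}

lemma linkageLE_iff_isLinked :
    LinkageLE G B.index (fun j ↦ ↑(B.block j)) l ↔ B.IsLinked G l := by
  have hdeg (v : V) (j : ℤ) :
      (G.neighborSet v ∩ ↑(B.block j)).ncard = degIn G v (B.block j) := by
    rw [degIn, ← Set.ncard_coe_finset, Finset.coe_filter, Set.inter_comm]
    rfl
  simp only [LinkageLE, BlockFamily.IsLinked, hdeg, Set.ncard_coe_finset, Finset.mem_coe]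

lemma IsBlockade.exists_isColouredBy (h : IsBlockade B.index fun j ↦ (B.block j : Set V)) :
    ∃ q : V → ℤ, B.IsColouredBy q := by
  have hchoose (v : V) : ∃ i, ∀ j ∈ B.index, v ∈ B.block j → i = j := by
    by_cases hv : ∃ i ∈ B.index, v ∈ B.block i
    · obtain ⟨i, hi, hvi⟩ := hv
      refine ⟨i, fun j hj hvj ↦ ?_⟩
      by_contra hij
      exact Set.disjoint_left.1 (h.2 i hi j hj hij) hvi hvj
    · exact ⟨0, fun j hj hvj ↦ absurd ⟨j, hj, hvj⟩ hv⟩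
  choose q hq using hchoose
  exact ⟨q, fun j hj v hv ↦ hq v j hj hv⟩

lemma BlockFamily.IsColouredBy.isBlockade (hq : B.IsColouredBy q)
    (hB : ∀ j ∈ B.index, (B.block j).Nonempty) : IsBlockade B.index fun j ↦ (B.block j : Set V) :=
  ⟨hB, fun i hi j hj hij ↦ Set.disjoint_left.2 fun v hvi hvj ↦
    hij ((hq i hi v hvi).symm.trans (hq j hj v hvj))⟩

lemma IsRainbowEmbedding.rainbowCopy (h : IsRainbowEmbedding H G q B S f) :
    RainbowCopy G B.index (fun j ↦ ↑(B.block j)) (H.induce S) :=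
  ⟨⟨⟨fun x ↦ f x, fun x y hxy ↦ Subtype.ext (h.injOn x.2 y.2 (congrArg q hxy))⟩,
    fun {x y} ↦ h.adj_iff x x.2 y y.2⟩, fun x ↦ q (f x),
    fun x y hxy ↦ Subtype.ext (h.injOn x.2 y.2 hxy), fun x ↦ h.mem x x.2⟩

lemma RainbowCopy.exists_isRainbowEmbedding (hq : B.IsColouredBy q) (hS : S.Nonempty)
    (h : RainbowCopy G B.index (fun j ↦ ↑(B.block j)) (H.induce S)) :
    ∃ f : W → V, IsRainbowEmbedding H G q B S f := by
  obtain ⟨φ, c, hc, hφ⟩ := h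
  let f : W → V := fun w ↦ if hw : w ∈ S then φ ⟨w, hw⟩ else φ ⟨_, hS.some_mem⟩
  have hf {x : W} (hx : x ∈ S) : f x = φ ⟨x, hx⟩ := dif_pos hx
  have hqf {x : W} (hx : x ∈ S) : q (f x) = c ⟨x, hx⟩ := by
    rw [hf hx]
    exact hq _ (hφ _).1 _ (hφ _).2
  refine ⟨f, fun x hx ↦ ?_, fun x hx y hy hxy ↦ ?_, fun x hx y hy ↦ ?_⟩
  · rw [hqf hx, hf hx]
    exact hφ _
  · simp only [Function.comp_apply, hqf hx, hqf hy] at hxy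
    exact congrArg Subtype.val (hc hxy)
  · rw [hf hx, hf hy]
    exact φ.map_adj_iff

theorem forces_induce_iff (hS : S.Nonempty) : Forces (H.induce S) N K σ l c ↔
    ∀ {V : Type} [Fintype V] {G : SimpleGraph V} {q : V → ℤ} {B : BlockFamily V ℤ},
      Coherent G ((Fintype.card V : ℝ) ^ (1 - c)) ((Fintype.card V : ℝ) ^ (1 - c)) →
      N ≤ Fintype.card V → B.IsColouredBy q → #B.index = K →
      (∀ j ∈ B.index, (B.block j).Nonempty) →
      (∀ j ∈ B.index, (Fintype.card V : ℝ) ^ (1 - σ) ≤ #(B.block j)) → B.IsLinked G l →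
      ∃ f : W → V, IsRainbowEmbedding H G q B S f := by
  constructor
  · intro h V _ G q B hG hN hq hK hne hσ hl
    refine (h G hG hN B.index (fun j ↦ ↑(B.block j)) (hq.isBlockade hne) hK (fun j hj ↦ ?_)
      (linkageLE_iff_isLinked.2 hl)).exists_isRainbowEmbedding hq hS
    rw [Set.ncard_coe_finset]
    exact hσ j hj
  · intro h V _ G hG hN I A hA hK hσ hl
    lift A to ℤ → Finset V using fun j ↦ Set.toFinite _
    obtain ⟨q, hq⟩ := IsBlockade.exists_isColouredBy (B := ⟨I, A⟩) hA
    simp only [ShrinkageLE, Set.ncard_coe_finset] at hσ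
    obtain ⟨f, hf⟩ := h hG hN hq hK hA.1 hσ (linkageLE_iff_isLinked.1 hl)
    exact hf.rainbowCopy

lemma forces_induce_pair {u v : W} (huv : u ≠ v) (hadj : ¬H.Adj u v) :
    Forces (H.induce {u, v}) N 2 σ (1 / 2) c := by
  rw [forces_induce_iff (Set.insert_nonempty u {v})]
  intro V _ G q B _ _ hq hK hne _ hl
  obtain ⟨i, j, hij, hindex⟩ := Finset.card_eq_two.1 hK
  have hi : i ∈ B.index := hindex ▸ Finset.mem_insert_self i {j}
  have hj : j ∈ B.index := hindex ▸ Finset.mem_insert_of_mem (Finset.mem_singleton_self j)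
  obtain ⟨x, hx⟩ := hne i hi
  obtain ⟨y, hy, hxy⟩ : ∃ y ∈ B.block j, ¬G.Adj x y := by
    by_contra! hall
    have hdeg := hl i hi j hj hij x hx
    rw [degIn, Finset.filter_true_of_mem hall] at hdeg
    have : (0 : ℝ) < #(B.block j) := Nat.cast_pos.2 (hne j hj).card_pos
    linarith
  have hqx := hq i hi x hx
  have hqy := hq j hj y hy
  have hyx : ¬G.Adj y x := fun h ↦ hxy h.symm
  have hvu : ¬H.Adj v u := fun h ↦ hadj h.symm
  refine ⟨fun w ↦ if w = u then x else y, ?_, ?_, ?_⟩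
  · rintro w (rfl | rfl) <;> simp [*, huv.symm]
  · rintro w (rfl | rfl) w' (rfl | rfl) <;> simp [*, huv.symm, hij.symm]
  · rintro w (rfl | rfl) w' (rfl | rfl) <;> simp [*, huv.symm]

theorem Forces.exists_forces_of_isHandle {k n : ℕ} {p : ℕ → W}
    (hF : Forces (H.induce S) N K σ l c) (hl : 0 < l) (hσ : 0 < σ) (h : IsHandle H S n p)
    (hk : 1 ≤ k) (hkn : 3 * k + 3 ≤ n) (hc : 1 < c * (k + 1)) (hc1 : c < 1) :
    ∃ N' K' : ℕ, 0 < K' ∧ ∃ σ' l' : ℝ, 0 < σ' ∧ 0 < l' ∧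
      Forces (H.induce (S ∪ {w | ∃ j ≤ n, w = p j})) N' K' σ' l' c := by
  have hS : S.Nonempty := ⟨p 0, h.2.2.1⟩
  rw [forces_induce_iff hS] at hF
  obtain ⟨T, hT, hscale⟩ := exists_scaling hk hc hc1 hσ (4 * n + 9)
  obtain ⟨t, ht⟩ := exists_refines_isBiFan_of_le.{0, 0} T hk hkn ⟨K, l, 2, hl, one_lt_two⟩
  obtain ⟨N', hN'⟩ := hscale t.scale
  refine ⟨max N (N' + 1), t.length + 1, Nat.succ_pos _, (T : ℝ)⁻¹, t.linkage, by positivity,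
    t.linkage_pos, (forces_induce_iff hS.inl).2 fun {V _ G q B} hG hN hq hK hne hsize hlink ↦ ?_⟩
  have hN1 : N' + 1 ≤ Fintype.card V := (le_max_right _ _).trans hN
  obtain ⟨Q, τ, hQ, hQT, hτ, hτk, hbig, hQσ⟩ := hN' (Fintype.card V) (by exact_mod_cast by omega)
  have hn : (0 : ℝ) < Fintype.card V := Nat.cast_pos.2 (by omega)
  obtain ⟨m, m', B', w, P, R, hmm', hB', hB'B, hfan⟩ := ht ⟨hQ, by omega, hne, hlink⟩ hq hG
    (by positivity) hτ hτk
    (fun j _ ↦ (Nat.cast_le.2 (Finset.card_le_univ (B.block j))).trans hQT)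
    fun j hj ↦ hbig.trans (hsize j hj)
  obtain ⟨J, hJ, hJK⟩ := Finset.exists_subset_card_eq hB'.length_le
  have hrestrict := B'.refines_restrict hJ
  obtain ⟨f, hf⟩ := hF hG ((le_max_left _ _).trans hN) ((hq.of_refines hB'B).of_refines hrestrict)
    hJK (fun j hj ↦ hB'.nonempty j (hJ hj))
    (fun j hj ↦ by
      have hQ0 : 0 < Q := hB'.one_lt.trans' one_pos
      refine le_of_mul_le_mul_left (a := Q ^ (4 * n + 9)) ?_ (by positivity)
      rw [mul_comm]
      exact (hQσ.trans (hsize j (hB'B.index_subset (hJ hj)))).trans (hB'B.card_le j (hJ hj)))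
    fun i hi j hj ↦ hB'.isLinked i (hJ hi) j (hJ hj)
  exact hfan.exists_isRainbowEmbedding_union hq hB'B (hf.of_refines hrestrict) h hmm'

theorem BuildableOn.exists_forces {β k : ℕ} (hS : BuildableOn H β S) (hk : 1 ≤ k)
    (hkβ : 3 * k + 3 ≤ β) (hc : 1 < c * (k + 1)) (hc1 : c < 1) :
    ∃ N K : ℕ, 0 < K ∧ ∃ σ l : ℝ, 0 < σ ∧ 0 < l ∧ Forces (H.induce S) N K σ l c := by
  induction hS with
  | base u v huv hadj =>
    exact ⟨0, 2, two_pos, 1, 1 / 2, one_pos, one_half_pos, forces_induce_pair huv hadj⟩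
  | handle S n p _ h hn ih =>
    obtain ⟨N, K, -, σ, l, hσ, hl, hF⟩ := ih
    exact hF.exists_forces_of_isHandle hl hσ h hk (hkβ.trans hn) hc hc1

end Forcing

lemma Coherent.mono {G : SimpleGraph V} {γ γ' : ℝ} (hG : Coherent G γ γ) (h : γ ≤ γ') :
    Coherent G γ' γ' := fun ⟨X, Y, hXY, hanti, hX, hY⟩ ↦
  hG ⟨X, Y, hXY, hanti, h.trans hX, h.trans hY⟩

lemma rpow_one_sub_le_of_le_mul {n K m σ : ℝ} (hn : 0 < n) (hK : 0 < K) (hKn : K ≤ n ^ σ)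
    (h : n ≤ K * m) : n ^ (1 - σ) ≤ m := calc
  n ^ (1 - σ) = n / n ^ σ := by rw [Real.rpow_sub hn, Real.rpow_one]
  _ ≤ n / K := by gcongr
  _ ≤ m := (div_le_iff₀' hK).2 h

lemma degIn_le_ncard_neighborSet [Finite V] {G : SimpleGraph V} {v : V} {C : Finset V} :
    degIn G v C ≤ (G.neighborSet v).ncard := by
  rw [degIn, ← Set.ncard_coe_finset]
  exact Set.ncard_le_ncard (fun x hx ↦ (Finset.mem_filter.1 hx).2) (Set.toFinite _)

section Sparse

variable [Fintype V] {G : SimpleGraph V} {H : SimpleGraph W} {γ ε c σ l : ℝ} {N K : ℕ}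

lemma exists_le_card_fiber (hK : K ≠ 0) (hKV : K ≤ Fintype.card V) :
    ∃ q : V → Fin K, ∀ j, Fintype.card V / K ≤ #{v | q v = j} := by
  obtain ⟨P, hP, hPK⟩ := Finpartition.exists_equipartition_card_eq (Finset.univ : Finset V) hK hKV
  let e : P.parts ≃ Fin K := P.parts.equivFinOfCardEq hPK
  refine ⟨fun v ↦ e ⟨P.part v, P.part_mem.2 (Finset.mem_univ v)⟩, fun j ↦ ?_⟩
  have hfiber : (e.symm j).1 ⊆ ({v | e ⟨P.part v, P.part_mem.2 (Finset.mem_univ v)⟩ = j} :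
      Finset V) := fun v hv ↦ Finset.mem_filter.2 ⟨Finset.mem_univ v, by
    rw [← Equiv.eq_symm_apply]
    exact Subtype.ext (P.part_eq_of_mem (e.symm j).2 hv)⟩
  calc Fintype.card V / K = #Finset.univ / #P.parts := by rw [hPK, Finset.card_univ]
    _ ≤ #(e.symm j).1 := hP.average_le_card_part (e.symm j).2
    _ ≤ _ := Finset.card_le_card hfiber

lemma EpsSparse.exists_blockFamily (hG : EpsSparse G ε) (hK : K ≠ 0) (hKV : K ≤ Fintype.card V)
    (hε : 0 ≤ ε) : ∃ (q : V → ℤ) (B : BlockFamily V ℤ), B.IsColouredBy q ∧ #B.index = K ∧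
      (∀ j ∈ B.index, Fintype.card V ≤ 2 * K * #(B.block j)) ∧ B.IsLinked G (2 * K * ε) := by
  obtain ⟨q, hq⟩ := exists_le_card_fiber hK hKV
  let toInt : Fin K ↪ ℤ := Fin.valEmbedding.trans Nat.castEmbedding
  let B : BlockFamily V ℤ := ⟨Finset.univ.map toInt, fun j ↦ {v | toInt (q v) = j}⟩
  have hcard : ∀ j ∈ B.index, Fintype.card V ≤ 2 * K * #(B.block j) := by
    intro j hj
    obtain ⟨i, -, rfl⟩ := Finset.mem_map.1 hj
    have hdiv : 1 ≤ Fintype.card V / K := Nat.div_pos hKV (Nat.pos_of_ne_zero hK)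
    have hlt := Nat.lt_mul_div_succ (Fintype.card V) (Nat.pos_of_ne_zero hK)
    calc Fintype.card V ≤ K * (2 * (Fintype.card V / K)) :=
        hlt.le.trans (Nat.mul_le_mul_left _ (by omega))
      _ = 2 * K * (Fintype.card V / K) := by ring
      _ ≤ _ := Nat.mul_le_mul_left _ (by simpa only [B, toInt.apply_eq_iff_eq] using hq i)
  refine ⟨toInt ∘ q, B, fun j _ v hv ↦ (Finset.mem_filter.1 hv).2, ?_, hcard,
    fun _ _ j hj _ v _ ↦ ?_⟩
  · rw [Finset.card_map, Finset.card_univ, Fintype.card_fin]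
  · calc (degIn G v (B.block j) : ℝ) ≤ (G.neighborSet v).ncard :=
        mod_cast degIn_le_ncard_neighborSet
      _ ≤ ε * Fintype.card V := (hG v).le
      _ ≤ ε * (2 * K * #(B.block j)) := by gcongr; exact_mod_cast hcard j hj
      _ = _ := by ring

lemma EpsSparse.card_sub_one_lt (hsparse : EpsSparse G ε) (hG : Coherent G γ γ) (hγ : γ ≤ 1)
    [Nonempty V] : Fintype.card V - 1 < ε * Fintype.card V := by
  have hadj {a b : V} (hab : a ≠ b) : G.Adj a b := by
    by_contra h
    refine hG ⟨{a}, {b}, Set.disjoint_singleton.2 hab, ?_, by simpa, by simpa⟩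
    rintro _ rfl _ rfl
    exact h
  obtain ⟨v⟩ := ‹Nonempty V›
  have hnbr : G.neighborSet v = {v}ᶜ := by
    ext w
    exact ⟨fun h ↦ h.ne', fun h ↦ hadj (Ne.symm h)⟩
  have hncard := Set.ncard_add_ncard_compl ({v} : Set V)
  rw [Set.ncard_singleton, Nat.card_eq_fintype_card, ← hnbr] at hncard
  calc (Fintype.card V : ℝ) - 1 = (G.neighborSet v).ncard := by rw [← hncard]; push_cast; ring
    _ < ε * Fintype.card V := hsparse v

lemma EpsSparse.one_le_mul_card (hsparse : EpsSparse G ε)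
    (hG : Coherent G (ε * (Fintype.card V : ℝ) ^ (1 - c)) (ε * (Fintype.card V : ℝ) ^ (1 - c)))
    (hε : 0 ≤ ε) (hc : 0 ≤ c) (hV : 1 < Fintype.card V) : 1 ≤ ε * Fintype.card V := by
  have : Nonempty V := Fintype.card_pos_iff.1 (by omega)
  have hn : (2 : ℝ) ≤ Fintype.card V := mod_cast hV
  by_contra! h
  have hγ : ε * (Fintype.card V : ℝ) ^ (1 - c) ≤ 1 := calc
    _ ≤ ε * (Fintype.card V : ℝ) ^ (1 : ℝ) := by
      gcongr
      · linarith
      · linarith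
    _ ≤ 1 := by rw [Real.rpow_one]; exact h.le
  have := hsparse.card_sub_one_lt hG hγ
  linarith

theorem Forces.exists_forall_contains (h : Forces H N K σ l c) (hK : 0 < K) (hσ : 0 < σ)
    (hl : 0 < l) (hc : 0 ≤ c) : ∃ ε : ℝ, 0 < ε ∧ ∀ {V : Type} [Fintype V] (G : SimpleGraph V),
      1 < Fintype.card V → EpsSparse G ε →
      Coherent G (ε * (Fintype.card V : ℝ) ^ (1 - c)) (ε * (Fintype.card V : ℝ) ^ (1 - c)) →
      Contains G H := by
  have hK1 : (1 : ℝ) ≤ K := mod_cast hK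
  let M : ℝ := max (max N K) ((2 * K) ^ σ⁻¹)
  have hKM : (K : ℝ) ≤ M := (le_max_right _ _).trans (le_max_left _ _)
  have hM : 0 < M := by linarith
  have hε : 0 < min M⁻¹ (l / (2 * K)) := by positivity
  have hε1 : min M⁻¹ (l / (2 * K)) ≤ 1 :=
    (min_le_left _ _).trans (inv_le_one_of_one_le₀ (hK1.trans hKM))
  refine ⟨_, hε, fun {V} _ G hV hsparse hG ↦ ?_⟩
  have hMn : M ≤ Fintype.card V := calc
    M ≤ M * (min M⁻¹ (l / (2 * K)) * Fintype.card V) :=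
      le_mul_of_one_le_right hM.le (hsparse.one_le_mul_card hG hε.le hc hV)
    _ ≤ M * (M⁻¹ * Fintype.card V) := by gcongr; exact min_le_left _ _
    _ = Fintype.card V := mul_inv_cancel_left₀ hM.ne' _
  have hn : (0 : ℝ) < Fintype.card V := hM.trans_le hMn
  have hNn : (N : ℝ) ≤ Fintype.card V := ((le_max_left _ _).trans (le_max_left _ _)).trans hMn
  have hKσ : 2 * (K : ℝ) ≤ Fintype.card V ^ σ :=
    (Real.rpow_inv_le_iff_of_pos (by positivity) hn.le hσ).1 ((le_max_right _ _).trans hMn)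
  obtain ⟨q, B, hq, hBK, hcard, hlink⟩ :=
    hsparse.exists_blockFamily hK.ne' (Nat.cast_le.1 (hKM.trans hMn)) hε.le
  have hshrink : ∀ j ∈ B.index, (Fintype.card V : ℝ) ^ (1 - σ) ≤ #(B.block j) := fun j hj ↦
    rpow_one_sub_le_of_le_mul hn (by positivity) hKσ (mod_cast hcard j hj)
  have hne : ∀ j ∈ B.index, (B.block j).Nonempty := fun j hj ↦
    Finset.card_pos.1 (Nat.cast_pos.1 ((Real.rpow_pos_of_pos hn _).trans_le (hshrink j hj)))
  obtain ⟨φ, -⟩ := h G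
    (hG.mono (mul_le_of_le_one_left (by positivity) hε1))
    (Nat.cast_le.1 hNn) B.index (fun j ↦ ↑(B.block j)) (hq.isBlockade hne) hBK
    (fun j hj ↦ by rw [Set.ncard_coe_finset]; exact hshrink j hj)
    (linkageLE_iff_isLinked.2 (hlink.mono ((le_div_iff₀' (by positivity)).1 (min_le_right _ _))))
  exact ⟨φ⟩

end Sparse

theorem statement_6_general (β : ℕ) (hβ : 3 ≤ β) {W : Type*} (H : SimpleGraph W)
    (hH : BuildableOn H β Set.univ) (c : ℝ) (hc : 1 / ((β / 3 : ℕ) : ℝ) < c) :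
    ∃ ε : ℝ, 0 < ε ∧ ∀ {V : Type} [Fintype V] (G : SimpleGraph V),
      1 < Fintype.card V → EpsSparse G ε →
      Coherent G (ε * (Fintype.card V : ℝ) ^ (1 - c))
        (ε * (Fintype.card V : ℝ) ^ (1 - c)) →
      Contains G H := by
  rcases le_or_gt 1 c with hc1 | hc1
  · refine ⟨1 / 2, one_half_pos, fun {V} _ G hV hsparse hG ↦ ?_⟩
    have hn : (2 : ℝ) ≤ Fintype.card V := mod_cast hV
    have : Nonempty V := Fintype.card_pos_iff.1 (by omega)
    have hpow : (Fintype.card V : ℝ) ^ (1 - c) ≤ 1 :=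
      Real.rpow_le_one_of_one_le_of_nonpos (by linarith) (by linarith)
    have := hsparse.card_sub_one_lt hG (by linarith)
    linarith
  · obtain ⟨k, hk⟩ := Nat.exists_eq_add_of_lt (show 0 < β / 3 by omega)
    rw [hk, zero_add, Nat.cast_succ, div_lt_iff₀ k.cast_add_one_pos] at hc
    have hk1 : 1 ≤ k := Nat.one_le_iff_ne_zero.2 (by rintro rfl; norm_num at hc; linarith)
    obtain ⟨N, K, hK, σ, l, hσ, hl, hF⟩ := hH.exists_forces hk1 (by omega) hc hc1
    obtain ⟨ε, hε, h⟩ := hF.exists_forall_contains hK hσ hl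
      (pos_of_mul_pos_left (one_pos.trans hc) k.cast_add_one_pos.le).le
    exact ⟨ε, hε, fun G hV hsparse hG ↦
      (h G hV hsparse hG).map fun φ ↦ (induceUnivIso H).symm.toEmbedding.trans φ⟩

/-- if `β ≥ 2`, `⌊(β-3)/3⌋ ≥ 1`, `H` is `β`-buildable and
`c > 1/⌊(β-3)/3⌋`, then there is `ε > 0` such that every `ε`-sparse
`(ε|G|^{1-c}, ε|G|^{1-c})`-coherent graph `G` with `|G| > 1` contains `H`. -/
theorem statement_6 (β : ℕ) (hβ : 2 ≤ β) (hβ3 : 1 ≤ (β - 3) / 3)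
    {W : Type} [Fintype W] (H : SimpleGraph W) (hH : Buildable H β)
    (c : ℝ) (hc : 1 / (((β - 3) / 3 : ℕ) : ℝ) < c) :
    ∃ ε : ℝ, 0 < ε ∧ ∀ {V : Type} [Fintype V] (G : SimpleGraph V),
      1 < Fintype.card V → EpsSparse G ε →
      Coherent G (ε * (Fintype.card V : ℝ) ^ (1 - c))
        (ε * (Fintype.card V : ℝ) ^ (1 - c)) →
      Contains G H :=
  statement_6_general β (by omega) H hH c (hc.trans_le' (one_div_le_one_div_of_le
    (Nat.cast_pos.2 hβ3) (Nat.cast_le.2 (Nat.div_le_div_right (Nat.sub_le β 3)))))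

end PurePairs
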